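/- Fix an odd integer p ≥ 5, let R > 0, and let u : ℝ × (0,∞) → ℝ be C^∞ on {(t,r) : r > R + |t|}, satisfying ∂_t²u − ∂_r²u − (3/r)∂_r u = |u|^{p−1}u there, with data (u(0,·), ∂_t u(0,·)) = (0, u₁) on (R,∞) where u₁ ∈ L²(R). Assume that ‖u‖_{L²L⁸(R)}, ‖u‖_{L³L⁶(R)}, ‖∂_t u‖_{L³L⁶(R)}, and sup_{t∈ℝ} ‖(u(t,·), ∂_t u(t,·))‖_{H(R+|t|)} are finite, and that the exterior energy of u vanishes. Then there exists R′ ≥ R such that: (i) ∫_{R′}^∞ |(d/dr)(r·u₁(r))|² r³ dr < ∞; and (ii) there exist constants c, C > 0 such that c·ρ·|u₁(ρ)| ≤ (∫_ρ^∞ |u₁'(r)|² r³ dr)^{1/2} ≤ C·ρ·|u₁(ρ)| for all ρ ≥ R′. -/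

import Mathlib

open MeasureTheory Filter Set
open scoped ENNReal

/-- The exterior energy norm `‖(v,w)‖_{H(R)} = (∫_R^∞ (|v'|² + |w|²) r³ dr)^{1/2}`. -/
noncomputable def eH (R : ℝ) (v w : ℝ → ℝ) : ℝ≥0∞ :=
  ((∫⁻ r in Ioi R, ENNReal.ofReal ((deriv v r) ^ 2 * r ^ 3)) +
      ∫⁻ r in Ioi R, ENNReal.ofReal ((w r) ^ 2 * r ^ 3)) ^ (1 / 2 : ℝ)

/-- The exterior spacetime norm `‖u‖_{L^aL^b(R)}` over the region `{r > R + |t|}`. -/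
noncomputable def eLL (a b R : ℝ) (u : ℝ → ℝ → ℝ) : ℝ≥0∞ :=
  (∫⁻ t : ℝ,
      (∫⁻ r in Ioi (R + |t|), ENNReal.ofReal (|u t r| ^ b * r ^ 3)) ^ (a / b)) ^ (1 / a)

/-- The time derivative `∂_t u` of a function of `(t,r)`. -/
noncomputable def dtu (u : ℝ → ℝ → ℝ) (t r : ℝ) : ℝ := deriv (fun s => u s r) t

/-- `u` is an exterior solution of `∂_t²u - ∂_r²u - (3/r)∂_r u = |u|^{p-1}u`
on `{r > R + |t|}`, of smoothness class `C^n`. -/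
def IsExtSol (p : ℕ) (n : ℕ∞) (R : ℝ) (u : ℝ → ℝ → ℝ) : Prop :=
  ContDiffOn ℝ n (fun q : ℝ × ℝ => u q.1 q.2) {q : ℝ × ℝ | R + |q.1| < q.2} ∧
  ∀ t r : ℝ, R + |t| < r →
    deriv (fun s => dtu u s r) t - deriv (deriv (u t)) r - (3 / r) * deriv (u t) r
      = |u t r| ^ (p - 1) * u t r

/-- The exterior energy of `u` outside `{r > R + |t|}` vanishes as `t → ±∞`. -/
def ExtEnergyVanishes (R : ℝ) (u : ℝ → ℝ → ℝ) : Prop :=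
  Tendsto (fun t : ℝ => ∫ r in Ioi (R + |t|),
      ((dtu u t r) ^ 2 + (deriv (u t) r) ^ 2) * r ^ 3) atTop (nhds 0) ∧
  Tendsto (fun t : ℝ => ∫ r in Ioi (R + |t|),
      ((dtu u t r) ^ 2 + (deriv (u t) r) ^ 2) * r ^ 3) atBot (nhds 0)

/-- `sup_{t∈ℝ} ‖(u(t,·), ∂_t u(t,·))‖_{H(R+|t|)}`. -/
noncomputable def supH (R : ℝ) (u : ℝ → ℝ → ℝ) : ℝ≥0∞ :=
  ⨆ t : ℝ, eH (R + |t|) (u t) (fun r => dtu u t r)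



/-- joint differentiability with explicit partial derivatives -/
def HPD (g : ℝ → ℝ → ℝ) (a b t r : ℝ) : Prop :=
  HasFDerivAt (fun q : ℝ × ℝ => g q.1 q.2)
    (a • ContinuousLinearMap.fst ℝ ℝ ℝ + b • ContinuousLinearMap.snd ℝ ℝ ℝ) (t, r)

lemma HPD.congr_val {g : ℝ → ℝ → ℝ} {a b a' b' t r : ℝ} (h : HPD g a b t r)
    (ha : a = a') (hb : b = b') : HPD g a' b' t r := by subst ha hb; exact h

lemma HPD.mul {g h : ℝ → ℝ → ℝ} {a b a' b' t r : ℝ} (hg : HPD g a b t r) (hh : HPD h a' b' t r) :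
    HPD (fun t r => g t r * h t r) (a * h t r + g t r * a') (b * h t r + g t r * b') t r := by
  unfold HPD at *
  refine (hg.mul hh).congr_fderiv ?_
  ext <;> simp <;> ring

lemma HPD.add {g h : ℝ → ℝ → ℝ} {a b a' b' t r : ℝ} (hg : HPD g a b t r) (hh : HPD h a' b' t r) :
    HPD (fun t r => g t r + h t r) (a + a') (b + b') t r := by
  unfold HPD at *
  refine (hg.add hh).congr_fderiv ?_
  ext <;> simp

lemma HPD.sub {g h : ℝ → ℝ → ℝ} {a b a' b' t r : ℝ} (hg : HPD g a b t r) (hh : HPD h a' b' t r) :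
    HPD (fun t r => g t r - h t r) (a - a') (b - b') t r := by
  unfold HPD at *
  refine (hg.sub hh).congr_fderiv ?_
  ext <;> simp

lemma HPD.const (c t r : ℝ) : HPD (fun _ _ => c) 0 0 t r := by
  unfold HPD
  refine (hasFDerivAt_const c _).congr_fderiv ?_
  ext <;> simp

lemma HPD.comp {g : ℝ → ℝ → ℝ} {a b t r : ℝ} {F : ℝ → ℝ} {F' : ℝ} (hF : HasDerivAt F F' (g t r))
    (hg : HPD g a b t r) : HPD (fun t r => F (g t r)) (F' * a) (F' * b) t r := by
  unfold HPD at *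
  refine (HasDerivAt.comp_hasFDerivAt (t, r) hF hg).congr_fderiv ?_
  ext <;> simp

lemma HPD.ofR {F : ℝ → ℝ} {F' : ℝ} (t r : ℝ) (hF : HasDerivAt F F' r) :
    HPD (fun _ r => F r) 0 F' t r := by
  unfold HPD
  refine (HasDerivAt.comp_hasFDerivAt (t, r) (f := fun q : ℝ × ℝ => q.2) hF hasFDerivAt_snd).congr_fderiv ?_
  ext <;> simp

lemma HPD.r3 (t r : ℝ) : HPD (fun _ r => r ^ 3) 0 (3 * r ^ 2) t r := by
  apply HPD.ofR; simpa using hasDerivAt_pow 3 r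

lemma HPD.cont {g : ℝ → ℝ → ℝ} {a b t r : ℝ} (h : HPD g a b t r) :
    ContinuousAt (fun q : ℝ × ℝ => g q.1 q.2) (t, r) := HasFDerivAt.continuousAt h

lemma HPD.dr {g : ℝ → ℝ → ℝ} {a b t r : ℝ} (h : HPD g a b t r) :
    HasDerivAt (fun s => g t s) b r := by
  have h2 : HasDerivAt (fun s : ℝ => ((t, s) : ℝ × ℝ)) (0, 1) r :=
    (hasDerivAt_const r t).prodMk (hasDerivAt_id r)
  have h3 : HasFDerivAt (fun q : ℝ × ℝ => g q.1 q.2)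
      (a • ContinuousLinearMap.fst ℝ ℝ ℝ + b • ContinuousLinearMap.snd ℝ ℝ ℝ)
      ((fun s : ℝ => ((t, s) : ℝ × ℝ)) r) := h
  simpa [Function.comp_def] using HasFDerivAt.comp_hasDerivAt r h3 h2

lemma HPD.dt {g : ℝ → ℝ → ℝ} {a b t r : ℝ} (h : HPD g a b t r) :
    HasDerivAt (fun s => g s r) a t := by
  have h2 : HasDerivAt (fun s : ℝ => ((s, r) : ℝ × ℝ)) (1, 0) t :=
    (hasDerivAt_id t).prodMk (hasDerivAt_const t r)
  have h3 : HasFDerivAt (fun q : ℝ × ℝ => g q.1 q.2)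
      (a • ContinuousLinearMap.fst ℝ ℝ ℝ + b • ContinuousLinearMap.snd ℝ ℝ ℝ)
      ((fun s : ℝ => ((s, r) : ℝ × ℝ)) t) := h
  simpa [Function.comp_def] using HasFDerivAt.comp_hasDerivAt t h3 h2

/-- divergence theorem on a slanted rectangle -/
lemma div_cone (G1 G2 a1 b1 a2 b2 D : ℝ → ℝ → ℝ) (c α β T : ℝ) (hT : 0 ≤ T) (hab : α ≤ β)
    (h1 : ∀ t, 0 ≤ t → t ≤ T → ∀ a, α ≤ a → a ≤ β →
      HPD G1 (a1 t (a + c * t)) (b1 t (a + c * t)) t (a + c * t))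
    (h2 : ∀ t, 0 ≤ t → t ≤ T → ∀ a, α ≤ a → a ≤ β →
      HPD G2 (a2 t (a + c * t)) (b2 t (a + c * t)) t (a + c * t))
    (hD : ∀ t, 0 ≤ t → t ≤ T → ∀ a, α ≤ a → a ≤ β →
      a1 t (a + c * t) + b2 t (a + c * t) = D t (a + c * t))
    (hDc : ∀ t, 0 ≤ t → t ≤ T → ∀ a, α ≤ a → a ≤ β →
      ContinuousAt (fun q : ℝ × ℝ => D q.1 q.2) (t, a + c * t)) :
    (∫ t in (0:ℝ)..T, ∫ a in α..β, D t (a + c * t)) =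
      (((∫ t in (0:ℝ)..T, (G2 t (β + c * t) - c * G1 t (β + c * t)))
        - ∫ t in (0:ℝ)..T, (G2 t (α + c * t) - c * G1 t (α + c * t)))
        + ∫ a in α..β, G1 T (a + c * T)) - ∫ a in α..β, G1 0 a := by
  have hL : ∀ q : ℝ × ℝ, HasFDerivAt (fun q : ℝ × ℝ => (q.1, q.2 + c * q.1))
      ((ContinuousLinearMap.fst ℝ ℝ ℝ).prod
        (ContinuousLinearMap.snd ℝ ℝ ℝ + c • ContinuousLinearMap.fst ℝ ℝ ℝ)) q := by
    intro q
    exact hasFDerivAt_fst.prodMk (hasFDerivAt_snd.add (hasFDerivAt_fst.const_mul c))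
  have hF : ∀ q : ℝ × ℝ, q ∈ Icc 0 T ×ˢ Icc α β →
      HasFDerivAt (fun q : ℝ × ℝ => G1 q.1 (q.2 + c * q.1))
      ((a1 q.1 (q.2 + c * q.1) + c * b1 q.1 (q.2 + c * q.1)) • ContinuousLinearMap.fst ℝ ℝ ℝ
        + (b1 q.1 (q.2 + c * q.1)) • ContinuousLinearMap.snd ℝ ℝ ℝ) q := by
    rintro q ⟨⟨h3, h4⟩, ⟨h5, h6⟩⟩
    have := HasFDerivAt.comp (f := fun q : ℝ × ℝ => (q.1, q.2 + c * q.1)) q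
      (g := fun q : ℝ × ℝ => G1 q.1 q.2) (h1 q.1 h3 h4 q.2 h5 h6) (hL q)
    refine this.congr_fderiv ?_
    ext <;> simp
    ring
  have hF2 : ∀ q : ℝ × ℝ, q ∈ Icc 0 T ×ˢ Icc α β →
      HasFDerivAt (fun q : ℝ × ℝ => G2 q.1 (q.2 + c * q.1))
      ((a2 q.1 (q.2 + c * q.1) + c * b2 q.1 (q.2 + c * q.1)) • ContinuousLinearMap.fst ℝ ℝ ℝ
        + (b2 q.1 (q.2 + c * q.1)) • ContinuousLinearMap.snd ℝ ℝ ℝ) q := by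
    rintro q ⟨⟨h3, h4⟩, ⟨h5, h6⟩⟩
    have := HasFDerivAt.comp (f := fun q : ℝ × ℝ => (q.1, q.2 + c * q.1)) q
      (g := fun q : ℝ × ℝ => G2 q.1 q.2) (h2 q.1 h3 h4 q.2 h5 h6) (hL q)
    refine this.congr_fderiv ?_
    ext <;> simp
    ring
  have hH : ∀ q : ℝ × ℝ, q ∈ Icc 0 T ×ˢ Icc α β →
      HasFDerivAt (fun q : ℝ × ℝ => G2 q.1 (q.2 + c * q.1) - c * G1 q.1 (q.2 + c * q.1))
      (((a2 q.1 (q.2 + c * q.1) + c * b2 q.1 (q.2 + c * q.1)) • ContinuousLinearMap.fst ℝ ℝ ℝ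
        + (b2 q.1 (q.2 + c * q.1)) • ContinuousLinearMap.snd ℝ ℝ ℝ) - c •
       ((a1 q.1 (q.2 + c * q.1) + c * b1 q.1 (q.2 + c * q.1)) • ContinuousLinearMap.fst ℝ ℝ ℝ
        + (b1 q.1 (q.2 + c * q.1)) • ContinuousLinearMap.snd ℝ ℝ ℝ)) q := by
    intro q hq
    exact (hF2 q hq).sub ((hF q hq).const_mul c)
  have hsub : ∀ q : ℝ × ℝ, q ∈ Ioo (min 0 T) (max 0 T) ×ˢ Ioo (min α β) (max α β) →
      q ∈ Icc 0 T ×ˢ Icc α β := by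
    rw [min_eq_left hT, max_eq_right hT, min_eq_left hab, max_eq_right hab]
    rintro q ⟨h3, h4⟩
    exact ⟨Ioo_subset_Icc_self h3, Ioo_subset_Icc_self h4⟩
  have hsum : ∀ q : ℝ × ℝ, q ∈ Icc 0 T ×ˢ Icc α β →
      ((a1 q.1 (q.2 + c * q.1) + c * b1 q.1 (q.2 + c * q.1)) • ContinuousLinearMap.fst ℝ ℝ ℝ
        + (b1 q.1 (q.2 + c * q.1)) • ContinuousLinearMap.snd ℝ ℝ ℝ) (1, 0) +
      (((a2 q.1 (q.2 + c * q.1) + c * b2 q.1 (q.2 + c * q.1)) • ContinuousLinearMap.fst ℝ ℝ ℝ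
        + (b2 q.1 (q.2 + c * q.1)) • ContinuousLinearMap.snd ℝ ℝ ℝ) - c •
       ((a1 q.1 (q.2 + c * q.1) + c * b1 q.1 (q.2 + c * q.1)) • ContinuousLinearMap.fst ℝ ℝ ℝ
        + (b1 q.1 (q.2 + c * q.1)) • ContinuousLinearMap.snd ℝ ℝ ℝ)) (0, 1)
      = D q.1 (q.2 + c * q.1) := by
    rintro q ⟨⟨h3, h4⟩, ⟨h5, h6⟩⟩
    rw [← hD q.1 h3 h4 q.2 h5 h6]
    simp
  have key := integral2_divergence_prod_of_hasFDerivAt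
    (fun q : ℝ × ℝ => G1 q.1 (q.2 + c * q.1))
    (fun q : ℝ × ℝ => G2 q.1 (q.2 + c * q.1) - c * G1 q.1 (q.2 + c * q.1)) _ _ 0 α T β
    (fun q hq => by
      rw [uIcc_of_le hT, uIcc_of_le hab] at hq
      exact (hF q hq).continuousAt.continuousWithinAt)
    (fun q hq => by
      rw [uIcc_of_le hT, uIcc_of_le hab] at hq
      exact (hH q hq).continuousAt.continuousWithinAt)
    (fun q hq => hF q (hsub q hq)) (fun q hq => hH q (hsub q hq))
    (by
      rw [uIcc_of_le hT, uIcc_of_le hab]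
      have : ContinuousOn (fun q : ℝ × ℝ => D q.1 (q.2 + c * q.1)) (Icc 0 T ×ˢ Icc α β) := by
        rintro q ⟨⟨h3, h4⟩, ⟨h5, h6⟩⟩
        have := ContinuousAt.comp (f := fun q : ℝ × ℝ => (q.1, q.2 + c * q.1)) (x := q)
          (hDc q.1 h3 h4 q.2 h5 h6) (hL q).continuousAt
        exact this.continuousWithinAt
      refine IntegrableOn.congr_fun (this.integrableOn_compact (isCompact_Icc.prod isCompact_Icc))
        (fun q hq => (hsum q hq).symm) (measurableSet_Icc.prod measurableSet_Icc))
  have e2 : (∫ a in α..β, G1 0 (a + c * 0)) = ∫ a in α..β, G1 0 a := by simp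
  rw [← e2]
  refine Eq.trans ?_ key
  apply intervalIntegral.integral_congr
  intro t ht
  apply intervalIntegral.integral_congr
  intro a ha
  rw [uIcc_of_le hT] at ht
  rw [uIcc_of_le hab] at ha
  exact (hsum (t, a) ⟨ht, ha⟩).symm


/-- abstract exterior solution -/
structure Sol (p : ℕ) (R : ℝ) (u v q vt vr qr : ℝ → ℝ → ℝ) : Prop where
  hu : ∀ t r, R + |t| < r → HPD u (v t r) (q t r) t r
  hv : ∀ t r, R + |t| < r → HPD v (vt t r) (vr t r) t r
  hq : ∀ t r, R + |t| < r → HPD q (vr t r) (qr t r) t r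
  heq : ∀ t r, R + |t| < r → vt t r - qr t r - (3 / r) * q t r = u t r ^ p

lemma hpd_of_diff {g : ℝ → ℝ → ℝ} {t r : ℝ}
    (h : DifferentiableAt ℝ (fun q : ℝ × ℝ => g q.1 q.2) (t, r)) :
    HPD g (deriv (fun s => g s r) t) (deriv (g t) r) t r := by
  have h0 : HPD g (fderiv ℝ (fun q : ℝ × ℝ => g q.1 q.2) (t, r) (1, 0))
      (fderiv ℝ (fun q : ℝ × ℝ => g q.1 q.2) (t, r) (0, 1)) t r := by
    unfold HPD
    refine h.hasFDerivAt.congr_fderiv ?_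
    ext <;> simp
  exact h0.congr_val h0.dt.deriv.symm h0.dr.deriv.symm

lemma isOpen_ext (R : ℝ) : IsOpen {q : ℝ × ℝ | R + |q.1| < q.2} :=
  isOpen_lt (by fun_prop) (by fun_prop)

lemma hpd_fderiv {g : ℝ → ℝ → ℝ} {a b t r : ℝ} (h : HPD g a b t r) :
    fderiv ℝ (fun q : ℝ × ℝ => g q.1 q.2) (t, r) (1, 0) = a ∧
    fderiv ℝ (fun q : ℝ × ℝ => g q.1 q.2) (t, r) (0, 1) = b := by
  unfold HPD at h
  rw [h.fderiv]; simp

lemma sol_of_ext (p : ℕ) (hodd : Odd p) (R : ℝ) (u : ℝ → ℝ → ℝ) (hsol : IsExtSol p ⊤ R u) :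
    ∃ vt vr qr, Sol p R u (dtu u) (fun t r => deriv (u t) r) vt vr qr := by
  obtain ⟨hC, hE⟩ := hsol
  set U : ℝ × ℝ → ℝ := fun q => u q.1 q.2 with hU
  set Ω := {q : ℝ × ℝ | R + |q.1| < q.2} with hΩ
  have hO : IsOpen Ω := isOpen_ext R
  have hC' : ∀ x ∈ Ω, ContDiffAt ℝ (⊤ : ℕ∞) U x := fun x hx => hC.contDiffAt (hO.mem_nhds hx)
  have hu : ∀ t r, R + |t| < r → HPD u (dtu u t r) (deriv (u t) r) t r := by
    intro t r h
    exact hpd_of_diff ((hC' (t, r) h).differentiableAt (by simp))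
  have hf : ∀ x ∈ Ω, ContDiffAt ℝ (⊤ : ℕ∞) (fderiv ℝ U) x := fun x hx =>
    (hC' x hx).fderiv_right (by simp)
  have ev : ∀ x ∈ Ω, (fun q : ℝ × ℝ => dtu u q.1 q.2) =ᶠ[nhds x] fun q => fderiv ℝ U q (1, 0) := by
    intro x hx
    filter_upwards [hO.mem_nhds hx] with y hy
    exact (hpd_fderiv (hu y.1 y.2 hy)).1.symm
  have eq : ∀ x ∈ Ω, (fun q : ℝ × ℝ => deriv (u q.1) q.2) =ᶠ[nhds x] fun q => fderiv ℝ U q (0, 1) := by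
    intro x hx
    filter_upwards [hO.mem_nhds hx] with y hy
    exact (hpd_fderiv (hu y.1 y.2 hy)).2.symm
  have dv : ∀ x ∈ Ω, DifferentiableAt ℝ (fun q : ℝ × ℝ => dtu u q.1 q.2) x := by
    intro x hx
    refine DifferentiableAt.congr_of_eventuallyEq ?_ (ev x hx)
    exact ((hf x hx).differentiableAt (by simp)).clm_apply (differentiableAt_const _)
  have dq : ∀ x ∈ Ω, DifferentiableAt ℝ (fun q : ℝ × ℝ => deriv (u q.1) q.2) x := by
    intro x hx
    refine DifferentiableAt.congr_of_eventuallyEq ?_ (eq x hx)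
    exact ((hf x hx).differentiableAt (by simp)).clm_apply (differentiableAt_const _)
  have hv : ∀ t r, R + |t| < r → HPD (dtu u) (deriv (fun s => dtu u s r) t) (deriv (dtu u t) r) t r :=
    fun t r h => hpd_of_diff (dv (t, r) h)
  have hq : ∀ t r, R + |t| < r → HPD (fun t r => deriv (u t) r)
      (deriv (fun s => deriv (u s) r) t) (deriv (deriv (u t)) r) t r :=
    fun t r h => hpd_of_diff (g := fun t r => deriv (u t) r) (dq (t, r) h)
  refine ⟨fun t r => deriv (fun s => dtu u s r) t, fun t r => deriv (dtu u t) r,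
    fun t r => deriv (deriv (u t)) r, hu, hv, ?_, ?_⟩
  · intro t r h
    refine (hq t r h).congr_val ?_ rfl
    have hx : ((t, r) : ℝ × ℝ) ∈ Ω := h
    have sym : IsSymmSndFDerivAt ℝ U (t, r) := (hC' (t, r) h).isSymmSndFDerivAt (by
      simp only [minSmoothness_of_isRCLikeNormedField]
      exact ENat.LEInfty.out)
    have s1 := sym (1, 0) (0, 1)
    have hd := (hf (t, r) h).differentiableAt (by simp)
    have e1 : fderiv ℝ (fun q : ℝ × ℝ => dtu u q.1 q.2) (t, r) (0, 1) =
        fderiv ℝ (fderiv ℝ U) (t, r) (0, 1) (1, 0) := by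
      rw [(ev (t, r) h).fderiv_eq, fderiv_clm_apply hd (differentiableAt_const _)]
      simp
    have e2 : fderiv ℝ (fun q : ℝ × ℝ => deriv (u q.1) q.2) (t, r) (1, 0) =
        fderiv ℝ (fderiv ℝ U) (t, r) (1, 0) (0, 1) := by
      rw [(eq (t, r) h).fderiv_eq, fderiv_clm_apply hd (differentiableAt_const _)]
      simp
    rw [(hpd_fderiv (hv t r h)).2] at e1
    have e3 := (hpd_fderiv (hq t r h)).1
    rw [← e3]
    rw [e2, e1, s1]
  · intro t r h
    have := hE t r h
    rw [this]
    obtain ⟨k, hk⟩ := hodd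
    have : p - 1 = 2 * k := by omega
    rw [this, pow_mul, sq_abs, hk, ← pow_mul, ← pow_succ]

lemma data_smooth (p : ℕ) (R : ℝ) (u : ℝ → ℝ → ℝ) (hsol : IsExtSol p ⊤ R u) :
    ContDiffOn ℝ (⊤ : ℕ∞) (dtu u 0) (Ioi R) := by
  obtain ⟨hC, hE⟩ := hsol
  set U : ℝ × ℝ → ℝ := fun q => u q.1 q.2 with hU
  set Ω := {q : ℝ × ℝ | R + |q.1| < q.2} with hΩ
  have hO : IsOpen Ω := isOpen_ext R
  have hC' : ∀ x ∈ Ω, ContDiffAt ℝ (⊤ : ℕ∞) U x := fun x hx => hC.contDiffAt (hO.mem_nhds hx)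
  have hf : ∀ x ∈ Ω, ContDiffAt ℝ (⊤ : ℕ∞) (fderiv ℝ U) x := fun x hx =>
    (hC' x hx).fderiv_right (by simp)
  have hm : ∀ r ∈ Ioi R, ((0:ℝ), r) ∈ Ω := by
    intro r hr
    simpa [hΩ] using hr
  have h1 : ContDiffOn ℝ (⊤ : ℕ∞) (fun r => fderiv ℝ U (0, r) (1, 0)) (Ioi R) := by
    intro r hr
    apply ContDiffAt.contDiffWithinAt
    have h2 : ContDiffAt ℝ (⊤ : ℕ∞) (fun r : ℝ => fderiv ℝ U (0, r)) r :=
      ContDiffAt.comp (g := fderiv ℝ U) (f := fun r : ℝ => ((0:ℝ), r)) r (hf _ (hm r hr))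
        (contDiffAt_const.prodMk contDiffAt_id)
    exact h2.clm_apply contDiffAt_const
  refine h1.congr ?_
  intro r hr
  exact (hpd_fderiv (hpd_of_diff ((hC' (0, r) (hm r hr)).differentiableAt (by simp)))).1.symm


/-- energy bound outside the cone -/
def EB (v q : ℝ → ℝ → ℝ) (ρ M : ℝ) : Prop :=
  ∀ t, 0 ≤ t → ∀ A, ρ ≤ A → ∫ a in ρ..A, (v t (a + t) ^ 2 + q t (a + t) ^ 2) * (a + t) ^ 3 ≤ M

lemma setInt_le {E : ℝ → ℝ} {b ρ A t : ℝ} (hi : IntegrableOn E (Ioi (b + t)))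
    (h0 : ∀ r, b + t < r → 0 ≤ E r) (hb : b ≤ ρ) (hA : ρ ≤ A) :
    ∫ a in ρ..A, E (a + t) ≤ ∫ r in Ioi (b + t), E r := by
  rw [intervalIntegral.integral_comp_add_right E t, intervalIntegral.integral_of_le (by linarith)]
  apply setIntegral_mono_set hi
  · filter_upwards [ae_restrict_mem measurableSet_Ioi] with r hr using h0 r hr
  · apply LE.le.eventuallyLE
    intro r hr
    exact lt_of_le_of_lt (by linarith) hr.1

lemma apriori (p : ℕ) (R : ℝ) (hR : 0 < R) (u vt vr qr : ℝ → ℝ → ℝ)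
    (hS : Sol p R u (dtu u) (fun t r => deriv (u t) r) vt vr qr)
    (hfin4 : supH R u < ⊤) (hvan : ExtEnergyVanishes R u) :
    ∃ M > 0, ∀ ρ, R < ρ → EB (dtu u) (fun t r => deriv (u t) r) ρ M ∧
      ∀ ε > 0, ∃ T0, 0 ≤ T0 ∧ ∀ T, T0 ≤ T → ∀ A, ρ ≤ A →
        ∫ a in ρ..A, (dtu u T (a + T) ^ 2 + deriv (u T) (a + T) ^ 2) * (a + T) ^ 3 ≤ ε := by
  set S := (supH R u) ^ (2:ℕ) with hSdef
  have hSfin : S < ⊤ := ENNReal.pow_lt_top hfin4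
  have hcont : ∀ t, ContinuousOn (fun r => dtu u t r) (Ioi (R + |t|)) ∧
      ContinuousOn (fun r => deriv (u t) r) (Ioi (R + |t|)) := by
    intro t
    exact ⟨fun r hr => (hS.hv t r hr).dr.continuousAt.continuousWithinAt,
      fun r hr => (hS.hq t r hr).dr.continuousAt.continuousWithinAt⟩
  have hpos : ∀ t r, R + |t| < r → 0 < r := fun t r h => by
    have := abs_nonneg t; linarith
  have hb : ∀ t, (∫⁻ r in Ioi (R + |t|), ENNReal.ofReal
      ((dtu u t r ^ 2 + deriv (u t) r ^ 2) * r ^ 3)) ≤ S := by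
    intro t
    have h1 : eH (R + |t|) (u t) (fun r => dtu u t r) ≤ supH R u :=
      le_iSup (fun t : ℝ => eH (R + |t|) (u t) (fun r => dtu u t r)) t
    have h2 := ENNReal.rpow_le_rpow h1 (by norm_num : (0:ℝ) ≤ 2)
    unfold eH at h2
    rw [← ENNReal.rpow_mul] at h2
    norm_num at h2
    rw [add_comm, ← lintegral_add_left'] at h2
    · refine le_trans (le_of_eq ?_) h2
      apply setLIntegral_congr_fun measurableSet_Ioi
      intro r hr
      have := hpos t r hr
      simp only
      rw [← ENNReal.ofReal_add (by positivity) (by positivity)]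
      ring_nf
    · apply AEMeasurable.ennreal_ofReal
      apply ContinuousOn.aemeasurable _ measurableSet_Ioi
      have := (hcont t).1
      fun_prop
  have hint : ∀ t, IntegrableOn (fun r => (dtu u t r ^ 2 + deriv (u t) r ^ 2) * r ^ 3)
      (Ioi (R + |t|)) := by
    intro t
    have hc1 := (hcont t).1
    have hc2 := (hcont t).2
    refine ⟨ContinuousOn.aestronglyMeasurable (by fun_prop) measurableSet_Ioi, ?_⟩
    rw [hasFiniteIntegral_iff_ofReal]
    · exact lt_of_le_of_lt (hb t) hSfin
    · filter_upwards [ae_restrict_mem measurableSet_Ioi] with r hr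
      have := hpos t r hr
      simp only [Pi.zero_apply]
      positivity
  have hnn : ∀ t r, R + |t| < r → 0 ≤ (dtu u t r ^ 2 + deriv (u t) r ^ 2) * r ^ 3 := by
    intro t r hr
    have := hpos t r hr
    positivity
  have hbi : ∀ t, ∫ r in Ioi (R + |t|), (dtu u t r ^ 2 + deriv (u t) r ^ 2) * r ^ 3 ≤ S.toReal := by
    intro t
    rw [integral_eq_lintegral_of_nonneg_ae]
    · exact ENNReal.toReal_mono hSfin.ne (hb t)
    · filter_upwards [ae_restrict_mem measurableSet_Ioi] with r hr using hnn t r hr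
    · exact (hint t).1
  refine ⟨S.toReal + 1, by positivity, fun ρ hρ => ⟨?_, ?_⟩⟩
  · intro t ht A hA
    have := hint t
    have h2 := hbi t
    have h3 := hnn t
    rw [abs_of_nonneg ht] at this h2 h3
    have := setInt_le this h3 hρ.le hA
    linarith
  · intro ε hε
    have h1 := (hvan.1.eventually (gt_mem_nhds hε))
    obtain ⟨T1, hT1⟩ := eventually_atTop.1 h1
    refine ⟨max T1 0, le_max_right _ _, fun T hT A hA => ?_⟩
    have hT0 : 0 ≤ T := le_trans (le_max_right _ _) hT
    have := hint T
    have h2 := hT1 T (le_trans (le_max_left _ _) hT)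
    have h3 := hnn T
    rw [abs_of_nonneg hT0] at this h2 h3
    have := setInt_le this h3 hρ.le hA
    linarith

/-- a nonnegative function with bounded integrals is small somewhere far away -/
lemma small_somewhere {J : ℝ → ℝ} {A0 K : ℝ} (hc : ContinuousOn J (Ici A0))
    (hK : ∀ B, A0 ≤ B → ∫ a in A0..B, J a ≤ K) (δ : ℝ) (hδ : 0 < δ) (A1 : ℝ) (h01 : A0 ≤ A1)
    (hJ : ∀ a, A0 ≤ a → 0 ≤ J a) :
    ∃ A, A1 ≤ A ∧ J A < δ := by
  by_contra hcon
  push Not at hcon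
  set B := A1 + (|K| + 1) / δ with hB
  have hB1 : A1 ≤ B := by rw [hB]; have : 0 ≤ (|K| + 1) / δ := by positivity
                          linarith
  have hi : ∀ a b, A0 ≤ a → a ≤ b → IntervalIntegrable J volume a b := by
    intro a b ha hab
    apply ContinuousOn.intervalIntegrable
    rw [uIcc_of_le hab]
    exact hc.mono (fun x hx => le_trans ha hx.1)
  have h1 : ∫ a in A1..B, δ ≤ ∫ a in A1..B, J a := by
    apply intervalIntegral.integral_mono_on hB1 (by simp) (hi _ _ h01 hB1)
    intro x hx
    exact hcon x hx.1
  have h2 : 0 ≤ ∫ a in A0..A1, J a := by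
    apply intervalIntegral.integral_nonneg h01
    intro x hx; exact hJ x hx.1
  have h3 := intervalIntegral.integral_add_adjacent_intervals (hi A0 A1 le_rfl h01) (hi A1 B h01 hB1)
  have h4 := hK B (h01.trans hB1)
  rw [intervalIntegral.integral_const] at h1
  have h5 : (B - A1) • δ = |K| + 1 := by
    rw [hB]; simp; field_simp
  have := le_abs_self K
  linarith


lemma small2 {F : ℝ → ℝ → ℝ} {A0 K T : ℝ} (hT : 0 ≤ T)
    (hc : ContinuousOn (fun q : ℝ × ℝ => F q.1 q.2) (Icc 0 T ×ˢ Ici A0))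
    (h0 : ∀ t, 0 ≤ t → t ≤ T → ∀ a, A0 ≤ a → 0 ≤ F t a)
    (hK : ∀ t, 0 ≤ t → t ≤ T → ∀ B, A0 ≤ B → ∫ a in A0..B, F t a ≤ K)
    (δ : ℝ) (hδ : 0 < δ) (A1 : ℝ) (h01 : A0 ≤ A1) :
    ∃ A, A1 ≤ A ∧ ∫ t in (0:ℝ)..T, F t A < δ := by
  by_contra hcon
  push Not at hcon
  set B := A1 + (|K| * T + 1) / δ with hB
  have hB1 : A1 ≤ B := by
    rw [hB]; have : 0 ≤ (|K| * T + 1) / δ := by positivity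
    linarith
  have hsub : Icc 0 T ×ˢ Icc A1 B ⊆ Icc 0 T ×ˢ Ici A0 :=
    prod_mono le_rfl (fun x hx => h01.trans hx.1)
  have hI : IntegrableOn (fun q : ℝ × ℝ => F q.1 q.2) (Ioc 0 T ×ˢ Ioc A1 B) :=
    ((hc.mono hsub).integrableOn_compact (isCompact_Icc.prod isCompact_Icc)).mono_set
      (prod_mono Ioc_subset_Icc_self Ioc_subset_Icc_self)
  have hsw := intervalIntegral_intervalIntegral_swap (F := F) (a := 0) (b := T) (c := A1) (d := B)
    (by rw [uIoc_of_le hT, uIoc_of_le hB1]; exact hI)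
  have hct : ∀ t, 0 ≤ t → t ≤ T → ContinuousOn (F t) (Ici A0) := by
    intro t h1 h2 a ha
    have := (hc (t, a) ⟨⟨h1, h2⟩, ha⟩)
    exact ContinuousWithinAt.comp (f := fun a : ℝ => (t, a)) this (by fun_prop)
      (fun x hx => ⟨⟨h1, h2⟩, hx⟩)
  have hii : ∀ t, 0 ≤ t → t ≤ T → ∀ a b, A0 ≤ a → a ≤ b → IntervalIntegrable (F t) volume a b := by
    intro t h1 h2 a b ha hab
    apply ContinuousOn.intervalIntegrable
    rw [uIcc_of_le hab]
    exact (hct t h1 h2).mono (fun x hx => le_trans ha hx.1)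
  have hup : ∫ t in (0:ℝ)..T, ∫ a in A1..B, F t a ≤ |K| * T := by
    have h1 := intervalIntegral.norm_integral_le_of_norm_le_const (a := 0) (b := T) (C := |K|)
      (f := fun t => ∫ a in A1..B, F t a) (by
        intro t ht
        rw [uIoc_of_le hT] at ht
        have hn1 : 0 ≤ ∫ a in A1..B, F t a := intervalIntegral.integral_nonneg hB1
          (fun x hx => h0 t ht.1.le ht.2 x (h01.trans hx.1))
        have hn2 : 0 ≤ ∫ a in A0..A1, F t a := intervalIntegral.integral_nonneg h01
          (fun x hx => h0 t ht.1.le ht.2 x hx.1)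
        have h3 := intervalIntegral.integral_add_adjacent_intervals
          (hii t ht.1.le ht.2 A0 A1 le_rfl h01) (hii t ht.1.le ht.2 A1 B h01 hB1)
        have h4 := hK t ht.1.le ht.2 B (h01.trans hB1)
        rw [Real.norm_of_nonneg hn1]
        have := le_abs_self K
        linarith)
    rw [sub_zero, abs_of_nonneg hT] at h1
    exact (le_abs_self _).trans h1
  have hint2 : IntervalIntegrable (fun a => ∫ t in (0:ℝ)..T, F t a) volume A1 B := by
    rw [intervalIntegrable_iff_integrableOn_Ioc_of_le hB1]
    rw [IntegrableOn, Measure.volume_eq_prod, ← Measure.prod_restrict] at hI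
    have := hI.integral_prod_right
    simp only [intervalIntegral.integral_of_le hT]
    exact this
  have hlow : ∫ a in A1..B, δ ≤ ∫ a in A1..B, ∫ t in (0:ℝ)..T, F t a := by
    apply intervalIntegral.integral_mono_on hB1 (by simp) hint2
    intro x hx
    exact hcon x hx.1
  rw [intervalIntegral.integral_const] at hlow
  have h5 : (B - A1) • δ = |K| * T + 1 := by
    rw [hB]; simp; field_simp
  linarith

lemma int_inv3 {a b : ℝ} (ha : 0 < a) (hab : a ≤ b) : ∫ s in a..b, 1 / s ^ 3 ≤ 1 / (2 * a ^ 2) := by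
  have h : ∀ x ∈ uIcc a b, HasDerivAt (fun s : ℝ => - (1 / (2 * s ^ 2))) (1 / x ^ 3) x := by
    intro x hx
    rw [uIcc_of_le hab] at hx
    have hx0 : 0 < x := lt_of_lt_of_le ha hx.1
    have h1 := ((hasDerivAt_pow 2 x).const_mul 2).inv (by positivity)
    have h2 := h1.neg
    simp only [one_div]
    refine h2.congr_deriv ?_
    simp
    field_simp
  rw [intervalIntegral.integral_eq_sub_of_hasDerivAt h]
  · have : 0 < 1 / (2 * b ^ 2) := by
      have : 0 < b := by linarith
      positivity
    linarith
  · apply ContinuousOn.intervalIntegrable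
    rw [uIcc_of_le hab]
    intro x hx
    have hx0 : 0 < x := lt_of_lt_of_le ha hx.1
    apply ContinuousAt.continuousWithinAt
    fun_prop (disch := positivity)

lemma int_inv2 {ρ T : ℝ} (ha : 0 < ρ) (hT : 0 ≤ T) :
    ∫ t in (0:ℝ)..T, 1 / (ρ + t) ^ 2 ≤ 1 / ρ := by
  have h : ∀ x ∈ uIcc 0 T, HasDerivAt (fun s : ℝ => - (1 / (ρ + s))) (1 / (ρ + x) ^ 2) x := by
    intro x hx
    rw [uIcc_of_le hT] at hx
    have hx0 : 0 < ρ + x := by linarith [hx.1]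
    have h1 := ((hasDerivAt_id x).const_add ρ).inv (by simpa using hx0.ne')
    have h2 := h1.neg
    simp only [one_div]
    refine h2.congr_deriv ?_
    simp
    field_simp
  rw [intervalIntegral.integral_eq_sub_of_hasDerivAt h]
  · have : 0 < 1 / (ρ + T) := by positivity
    simp at this ⊢
    linarith
  · apply ContinuousOn.intervalIntegrable
    rw [uIcc_of_le hT]
    intro x hx
    have hx0 : 0 < ρ + x := by linarith [hx.1]
    apply ContinuousAt.continuousWithinAt
    fun_prop (disch := positivity)

lemma young3 (x s l : ℝ) (hs : 0 < s) (hl : 0 < l) :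
    |x| ≤ 1 / 2 * (l * (x ^ 2 * s ^ 3) + 1 / l * (1 / s ^ 3)) := by
  have h1 : 0 < s ^ 3 := by positivity
  rw [← sub_nonneg]
  have : 1 / 2 * (l * (x ^ 2 * s ^ 3) + 1 / l * (1 / s ^ 3)) - |x| =
      (l * s ^ 3 * |x| - 1) ^ 2 / (2 * l * s ^ 3) := by
    rw [← sq_abs x]; field_simp; ring
  rw [this]; positivity

lemma cont_line {p : ℕ} {R : ℝ} {u v q vt vr qr : ℝ → ℝ → ℝ} (hS : Sol p R u v q vt vr qr)
    {t a : ℝ} (ht : 0 ≤ t) (h : R + t < a) :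
    ContinuousAt (fun s => u t s) a ∧ ContinuousAt (fun s => v t s) a ∧
    ContinuousAt (fun s => q t s) a := by
  have h' : R + |t| < a := by rwa [abs_of_nonneg ht]
  exact ⟨(hS.hu t a h').dr.continuousAt, (hS.hv t a h').dr.continuousAt,
    (hS.hq t a h').dr.continuousAt⟩

lemma EB_shift {p : ℕ} {R : ℝ} {u v q vt vr qr : ℝ → ℝ → ℝ} (hS : Sol p R u v q vt vr qr)
    (hR : 0 < R) {ρ M : ℝ} (hρ : R < ρ) (hE : EB v q ρ M) {t x y : ℝ} (ht : 0 ≤ t) (hx : ρ + t ≤ x)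
    (hxy : x ≤ y) : ∫ r in x..y, (v t r ^ 2 + q t r ^ 2) * r ^ 3 ≤ M := by
  have h1 := hE t ht (y - t) (by linarith)
  rw [intervalIntegral.integral_comp_add_right (fun r => (v t r ^ 2 + q t r ^ 2) * r ^ 3) t,
    sub_add_cancel] at h1
  refine le_trans ?_ h1
  have hi : ∀ a b, ρ + t ≤ a → a ≤ b → IntervalIntegrable
      (fun r => (v t r ^ 2 + q t r ^ 2) * r ^ 3) volume a b := by
    intro a b ha hab
    apply ContinuousOn.intervalIntegrable
    rw [uIcc_of_le hab]
    intro r hr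
    obtain ⟨_, h2, h3⟩ := cont_line hS (a := r) ht (by linarith [hr.1])
    apply ContinuousAt.continuousWithinAt
    fun_prop
  rw [← intervalIntegral.integral_add_adjacent_intervals (hi (ρ + t) x le_rfl hx) (hi x y hx hxy)]
  have : 0 ≤ ∫ r in (ρ + t)..x, (v t r ^ 2 + q t r ^ 2) * r ^ 3 := by
    apply intervalIntegral.integral_nonneg hx
    intro r hr
    have : 0 < r := by linarith [hr.1]
    positivity
  linarith

lemma u_small {p : ℕ} {R : ℝ} {u v q vt vr qr : ℝ → ℝ → ℝ} (hS : Sol p R u v q vt vr qr)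
    (hR : 0 < R) {ρ M : ℝ} (hρ : R < ρ) (hE : EB v q ρ M) (hd0 : ∀ r, R < r → u 0 r = 0)
    {T : ℝ} (hT : 0 ≤ T) (A1 : ℝ) (δ : ℝ) (hδ : 0 < δ) : ∃ A, A1 ≤ A ∧ |u T A| ≤ δ := by
  have hA0 : ∀ t, 0 ≤ t → t ≤ T → ∀ a, ρ + T ≤ a → R + |t| < a := by
    intro t h1 h2 a ha; rw [abs_of_nonneg h1]; linarith
  obtain ⟨A, hA, hJ⟩ := small2 (F := fun t r => v t r ^ 2 * r ^ 3) (A0 := ρ + T) (K := M) hT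
    (by
      rintro ⟨t, a⟩ ⟨h1, h2⟩
      have := (hS.hv t a (hA0 t h1.1 h1.2 a h2)).cont
      apply ContinuousAt.continuousWithinAt
      fun_prop)
    (by
      intro t h1 h2 a ha
      have : 0 < a := by linarith
      positivity)
    (by
      intro t h1 h2 B hB
      refine le_trans ?_ (EB_shift hS hR hρ hE (x := ρ + T) h1 (by linarith) hB)
      have hc : ∀ r ∈ uIcc (ρ + T) B, R + t < r := by
        intro r hr
        rw [uIcc_of_le hB] at hr
        linarith [hr.1]
      apply intervalIntegral.integral_mono_on hB
      · apply ContinuousOn.intervalIntegrable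
        intro r hr
        obtain ⟨_, h2, h3⟩ := cont_line hS (a := r) h1 (hc r hr)
        apply ContinuousAt.continuousWithinAt
        fun_prop
      · apply ContinuousOn.intervalIntegrable
        intro r hr
        obtain ⟨_, h2, h3⟩ := cont_line hS (a := r) h1 (hc r hr)
        apply ContinuousAt.continuousWithinAt
        fun_prop
      · intro r hr
        have : 0 < r := by linarith [hr.1]
        have : 0 ≤ q t r ^ 2 * r ^ 3 := by positivity
        nlinarith)
    δ hδ (max A1 (max (ρ + T) (max 1 (T / δ)))) (by simp)
  simp only [max_le_iff] at hA
  obtain ⟨hA1, hA2, hA3, hA4⟩ := hA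
  refine ⟨A, hA1, ?_⟩
  have hft : ∀ t ∈ uIcc 0 T, HasDerivAt (fun t => u t A) (v t A) t := by
    intro t ht
    rw [uIcc_of_le hT] at ht
    exact (hS.hu t A (hA0 t ht.1 ht.2 A hA2)).dt
  have hvc : ContinuousOn (fun t => v t A) (uIcc 0 T) := by
    intro t ht
    rw [uIcc_of_le hT] at ht
    exact (hS.hv t A (hA0 t ht.1 ht.2 A hA2)).dt.continuousAt.continuousWithinAt
  have h1 := intervalIntegral.integral_eq_sub_of_hasDerivAt hft hvc.intervalIntegrable
  rw [hd0 A (by linarith), sub_zero] at h1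
  rw [← h1]
  have hA0' : 0 < A := by linarith
  calc |∫ t in (0:ℝ)..T, v t A| ≤ ∫ t in (0:ℝ)..T, |v t A| :=
        intervalIntegral.abs_integral_le_integral_abs hT
    _ ≤ ∫ t in (0:ℝ)..T, (1 / 2 * (v t A ^ 2 * A ^ 3) + 1 / 2 * (1 / A ^ 3)) := by
        apply intervalIntegral.integral_mono_on hT
        · exact (hvc.abs).intervalIntegrable
        · apply ContinuousOn.intervalIntegrable
          fun_prop
        · intro t ht
          have := young3 (v t A) A 1 hA0' one_pos
          linarith
    _ = 1 / 2 * (∫ t in (0:ℝ)..T, v t A ^ 2 * A ^ 3) + T * (1 / 2 * (1 / A ^ 3)) := by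
        rw [intervalIntegral.integral_add, intervalIntegral.integral_const_mul]
        · simp
          ring
        · apply ContinuousOn.intervalIntegrable
          fun_prop
        · simp
    _ ≤ 1 / 2 * δ + 1 / 2 * δ := by
        have h3 : T ≤ A * δ := by rwa [div_le_iff₀ hδ] at hA4
        have h4 : T * (1 / A ^ 3) ≤ δ := by
          rw [mul_one_div, div_le_iff₀ (by positivity)]
          have : A ≤ A ^ 3 := by nlinarith [sq_nonneg (A-1), mul_pos hA0' hA0']
          nlinarith
        linarith
    _ = δ := by ring

lemma u_bound {p : ℕ} {R : ℝ} {u v q vt vr qr : ℝ → ℝ → ℝ} (hS : Sol p R u v q vt vr qr)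
    (hR : 0 < R) {ρ K : ℝ} (hρ : R < ρ) (hK : 0 < K) (hE : EB v q ρ (K ^ 2))
    (hd0 : ∀ r, R < r → u 0 r = 0)
    {t r : ℝ} (ht : 0 ≤ t) (hr : ρ + t ≤ r) : |u t r| ≤ K / r := by
  have hr0 : 0 < r := by linarith
  apply le_of_forall_pos_le_add
  intro δ hδ
  obtain ⟨A, hA, hu⟩ := u_small hS hR hρ hE hd0 ht r δ hδ
  have hRr : ∀ s ∈ uIcc r A, R + t < s := by
    intro s hs
    rw [uIcc_of_le hA] at hs
    linarith [hs.1]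
  have hft : ∀ s ∈ uIcc r A, HasDerivAt (fun s => u t s) (q t s) s := by
    intro s hs
    exact (hS.hu t s (by rw [abs_of_nonneg ht]; exact hRr s hs)).dr
  have hvc : ContinuousOn (fun s => q t s) (uIcc r A) := by
    intro s hs
    exact (cont_line hS ht (hRr s hs)).2.2.continuousWithinAt
  have hvv : ContinuousOn (fun s => v t s) (uIcc r A) := by
    intro s hs
    exact (cont_line hS ht (hRr s hs)).2.1.continuousWithinAt
  have h1 := intervalIntegral.integral_eq_sub_of_hasDerivAt hft hvc.intervalIntegrable
  have h2 : u t r = u t A - ∫ s in r..A, q t s := by linarith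
  have hl : 0 < 1 / (r * K) := by positivity
  have hc3 : ContinuousOn (fun s : ℝ => 1 / s ^ 3) (uIcc r A) := by
    intro s hs
    have : 0 < s := by linarith [hRr s hs]
    apply ContinuousAt.continuousWithinAt
    fun_prop (disch := positivity)
  have h3 : |∫ s in r..A, q t s| ≤ K / r := by
    calc |∫ s in r..A, q t s| ≤ ∫ s in r..A, |q t s| :=
        intervalIntegral.abs_integral_le_integral_abs hA
      _ ≤ ∫ s in r..A, (1 / 2 * (1 / (r * K)) * ((v t s ^ 2 + q t s ^ 2) * s ^ 3)
            + 1 / 2 * (r * K) * (1 / s ^ 3)) := by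
          apply intervalIntegral.integral_mono_on hA
          · exact (hvc.abs).intervalIntegrable
          · apply ContinuousOn.intervalIntegrable
            fun_prop
          · intro s hs
            have hs0 : 0 < s := by linarith [hs.1]
            have := young3 (q t s) s (1 / (r * K)) hs0 hl
            have h5 : 0 ≤ 1 / 2 * (1 / (r * K)) * (v t s ^ 2 * s ^ 3) := by positivity
            rw [one_div_one_div] at this
            nlinarith
      _ = 1 / 2 * (1 / (r * K)) * (∫ s in r..A, (v t s ^ 2 + q t s ^ 2) * s ^ 3)
            + 1 / 2 * (r * K) * ∫ s in r..A, 1 / s ^ 3 := by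
          rw [intervalIntegral.integral_add, intervalIntegral.integral_const_mul,
            intervalIntegral.integral_const_mul]
          · apply ContinuousOn.intervalIntegrable
            fun_prop
          · apply ContinuousOn.intervalIntegrable
            fun_prop
      _ ≤ 1 / 2 * (1 / (r * K)) * K ^ 2 + 1 / 2 * (r * K) * (1 / (2 * r ^ 2)) := by
          gcongr
          · exact EB_shift hS hR hρ hE ht hr hA
          · exact int_inv3 hr0 hA
      _ ≤ K / r := by
          have : 1 / 2 * (1 / (r * K)) * K ^ 2 + 1 / 2 * (r * K) * (1 / (2 * r ^ 2)) = 3 / 4 * (K / r) := by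
            field_simp; ring
          rw [this]
          have : 0 < K / r := by positivity
          linarith
  rw [h2]
  calc |u t A - ∫ s in r..A, q t s| ≤ |u t A| + |∫ s in r..A, q t s| := abs_sub _ _
    _ ≤ K / r + δ := by linarith


lemma div_cone2 (G1 G2 D : ℝ → ℝ → ℝ) (c α β T : ℝ) (hT : 0 ≤ T) (hab : α ≤ β)
    (h : ∀ t, 0 ≤ t → t ≤ T → ∀ a, α ≤ a → a ≤ β → ∃ a1 b1 a2 b2,
      HPD G1 a1 b1 t (a + c * t) ∧ HPD G2 a2 b2 t (a + c * t) ∧ a1 + b2 = D t (a + c * t))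
    (hDc : ∀ t, 0 ≤ t → t ≤ T → ∀ a, α ≤ a → a ≤ β →
      ContinuousAt (fun q : ℝ × ℝ => D q.1 q.2) (t, a + c * t)) :
    (∫ t in (0:ℝ)..T, ∫ a in α..β, D t (a + c * t)) =
      (((∫ t in (0:ℝ)..T, (G2 t (β + c * t) - c * G1 t (β + c * t)))
        - ∫ t in (0:ℝ)..T, (G2 t (α + c * t) - c * G1 t (α + c * t)))
        + ∫ a in α..β, G1 T (a + c * T)) - ∫ a in α..β, G1 0 a := by
  refine div_cone G1 G2 (fun t r => fderiv ℝ (fun q : ℝ × ℝ => G1 q.1 q.2) (t, r) (1, 0))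
    (fun t r => fderiv ℝ (fun q : ℝ × ℝ => G1 q.1 q.2) (t, r) (0, 1))
    (fun t r => fderiv ℝ (fun q : ℝ × ℝ => G2 q.1 q.2) (t, r) (1, 0))
    (fun t r => fderiv ℝ (fun q : ℝ × ℝ => G2 q.1 q.2) (t, r) (0, 1)) D c α β T hT hab
    ?_ ?_ ?_ hDc
  · intro t h1 h2 a h3 h4
    obtain ⟨a1, b1, a2, b2, k1, k2, k3⟩ := h t h1 h2 a h3 h4
    exact k1.congr_val (hpd_fderiv k1).1.symm (hpd_fderiv k1).2.symm
  · intro t h1 h2 a h3 h4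
    obtain ⟨a1, b1, a2, b2, k1, k2, k3⟩ := h t h1 h2 a h3 h4
    exact k2.congr_val (hpd_fderiv k2).1.symm (hpd_fderiv k2).2.symm
  · intro t h1 h2 a h3 h4
    obtain ⟨a1, b1, a2, b2, k1, k2, k3⟩ := h t h1 h2 a h3 h4
    rw [(hpd_fderiv k1).1, (hpd_fderiv k2).2, k3]

lemma int_w {g : ℝ → ℝ} {ρ T k : ℝ} (hρ : 0 < ρ) (hT : 0 ≤ T) (hk : 0 ≤ k)
    (h : ∀ t, 0 ≤ t → t ≤ T → |g t| ≤ k * (1 / (ρ + t) ^ 2)) :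
    |∫ t in (0:ℝ)..T, g t| ≤ k * (1 / ρ) := by
  have h1 : ‖∫ t in (0:ℝ)..T, g t‖ ≤ ∫ t in (0:ℝ)..T, k * (1 / (ρ + t) ^ 2) := by
    apply intervalIntegral.norm_integral_le_of_norm_le hT
    · filter_upwards with t ht
      exact h t ht.1.le ht.2
    · apply ContinuousOn.intervalIntegrable
      intro t ht
      rw [uIcc_of_le hT] at ht
      have : 0 < ρ + t := by linarith [ht.1]
      apply ContinuousAt.continuousWithinAt
      fun_prop (disch := positivity)
  rw [intervalIntegral.integral_const_mul] at h1
  refine h1.trans ?_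
  gcongr
  exact int_inv2 hρ hT

lemma q_zero {p : ℕ} {R : ℝ} {u v q vt vr qr : ℝ → ℝ → ℝ} (hS : Sol p R u v q vt vr qr)
    (hd0 : ∀ r, R < r → u 0 r = 0) {r : ℝ} (hr : R < r) : q 0 r = 0 := by
  have h1 := (hS.hu 0 r (by simpa using hr)).dr
  have h2 : HasDerivAt (fun s => u 0 s) 0 r := by
    refine (hasDerivAt_const r (0:ℝ)).congr_of_eventuallyEq ?_
    filter_upwards [lt_mem_nhds hr] with s hs using hd0 s hs
  exact h1.unique h2

lemma line_int {p : ℕ} {R : ℝ} {u v q vt vr qr : ℝ → ℝ → ℝ} (hS : Sol p R u v q vt vr qr)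
    {ρ t a : ℝ} (hρ : R < ρ) (ht : 0 ≤ t) (ha : ρ ≤ a) :
    ContinuousAt (fun s => u t (s + t)) a ∧ ContinuousAt (fun s => v t (s + t)) a ∧
    ContinuousAt (fun s => q t (s + t)) a := by
  obtain ⟨h1, h2, h3⟩ := cont_line hS (a := a + t) ht (by linarith)
  have h4 : ContinuousAt (fun s : ℝ => s + t) a := by fun_prop
  exact ⟨ContinuousAt.comp (f := fun s : ℝ => s + t) h1 h4,
    ContinuousAt.comp (f := fun s : ℝ => s + t) h2 h4,
    ContinuousAt.comp (f := fun s : ℝ => s + t) h3 h4⟩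

lemma edge_small {p : ℕ} {R : ℝ} {u v q vt vr qr : ℝ → ℝ → ℝ} (hS : Sol p R u v q vt vr qr)
    (hR : 0 < R) {ρ M T : ℝ} (hρ : R < ρ) (hT : 0 ≤ T) (hE : EB v q ρ M) (A1 δ : ℝ)
    (hδ : 0 < δ) (X : ℝ → ℝ → ℝ) (K : ℝ)
    (hX : ContinuousOn (fun z : ℝ × ℝ => X z.1 z.2) (Icc 0 T ×ˢ Ici ρ))
    (hX0 : ∀ t, 0 ≤ t → t ≤ T → ∀ a, ρ ≤ a → 0 ≤ X t a)
    (hXK : ∀ t, 0 ≤ t → t ≤ T → ∀ B, ρ ≤ B → ∫ a in ρ..B, X t a ≤ K) :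
    ∃ A, A1 ≤ A ∧ ρ ≤ A ∧
      ∫ t in (0:ℝ)..T, ((v t (A + t) ^ 2 + q t (A + t) ^ 2) * (A + t) ^ 3 + X t A) < δ := by
  have hsh : ContinuousOn (fun z : ℝ × ℝ => (v z.1 (z.2 + z.1) ^ 2 + q z.1 (z.2 + z.1) ^ 2)
        * (z.2 + z.1) ^ 3) (Icc 0 T ×ˢ Ici ρ) := by
    rintro ⟨t, a⟩ ⟨h1, h2⟩
    have h2' : ρ ≤ a := h2
    have hh : R + |t| < a + t := by rw [abs_of_nonneg h1.1]; linarith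
    have c1 := (hS.hv t (a + t) hh).cont
    have c2 := (hS.hq t (a + t) hh).cont
    have c0 : ContinuousAt (fun z : ℝ × ℝ => (z.1, z.2 + z.1)) (t, a) := by fun_prop
    have c3 := ContinuousAt.comp (f := fun z : ℝ × ℝ => (z.1, z.2 + z.1)) (x := (t, a)) c1 c0
    have c4 := ContinuousAt.comp (f := fun z : ℝ × ℝ => (z.1, z.2 + z.1)) (x := (t, a)) c2 c0
    simp only [Function.comp_def] at c3 c4
    apply ContinuousAt.continuousWithinAt
    fun_prop
  obtain ⟨A, h1, h2⟩ := small2 (F := fun t a => (v t (a + t) ^ 2 + q t (a + t) ^ 2) * (a + t) ^ 3 + X t a)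
    (A0 := ρ) (K := M + K) hT (hsh.add hX) (by
      intro t h1 h2 a ha
      have : 0 < a + t := by linarith
      have := hX0 t h1 h2 a ha
      positivity) (by
      intro t h1 h2 B hB
      rw [intervalIntegral.integral_add]
      · exact add_le_add (hE t h1 B hB) (hXK t h1 h2 B hB)
      · apply ContinuousOn.intervalIntegrable
        intro a ha
        rw [uIcc_of_le hB] at ha
        obtain ⟨_, c2, c3⟩ := line_int hS hρ h1 ha.1
        apply ContinuousAt.continuousWithinAt
        exact ((c2.pow 2).add (c3.pow 2)).mul (by fun_prop)
      · apply ContinuousOn.intervalIntegrable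
        rw [uIcc_of_le hB]
        intro a ha
        have := (hX (t, a) ⟨⟨h1, h2⟩, ha.1⟩)
        refine ContinuousWithinAt.comp (f := fun a : ℝ => (t, a)) this (by fun_prop)
          (fun x hx => ⟨⟨h1, h2⟩, hx.1⟩)) δ hδ (max A1 ρ) (le_max_right _ _)
  exact ⟨A, (le_max_left _ _).trans h1, (le_max_right _ _).trans h1, h2⟩

lemma src_bound {ρ A t K D : ℝ} {U V Q : ℝ → ℝ} {p : ℕ} (hρ : 0 < ρ) (hρA : ρ ≤ A) (h1 : 0 ≤ t)
    (hK : 0 < K) (hD : 0 ≤ D)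
    (hcu : ContinuousOn U (uIcc ρ A)) (hcv : ContinuousOn V (uIcc ρ A))
    (hcq : ContinuousOn Q (uIcc ρ A))
    (hU : ∀ a, ρ ≤ a → |U a ^ p| ≤ D / (a + t) ^ 4 * (K / (a + t)))
    (hE : ∫ a in ρ..A, (V a ^ 2 + Q a ^ 2) * (a + t) ^ 3 ≤ K ^ 2) :
    |∫ a in ρ..A, 2 * (U a ^ p * V a) * (a + t) ^ 3| ≤ 2 * D * K ^ 2 / ρ * (1 / (ρ + t) ^ 2) := by
  have hc3 : ContinuousOn (fun s : ℝ => 1 / (s + t) ^ 3) (uIcc ρ A) := by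
    intro a ha
    rw [uIcc_of_le hρA] at ha
    have : 0 < a + t := by linarith [ha.1]
    apply ContinuousAt.continuousWithinAt
    fun_prop (disch := positivity)
  have hst : 0 < ρ + t := by linarith
  set w := D * K / (ρ + t) ^ 2 with hw
  have hw0 : 0 ≤ w := by positivity
  calc |∫ a in ρ..A, 2 * (U a ^ p * V a) * (a + t) ^ 3|
      ≤ ∫ a in ρ..A, |2 * (U a ^ p * V a) * (a + t) ^ 3| :=
        intervalIntegral.abs_integral_le_integral_abs hρA
    _ ≤ ∫ a in ρ..A, (w * (1 / (K * ρ)) * ((V a ^ 2 + Q a ^ 2) * (a + t) ^ 3)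
          + w * (K * ρ) * (1 / (a + t) ^ 3)) := by
        apply intervalIntegral.integral_mono_on hρA
        · apply ContinuousOn.intervalIntegrable
          fun_prop
        · apply ContinuousOn.intervalIntegrable
          fun_prop
        · intro a ha
          have hr : 0 < a + t := by linarith [ha.1]
          have hup := hU a ha.1
          have hy := young3 (V a) (a + t) (1 / (K * ρ)) hr (by positivity)
          rw [one_div_one_div] at hy
          rw [abs_mul, abs_mul, abs_mul, abs_of_pos (by positivity : 0 < (a + t) ^ 3), abs_two]
          have hw2 : |U a ^ p| * (a + t) ^ 3 ≤ w := by
            calc |U a ^ p| * (a + t) ^ 3 ≤ D / (a + t) ^ 4 * (K / (a + t)) * (a + t) ^ 3 := by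
                  gcongr
              _ = D * K / (a + t) ^ 2 := by field_simp
              _ ≤ w := by
                  rw [hw]; gcongr
                  exact ha.1
          calc 2 * (|U a ^ p| * |V a|) * (a + t) ^ 3
              = 2 * (|U a ^ p| * (a + t) ^ 3) * |V a| := by ring
            _ ≤ 2 * w * (1 / 2 * (1 / (K * ρ) * ((V a ^ 2 + Q a ^ 2) * (a + t) ^ 3)
                  + K * ρ * (1 / (a + t) ^ 3))) := by
                gcongr
                refine hy.trans ?_
                gcongr
                have := sq_nonneg (Q a)
                linarith
            _ = _ := by ring
    _ = w * (1 / (K * ρ)) * (∫ a in ρ..A, (V a ^ 2 + Q a ^ 2) * (a + t) ^ 3)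
          + w * (K * ρ) * ∫ a in ρ..A, 1 / (a + t) ^ 3 := by
        rw [intervalIntegral.integral_add, intervalIntegral.integral_const_mul,
          intervalIntegral.integral_const_mul]
        · apply ContinuousOn.intervalIntegrable
          fun_prop
        · apply ContinuousOn.intervalIntegrable
          fun_prop
    _ ≤ w * (1 / (K * ρ)) * K ^ 2 + w * (K * ρ) * (1 / (2 * ρ ^ 2)) := by
        gcongr
        · rw [intervalIntegral.integral_comp_add_right (fun r : ℝ => 1 / r ^ 3) t]
          refine (int_inv3 hst (by linarith)).trans ?_
          gcongr
          linarith
    _ ≤ 2 * D * K ^ 2 / ρ * (1 / (ρ + t) ^ 2) := by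
        have e : w * (1 / (K * ρ)) * K ^ 2 + w * (K * ρ) * (1 / (2 * ρ ^ 2))
          = 3 / 4 * (2 * D * K ^ 2 / ρ * (1 / (ρ + t) ^ 2)) := by
          rw [hw]; field_simp; ring
        rw [e]
        have : 0 ≤ 2 * D * K ^ 2 / ρ * (1 / (ρ + t) ^ 2) := by positivity
        linarith

lemma edge_right {T A δ : ℝ} {V Q : ℝ → ℝ} (hT : 0 ≤ T) (hA : 0 < A)
    (hcA1 : ContinuousOn V (uIcc 0 T)) (hcA2 : ContinuousOn Q (uIcc 0 T))
    (hJ : ∫ t in (0:ℝ)..T, ((V t ^ 2 + Q t ^ 2) * (A + t) ^ 3 + 0) < δ / 2) :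
    -δ ≤ ∫ t in (0:ℝ)..T, ((-2) * (V t * Q t) * (A + t) ^ 3 -
      (V t * V t + Q t * Q t) * (A + t) ^ 3) := by
  have h1 : ∫ t in (0:ℝ)..T, (-2) * ((V t ^ 2 + Q t ^ 2) * (A + t) ^ 3 + 0) ≤
    ∫ t in (0:ℝ)..T, ((-2) * (V t * Q t) * (A + t) ^ 3 -
    (V t * V t + Q t * Q t) * (A + t) ^ 3) := by
    apply intervalIntegral.integral_mono_on hT
    · apply ContinuousOn.intervalIntegrable
      fun_prop
    · apply ContinuousOn.intervalIntegrable
      fun_prop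
    · intro t ht
      have : 0 < A + t := by linarith [ht.1]
      rw [← sub_nonneg]
      have e : ((-2) * (V t * Q t) * (A + t) ^ 3 -
        (V t * V t + Q t * Q t) * (A + t) ^ 3) -
        (-2) * ((V t ^ 2 + Q t ^ 2) * (A + t) ^ 3 + 0) =
        (V t - Q t) ^ 2 * (A + t) ^ 3 := by ring
      rw [e]; positivity
  rw [intervalIntegral.integral_const_mul] at h1
  linarith

lemma cont_edge {p : ℕ} {R : ℝ} {u v q vt vr qr : ℝ → ℝ → ℝ} (hS : Sol p R u v q vt vr qr)
    {A T : ℝ} (hA : R < A) (hT : 0 ≤ T) :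
    ContinuousOn (fun t => u t (A + t)) (uIcc 0 T) ∧
    ContinuousOn (fun t => v t (A + t)) (uIcc 0 T) ∧
    ContinuousOn (fun t => q t (A + t)) (uIcc 0 T) := by
  have hcA : ∀ t ∈ uIcc 0 T, ContinuousAt (fun t => u t (A + t)) t ∧
      ContinuousAt (fun t => v t (A + t)) t ∧
      ContinuousAt (fun t => q t (A + t)) t := by
    intro t ht
    rw [uIcc_of_le hT] at ht
    have hh : R + |t| < A + t := by rw [abs_of_nonneg ht.1]; linarith
    have c0 : ContinuousAt (fun t : ℝ => (t, A + t)) t := by fun_prop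
    exact ⟨ContinuousAt.comp (f := fun t : ℝ => (t, A + t)) (hS.hu t _ hh).cont c0,
      ContinuousAt.comp (f := fun t : ℝ => (t, A + t)) (hS.hv t _ hh).cont c0,
      ContinuousAt.comp (f := fun t : ℝ => (t, A + t)) (hS.hq t _ hh).cont c0⟩
  exact ⟨fun a ha => (hcA a ha).1.continuousWithinAt,
    fun a ha => (hcA a ha).2.1.continuousWithinAt, fun a ha => (hcA a ha).2.2.continuousWithinAt⟩

lemma line_on {p : ℕ} {R : ℝ} {u v q vt vr qr : ℝ → ℝ → ℝ} (hS : Sol p R u v q vt vr qr)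
    {ρ t A : ℝ} (hρ : R < ρ) (ht : 0 ≤ t) (hA : ρ ≤ A) :
    ContinuousOn (fun s => u t (s + t)) (uIcc ρ A) ∧ ContinuousOn (fun s => v t (s + t)) (uIcc ρ A) ∧
    ContinuousOn (fun s => q t (s + t)) (uIcc ρ A) := by
  rw [uIcc_of_le hA]
  exact ⟨fun a ha => (line_int hS hρ ht ha.1).1.continuousWithinAt,
    fun a ha => (line_int hS hρ ht ha.1).2.1.continuousWithinAt,
    fun a ha => (line_int hS hρ ht ha.1).2.2.continuousWithinAt⟩

lemma energy_step {p : ℕ} {R : ℝ} {u v q vt vr qr : ℝ → ℝ → ℝ} (hS : Sol p R u v q vt vr qr)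
    (hR : 0 < R) (hp : 1 ≤ p) {ρ K D m : ℝ} (hρ : R < ρ) (hK : 0 < K) (hD : 0 ≤ D)
    (hE : EB v q ρ (K ^ 2))
    (hd0 : ∀ r, R < r → u 0 r = 0)
    (hDb : ∀ t r, 0 ≤ t → ρ + t ≤ r → |u t r| ^ (p - 1) ≤ D / r ^ 4)
    (hm : ∀ A, ρ ≤ A → ∫ r in ρ..A, v 0 r ^ 2 * r ^ 3 ≤ m) :
    EB v q ρ (m + 2 * D * K ^ 2 / ρ ^ 2) := by
  intro T hT A0 hA0
  have hρ0 : 0 < ρ := by linarith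
  apply le_of_forall_pos_le_add
  intro δ hδ
  obtain ⟨A, hA, hρA, hJ⟩ := edge_small hS hR hρ hT hE A0 (δ / 2) (by positivity)
    (fun _ _ => 0) 0 (by fun_prop) (by simp) (by simp)
  have hin : ∀ t, 0 ≤ t → ∀ a, ρ ≤ a → R + |t| < a + 1 * t := by
    intro t ht a ha; rw [abs_of_nonneg ht]; linarith
  have hdiv := div_cone2 (fun t r => (v t r * v t r + q t r * q t r) * r ^ 3)
    (fun t r => (-2) * (v t r * q t r) * r ^ 3)
    (fun t r => 2 * (u t r ^ p * v t r) * r ^ 3) 1 ρ A T hT hρA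
    (by
      intro t h1 _ a h3 _
      refine ⟨_, _, _, _,
        (((hS.hv _ _ (hin t h1 a h3)).mul (hS.hv _ _ (hin t h1 a h3))).add
        ((hS.hq _ _ (hin t h1 a h3)).mul (hS.hq _ _ (hin t h1 a h3)))).mul (HPD.r3 _ _),
        ((HPD.const (-2) _ _).mul ((hS.hv _ _ (hin t h1 a h3)).mul
        (hS.hq _ _ (hin t h1 a h3)))).mul (HPD.r3 _ _), ?_⟩
      have he := hS.heq _ _ (hin t h1 a h3)
      have hr : 0 < a + 1 * t := by linarith
      rw [← he]
      generalize a + 1 * t = r at *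
      field_simp
      ring)
    (by
      intro t h1 h2 a h3 h4
      have c1 := (hS.hu _ _ (hin t h1 a h3)).cont
      have c2 := (hS.hv _ _ (hin t h1 a h3)).cont
      fun_prop)
  simp only [one_mul] at hdiv
  -- source term
  have hsrc : |∫ t in (0:ℝ)..T, ∫ a in ρ..A, 2 * (u t (a + t) ^ p * v t (a + t)) * (a + t) ^ 3|
      ≤ 2 * D * K ^ 2 / ρ * (1 / ρ) := by
    apply int_w hρ0 hT (by positivity)
    intro t h1 h2
    obtain ⟨c1, c2, c3⟩ := line_on hS hρ h1 hρA
    refine src_bound hρ0 hρA h1 hK hD c1 c2 c3 ?_ (hE t h1 A hρA)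
    intro a ha
    have hr : 0 < a + t := by linarith
    have hb1 := hDb t (a + t) h1 (by linarith)
    have hb2 := u_bound hS hR hρ hK hE hd0 h1 (r := a + t) (by linarith)
    rw [abs_pow, ← Nat.sub_add_cancel hp, pow_succ]
    exact mul_le_mul hb1 hb2 (abs_nonneg _) (by positivity)
  have hbot : ∫ a in ρ..A, (v 0 a * v 0 a + q 0 a * q 0 a) * a ^ 3 ≤ m := by
    refine le_trans (le_of_eq ?_) (hm A hρA)
    apply intervalIntegral.integral_congr
    intro a ha
    rw [uIcc_of_le hρA] at ha
    simp only
    rw [q_zero hS hd0 (by linarith [ha.1] : R < a)]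
    ring
  have hleft : ∫ t in (0:ℝ)..T, ((-2) * (v t (ρ + t) * q t (ρ + t)) * (ρ + t) ^ 3 -
      (v t (ρ + t) * v t (ρ + t) + q t (ρ + t) * q t (ρ + t)) * (ρ + t) ^ 3) ≤ 0 := by
    rw [← neg_nonneg, ← intervalIntegral.integral_neg]
    apply intervalIntegral.integral_nonneg hT
    intro t ht
    have : 0 < ρ + t := by linarith [ht.1]
    have e : -((-2) * (v t (ρ + t) * q t (ρ + t)) * (ρ + t) ^ 3 -
      (v t (ρ + t) * v t (ρ + t) + q t (ρ + t) * q t (ρ + t)) * (ρ + t) ^ 3) =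
      (v t (ρ + t) + q t (ρ + t)) ^ 2 * (ρ + t) ^ 3 := by ring
    rw [e]; positivity
  have hright : -δ ≤ ∫ t in (0:ℝ)..T, ((-2) * (v t (A + t) * q t (A + t)) * (A + t) ^ 3 -
      (v t (A + t) * v t (A + t) + q t (A + t) * q t (A + t)) * (A + t) ^ 3) := by
    obtain ⟨_, c2, c3⟩ := cont_edge hS (A := A) (by linarith) hT
    exact edge_right hT (by linarith) c2 c3 hJ
  have hmono : ∫ a in ρ..A0, (v T (a + T) ^ 2 + q T (a + T) ^ 2) * (a + T) ^ 3 ≤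
      ∫ a in ρ..A, (v T (a + T) * v T (a + T) + q T (a + T) * q T (a + T)) * (a + T) ^ 3 := by
    have e : ∫ a in ρ..A, (v T (a + T) * v T (a + T) + q T (a + T) * q T (a + T)) * (a + T) ^ 3 =
      ∫ a in ρ..A, (v T (a + T) ^ 2 + q T (a + T) ^ 2) * (a + T) ^ 3 := by
      congr 1; ext a; ring
    have hii : ∀ a b, ρ ≤ a → a ≤ b → IntervalIntegrable
        (fun a => (v T (a + T) ^ 2 + q T (a + T) ^ 2) * (a + T) ^ 3) volume a b := by
      intro a b ha hab
      apply ContinuousOn.intervalIntegrable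
      rw [uIcc_of_le hab]
      intro s hs
      obtain ⟨_, c2, c3⟩ := line_int hS hρ hT (ha.trans hs.1)
      apply ContinuousAt.continuousWithinAt
      exact ((c2.pow 2).add (c3.pow 2)).mul (by fun_prop)
    rw [e, ← intervalIntegral.integral_add_adjacent_intervals (hii ρ A0 le_rfl hA0)
      (hii A0 A hA0 hA)]
    have : 0 ≤ ∫ a in A0..A, (v T (a + T) ^ 2 + q T (a + T) ^ 2) * (a + T) ^ 3 := by
      apply intervalIntegral.integral_nonneg hA
      intro a ha
      have : 0 < a + T := by linarith [ha.1]
      positivity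
    linarith
  have h5 := le_abs_self (∫ t in (0:ℝ)..T, ∫ a in ρ..A, 2 * (u t (a + t) ^ p * v t (a + t)) * (a + t) ^ 3)
  have h6 : 2 * D * K ^ 2 / ρ * (1 / ρ) = 2 * D * K ^ 2 / ρ ^ 2 := by field_simp
  linarith


/-- properties of the dual solution used as test function -/
structure TestF (ρ : ℝ) (η : ℝ → ℝ) (N2 EX : ℝ) (X Y Z Yt Yr Zr : ℝ → ℝ → ℝ) : Prop where
  hX : ∀ t r, 0 ≤ t → 0 < r → HPD X (Y t r) (Z t r) t r
  hY : ∀ t r, 0 ≤ t → 0 < r → HPD Y (Yt t r) (Yr t r) t r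
  hZ : ∀ t r, 0 ≤ t → 0 < r → HPD Z (Yr t r) (Zr t r) t r
  heq : ∀ t r, 0 ≤ t → 0 < r → Yt t r = Zr t r + 3 / r * Z t r
  hX0 : ∀ t, 0 ≤ t → X t (ρ + t) = 0
  hY0 : ∀ t, 0 ≤ t → Y t (ρ + t) = 0
  hZ0 : ∀ t, 0 ≤ t → Z t (ρ + t) = 0
  hin : ∀ r, ρ < r → Y 0 r = - η r / r
  hEX : ∀ t, 0 ≤ t → ∀ A, ρ ≤ A →
    ∫ a in ρ..A, (Y t (a + t) ^ 2 + Z t (a + t) ^ 2) * (a + t) ^ 3 ≤ EX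
  hN : ∀ t, 0 ≤ t → ∀ A, ρ ≤ A → ∫ a in ρ..A, X t (a + t) ^ 2 * (1 / (a + t)) ≤ N2

lemma pw0 {F X r l D K : ℝ} (hr : 0 < r) (hl : 0 < l) (hDK : 0 ≤ D * K)
    (hF : |F| ≤ D / r ^ 4 * (K / r)) :
    |F * X * r ^ 3| ≤ 1 / 2 * (D * K) * (l * (X ^ 2 * (1 / r)) + 1 / l * (1 / r ^ 3)) := by
  rw [abs_mul, abs_mul, abs_of_pos (by positivity : 0 < r ^ 3)]
  have h1 : |F| * |X| * r ^ 3 ≤ D / r ^ 4 * (K / r) * |X| * r ^ 3 := by gcongr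
  refine h1.trans ?_
  have e1 : D / r ^ 4 * (K / r) * |X| * r ^ 3 = (D * K) * (|X| / r ^ 2) := by field_simp
  have e2 : 1 / 2 * (D * K) * (l * (X ^ 2 * (1 / r)) + 1 / l * (1 / r ^ 3)) =
    (D * K) * (1 / 2 * (l * (X ^ 2 * (1 / r)) + 1 / l * (1 / r ^ 3))) := by ring
  rw [e1, e2]
  apply mul_le_mul_of_nonneg_left _ hDK
  rw [← sub_nonneg]
  have : 1 / 2 * (l * (X ^ 2 * (1 / r)) + 1 / l * (1 / r ^ 3)) - |X| / r ^ 2 =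
    (l * r * |X| - 1) ^ 2 / (2 * l * r ^ 3) := by
    rw [← sq_abs X]; field_simp; ring
  rw [this]; positivity

lemma pw1 {V Q Y Z F X r l D K : ℝ} (hr : 0 < r) (hl : 0 < l) (hDK : 0 ≤ D * K)
    (hF : |F| ≤ D / r ^ 4 * (K / r)) :
    |(V * Y + Q * Z - F * X) * r ^ 3| ≤ 1 / 2 * (1 / l) * ((V ^ 2 + Q ^ 2) * r ^ 3)
      + 1 / 2 * l * ((Y ^ 2 + Z ^ 2) * r ^ 3)
      + 1 / 2 * (D * K) * (l * (X ^ 2 * (1 / r)) + 1 / l * (1 / r ^ 3)) := by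
  have h0 := pw0 (X := X) hr hl hDK hF
  have h1 : |(V * Y + Q * Z) * r ^ 3| ≤ 1 / 2 * (1 / l) * ((V ^ 2 + Q ^ 2) * r ^ 3)
      + 1 / 2 * l * ((Y ^ 2 + Z ^ 2) * r ^ 3) := by
    rw [abs_mul, abs_of_pos (by positivity : 0 < r ^ 3)]
    have : |V * Y + Q * Z| ≤ 1 / 2 * (1 / l) * (V ^ 2 + Q ^ 2) + 1 / 2 * l * (Y ^ 2 + Z ^ 2) := by
      rw [abs_le]
      constructor
      · rw [← sub_nonneg]
        have : V * Y + Q * Z - -(1 / 2 * (1 / l) * (V ^ 2 + Q ^ 2) + 1 / 2 * l * (Y ^ 2 + Z ^ 2)) =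
          ((V + l * Y) ^ 2 + (Q + l * Z) ^ 2) / (2 * l) := by field_simp; ring
        rw [this]; positivity
      · rw [← sub_nonneg]
        have : 1 / 2 * (1 / l) * (V ^ 2 + Q ^ 2) + 1 / 2 * l * (Y ^ 2 + Z ^ 2) - (V * Y + Q * Z) =
          ((V - l * Y) ^ 2 + (Q - l * Z) ^ 2) / (2 * l) := by field_simp; ring
        rw [this]; positivity
    calc _ ≤ (1 / 2 * (1 / l) * (V ^ 2 + Q ^ 2) + 1 / 2 * l * (Y ^ 2 + Z ^ 2)) * r ^ 3 := by gcongr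
      _ = _ := by ring
  have e : (V * Y + Q * Z - F * X) * r ^ 3 = (V * Y + Q * Z) * r ^ 3 - F * X * r ^ 3 := by ring
  rw [e]
  have := abs_sub ((V * Y + Q * Z) * r ^ 3) (F * X * r ^ 3)
  linarith

lemma pw2 {V Q Y Z F X r D K : ℝ} (hr : 0 < r) (hDK : 0 ≤ D * K)
    (hF : |F| ≤ D / r ^ 4 * (K / r)) :
    |(-1) * (Q * Y + V * Z) * r ^ 3 - (V * Y + Q * Z - F * X) * r ^ 3| ≤
      (1 + D * K) * ((V ^ 2 + Q ^ 2) * r ^ 3 + ((Y ^ 2 + Z ^ 2) * r ^ 3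
      + X ^ 2 * (1 / r) + 1 / r ^ 3)) := by
  have h0 := pw1 (V := V) (Q := Q) (Y := Y) (Z := Z) (X := X) hr one_pos hDK hF
  have h2 := pw1 (V := Q) (Q := V) (Y := Y) (Z := Z) (X := 0) (F := 0) (D := D) (K := K) hr one_pos hDK
    (by simp only [abs_zero]
        have : D / r ^ 4 * (K / r) = D * K / r ^ 5 := by field_simp
        rw [this]; positivity)
  simp only [zero_mul, sub_zero, ne_eq, OfNat.ofNat_ne_zero, not_false_eq_true, zero_pow,
    mul_zero, zero_add, one_mul, div_one, mul_one] at h2 h0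
  have e : (-1) * (Q * Y + V * Z) * r ^ 3 = -((Q * Y + V * Z) * r ^ 3) := by ring
  rw [e]
  have h3 := abs_sub (-((Q * Y + V * Z) * r ^ 3)) ((V * Y + Q * Z - F * X) * r ^ 3)
  rw [abs_neg] at h3
  have p1 : 0 ≤ (V ^ 2 + Q ^ 2) * r ^ 3 := by positivity
  have p2 : 0 ≤ (Y ^ 2 + Z ^ 2) * r ^ 3 := by positivity
  have p3 : 0 ≤ X ^ 2 * (1 / r) := by positivity
  have p4 : 0 ≤ 1 / r ^ 3 := by positivity
  have q1 := mul_nonneg hDK p1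
  have q2 := mul_nonneg hDK p2
  have q3 := mul_nonneg hDK p3
  have q4 := mul_nonneg hDK p4
  nlinarith

lemma top_bound {V Q Y Z F X : ℝ → ℝ} {ρ A T l D K EX N2 ε : ℝ} (hρ : 0 < ρ) (hρA : ρ ≤ A)
    (hT : 0 ≤ T) (hl : 0 < l) (hDK : 0 ≤ D * K)
    (cV : ContinuousOn V (uIcc ρ A)) (cQ : ContinuousOn Q (uIcc ρ A))
    (cY : ContinuousOn Y (uIcc ρ A)) (cZ : ContinuousOn Z (uIcc ρ A))
    (cF : ContinuousOn F (uIcc ρ A)) (cX : ContinuousOn X (uIcc ρ A))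
    (hF : ∀ a, ρ ≤ a → |F a| ≤ D / (a + T) ^ 4 * (K / (a + T)))
    (h1 : ∫ a in ρ..A, (V a ^ 2 + Q a ^ 2) * (a + T) ^ 3 ≤ ε)
    (h2 : ∫ a in ρ..A, (Y a ^ 2 + Z a ^ 2) * (a + T) ^ 3 ≤ EX)
    (h3 : ∫ a in ρ..A, X a ^ 2 * (1 / (a + T)) ≤ N2) :
    |∫ a in ρ..A, (V a * Y a + Q a * Z a - F a * X a) * (a + T) ^ 3| ≤
      1 / 2 * (1 / l) * ε + 1 / 2 * l * EX
      + 1 / 2 * (D * K) * (l * N2 + 1 / l * (1 / (2 * (ρ + T) ^ 2))) := by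
  have c1 : ContinuousOn (fun a : ℝ => 1 / (a + T)) (uIcc ρ A) := by
    intro a ha
    rw [uIcc_of_le hρA] at ha
    have : 0 < a + T := by linarith [ha.1]
    apply ContinuousAt.continuousWithinAt
    fun_prop (disch := positivity)
  have c3 : ContinuousOn (fun a : ℝ => 1 / (a + T) ^ 3) (uIcc ρ A) := by
    intro a ha
    rw [uIcc_of_le hρA] at ha
    have : 0 < a + T := by linarith [ha.1]
    apply ContinuousAt.continuousWithinAt
    fun_prop (disch := positivity)
  calc |∫ a in ρ..A, (V a * Y a + Q a * Z a - F a * X a) * (a + T) ^ 3|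
      ≤ ∫ a in ρ..A, |(V a * Y a + Q a * Z a - F a * X a) * (a + T) ^ 3| :=
        intervalIntegral.abs_integral_le_integral_abs hρA
    _ ≤ ∫ a in ρ..A, (1 / 2 * (1 / l) * ((V a ^ 2 + Q a ^ 2) * (a + T) ^ 3)
      + 1 / 2 * l * ((Y a ^ 2 + Z a ^ 2) * (a + T) ^ 3)
      + 1 / 2 * (D * K) * (l * (X a ^ 2 * (1 / (a + T))) + 1 / l * (1 / (a + T) ^ 3))) := by
        apply intervalIntegral.integral_mono_on hρA
        · apply ContinuousOn.intervalIntegrable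
          fun_prop
        · apply ContinuousOn.intervalIntegrable
          fun_prop
        · intro a ha
          exact pw1 (by linarith [ha.1]) hl hDK (hF a ha.1)
    _ = 1 / 2 * (1 / l) * (∫ a in ρ..A, (V a ^ 2 + Q a ^ 2) * (a + T) ^ 3)
      + 1 / 2 * l * (∫ a in ρ..A, (Y a ^ 2 + Z a ^ 2) * (a + T) ^ 3)
      + 1 / 2 * (D * K) * (l * (∫ a in ρ..A, X a ^ 2 * (1 / (a + T)))
        + 1 / l * ∫ a in ρ..A, 1 / (a + T) ^ 3) := by
        rw [intervalIntegral.integral_add, intervalIntegral.integral_add,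
          intervalIntegral.integral_const_mul, intervalIntegral.integral_const_mul,
          intervalIntegral.integral_const_mul, intervalIntegral.integral_add,
          intervalIntegral.integral_const_mul, intervalIntegral.integral_const_mul] <;>
        · apply ContinuousOn.intervalIntegrable
          fun_prop
    _ ≤ _ := by
        gcongr
        rw [intervalIntegral.integral_comp_add_right (fun r : ℝ => 1 / r ^ 3) T]
        exact int_inv3 (by linarith) (by linarith)

lemma src2_bound {ρ A t D M N2 : ℝ} {U V Q X : ℝ → ℝ} {p : ℕ} (hρ : 0 < ρ) (hρA : ρ ≤ A) (h1 : 0 ≤ t)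
    (hD : 0 ≤ D)
    (hcu : ContinuousOn U (uIcc ρ A)) (hcv : ContinuousOn V (uIcc ρ A))
    (hcq : ContinuousOn Q (uIcc ρ A)) (hcx : ContinuousOn X (uIcc ρ A))
    (hU : ∀ a, ρ ≤ a → |U a| ^ (p - 1) ≤ D / (a + t) ^ 4)
    (hE : ∫ a in ρ..A, (V a ^ 2 + Q a ^ 2) * (a + t) ^ 3 ≤ M)
    (hN : ∫ a in ρ..A, X a ^ 2 * (1 / (a + t)) ≤ N2) :
    |∫ a in ρ..A, (-1) * ((p * U a ^ (p - 1) * V a) * X a) * (a + t) ^ 3|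
      ≤ 1 / 2 * p * D * (M + N2) * (1 / (ρ + t) ^ 2) := by
  have hst : 0 < ρ + t := by linarith
  have c1 : ContinuousOn (fun a : ℝ => 1 / (a + t)) (uIcc ρ A) := by
    intro a ha
    rw [uIcc_of_le hρA] at ha
    have : 0 < a + t := by linarith [ha.1]
    apply ContinuousAt.continuousWithinAt
    fun_prop (disch := positivity)
  calc |∫ a in ρ..A, (-1) * ((p * U a ^ (p - 1) * V a) * X a) * (a + t) ^ 3|
      ≤ ∫ a in ρ..A, |(-1) * ((p * U a ^ (p - 1) * V a) * X a) * (a + t) ^ 3| :=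
        intervalIntegral.abs_integral_le_integral_abs hρA
    _ ≤ ∫ a in ρ..A, (1 / 2 * p * D * (1 / (ρ + t) ^ 2)) *
          ((V a ^ 2 + Q a ^ 2) * (a + t) ^ 3 + X a ^ 2 * (1 / (a + t))) := by
        apply intervalIntegral.integral_mono_on hρA
        · apply ContinuousOn.intervalIntegrable
          fun_prop
        · apply ContinuousOn.intervalIntegrable
          fun_prop
        · intro a ha
          have hr : 0 < a + t := by linarith [ha.1]
          have hu := hU a ha.1
          rw [abs_mul, abs_mul, abs_mul, abs_mul, abs_mul, abs_pow,
            abs_of_pos (by positivity : 0 < (a + t) ^ 3), abs_neg, abs_one, one_mul, Nat.abs_cast]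
          have k1 : |V a| * |X a| ≤ 1 / 2 * ((V a ^ 2 + Q a ^ 2) * (a + t) ^ 3 + X a ^ 2 * (1 / (a + t))) * (1 / (a + t)) := by
            rw [← sub_nonneg]
            have : 1 / 2 * ((V a ^ 2 + Q a ^ 2) * (a + t) ^ 3 + X a ^ 2 * (1 / (a + t))) * (1 / (a + t))
              - |V a| * |X a| = ((|V a| * (a + t) ^ 2 - |X a|) ^ 2 + Q a ^ 2 * (a + t) ^ 4) / (2 * (a + t) ^ 2) := by
              rw [← sq_abs (V a), ← sq_abs (X a)]; field_simp; ring
            rw [this]; positivity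
          calc (p:ℝ) * |U a| ^ (p - 1) * |V a| * |X a| * (a + t) ^ 3
              = (p * |U a| ^ (p - 1) * (a + t) ^ 3) * (|V a| * |X a|) := by ring
            _ ≤ (p * (D / (a + t) ^ 4) * (a + t) ^ 3) *
                (1 / 2 * ((V a ^ 2 + Q a ^ 2) * (a + t) ^ 3 + X a ^ 2 * (1 / (a + t))) * (1 / (a + t))) := by
                gcongr
            _ = (1 / 2 * p * D * (1 / (a + t) ^ 2)) *
                ((V a ^ 2 + Q a ^ 2) * (a + t) ^ 3 + X a ^ 2 * (1 / (a + t))) := by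
                field_simp
            _ ≤ _ := by
                gcongr
                exact ha.1
    _ = (1 / 2 * p * D * (1 / (ρ + t) ^ 2)) *
          ((∫ a in ρ..A, (V a ^ 2 + Q a ^ 2) * (a + t) ^ 3) + ∫ a in ρ..A, X a ^ 2 * (1 / (a + t))) := by
        rw [intervalIntegral.integral_const_mul, intervalIntegral.integral_add] <;>
        · apply ContinuousOn.intervalIntegrable
          fun_prop
    _ ≤ (1 / 2 * p * D * (1 / (ρ + t) ^ 2)) * (M + N2) := by
        gcongr
    _ = _ := by ring


lemma edge2 {V Q Y Z F X : ℝ → ℝ} {T A δ D K : ℝ} (hT : 0 ≤ T) (hA : 0 < A) (hDK : 0 ≤ D * K)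
    (cV : ContinuousOn V (uIcc 0 T)) (cQ : ContinuousOn Q (uIcc 0 T))
    (cY : ContinuousOn Y (uIcc 0 T)) (cZ : ContinuousOn Z (uIcc 0 T))
    (cX : ContinuousOn X (uIcc 0 T))
    (hF : ∀ t, 0 ≤ t → |F t| ≤ D / (A + t) ^ 4 * (K / (A + t)))
    (hJ : ∫ t in (0:ℝ)..T, ((V t ^ 2 + Q t ^ 2) * (A + t) ^ 3 + ((Y t ^ 2 + Z t ^ 2) * (A + t) ^ 3
      + X t ^ 2 * (1 / (A + t)) + 1 / (A + t) ^ 3)) < δ) :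
    |∫ t in (0:ℝ)..T, ((-1) * (Q t * Y t + V t * Z t) * (A + t) ^ 3 -
      (V t * Y t + Q t * Z t - F t * X t) * (A + t) ^ 3)| ≤ (1 + D * K) * δ := by
  have c1 : ContinuousOn (fun t : ℝ => 1 / (A + t)) (uIcc 0 T) := by
    intro a ha
    rw [uIcc_of_le hT] at ha
    have : 0 < A + a := by linarith [ha.1]
    apply ContinuousAt.continuousWithinAt
    fun_prop (disch := positivity)
  have c3 : ContinuousOn (fun t : ℝ => 1 / (A + t) ^ 3) (uIcc 0 T) := by
    intro a ha
    rw [uIcc_of_le hT] at ha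
    have : 0 < A + a := by linarith [ha.1]
    apply ContinuousAt.continuousWithinAt
    fun_prop (disch := positivity)
  have h1 : ‖∫ t in (0:ℝ)..T, ((-1) * (Q t * Y t + V t * Z t) * (A + t) ^ 3 -
      (V t * Y t + Q t * Z t - F t * X t) * (A + t) ^ 3)‖ ≤
      ∫ t in (0:ℝ)..T, (1 + D * K) * ((V t ^ 2 + Q t ^ 2) * (A + t) ^ 3 +
      ((Y t ^ 2 + Z t ^ 2) * (A + t) ^ 3 + X t ^ 2 * (1 / (A + t)) + 1 / (A + t) ^ 3)) := by
    apply intervalIntegral.norm_integral_le_of_norm_le hT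
    · filter_upwards with t ht
      exact pw2 (by linarith [ht.1]) hDK (hF t ht.1.le)
    · apply ContinuousOn.intervalIntegrable
      fun_prop
  rw [intervalIntegral.integral_const_mul] at h1
  refine h1.trans ?_
  gcongr

lemma bilin {p : ℕ} {R : ℝ} {u v q vt vr qr : ℝ → ℝ → ℝ} (hS : Sol p R u v q vt vr qr)
    (hR : 0 < R) (hp : 1 ≤ p) {ρ K D A1 N2 EX : ℝ} {η : ℝ → ℝ} {X Y Z Yt Yr Zr : ℝ → ℝ → ℝ}
    (hρ : R < ρ) (hK : 0 < K) (hD : 0 ≤ D)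
    (hE : EB v q ρ (K ^ 2))
    (hvan : ∀ ε > 0, ∃ T0, 0 ≤ T0 ∧ ∀ T ≥ T0, ∀ A ≥ ρ,
      ∫ a in ρ..A, (v T (a + T) ^ 2 + q T (a + T) ^ 2) * (a + T) ^ 3 ≤ ε)
    (hd0 : ∀ r, R < r → u 0 r = 0)
    (hDb : ∀ t r, 0 ≤ t → ρ + t ≤ r → |u t r| ^ (p - 1) ≤ D / r ^ 4)
    (hF : TestF ρ η N2 EX X Y Z Yt Yr Zr) (hA1 : ρ ≤ A1) (hη : ∀ s, A1 ≤ s → η s = 0) :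
    |∫ a in ρ..A1, v 0 a * a ^ 2 * η a| ≤ 1 / 2 * p * D * (K ^ 2 + N2) * (1 / ρ) := by
  have hρ0 : 0 < ρ := by linarith
  have hDK : 0 ≤ D * K := by positivity
  have hN0 : 0 ≤ N2 := by simpa using hF.hN 0 le_rfl ρ le_rfl
  have hE0 : 0 ≤ EX := by simpa using hF.hEX 0 le_rfl ρ le_rfl
  have hFb : ∀ t, 0 ≤ t → ∀ a, ρ ≤ a → |u t (a + t) ^ p| ≤ D / (a + t) ^ 4 * (K / (a + t)) := by
    intro t h1 a ha
    have hr : 0 < a + t := by linarith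
    have hb1 := hDb t (a + t) h1 (by linarith)
    have hb2 := u_bound hS hR hρ hK hE hd0 h1 (r := a + t) (by linarith)
    rw [abs_pow, ← Nat.sub_add_cancel hp, pow_succ]
    exact mul_le_mul hb1 hb2 (abs_nonneg _) (by positivity)
  have hin : ∀ t, 0 ≤ t → ∀ a, ρ ≤ a → R + |t| < a + 1 * t := by
    intro t ht a ha; rw [abs_of_nonneg ht]; linarith
  -- the identity on a bounded cone
  have key : ∀ T, 0 ≤ T → ∀ δ > 0, ∃ A, A1 ≤ A ∧ ρ ≤ A ∧
      |∫ a in ρ..A1, v 0 a * a ^ 2 * η a| ≤ 1 / 2 * p * D * (K ^ 2 + N2) * (1 / ρ)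
      + (1 + D * K) * δ + |∫ a in ρ..A, (v T (a + T) * Y T (a + T) + q T (a + T) * Z T (a + T)
        - u T (a + T) ^ p * X T (a + T)) * (a + T) ^ 3| := by
    intro T hT δ hδ
    have ccX : ∀ g : ℝ → ℝ → ℝ, (∀ t r, 0 ≤ t → 0 < r → ∃ a b, HPD g a b t r) →
        (ContinuousOn (fun z : ℝ × ℝ => g z.1 (z.2 + z.1)) (Icc 0 T ×ˢ Ici ρ)) ∧
        (∀ A, ρ ≤ A → ContinuousOn (fun t => g t (A + t)) (uIcc 0 T)) := by
      intro g hg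
      have hc : ContinuousOn (fun z : ℝ × ℝ => g z.1 (z.2 + z.1)) (Icc 0 T ×ˢ Ici ρ) := by
        rintro ⟨t, a⟩ ⟨h1, h2⟩
        have h2' : ρ ≤ a := h2
        obtain ⟨_, _, hh⟩ := hg t (a + t) h1.1 (by linarith [h1.1])
        have c0 : ContinuousAt (fun z : ℝ × ℝ => (z.1, z.2 + z.1)) (t, a) := by fun_prop
        exact (ContinuousAt.comp (f := fun z : ℝ × ℝ => (z.1, z.2 + z.1)) hh.cont c0).continuousWithinAt
      refine ⟨hc, fun A hA => ?_⟩
      refine ContinuousOn.comp (f := fun t : ℝ => (t, A)) hc (by fun_prop) ?_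
      intro t ht
      rw [uIcc_of_le hT] at ht
      exact ⟨ht, hA⟩
    have cX := ccX X (fun t r h1 h2 => ⟨_, _, hF.hX t r h1 h2⟩)
    have cY := ccX Y (fun t r h1 h2 => ⟨_, _, hF.hY t r h1 h2⟩)
    have cZ := ccX Z (fun t r h1 h2 => ⟨_, _, hF.hZ t r h1 h2⟩)
    have c1 : ContinuousOn (fun z : ℝ × ℝ => 1 / (z.2 + z.1)) (Icc 0 T ×ˢ Ici ρ) := by
      rintro ⟨t, a⟩ ⟨h1, h2⟩
      have h2' : ρ ≤ a := h2
      have : 0 < a + t := by linarith [h1.1]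
      apply ContinuousAt.continuousWithinAt
      fun_prop (disch := positivity)
    have c3 : ContinuousOn (fun z : ℝ × ℝ => 1 / (z.2 + z.1) ^ 3) (Icc 0 T ×ˢ Ici ρ) := by
      rintro ⟨t, a⟩ ⟨h1, h2⟩
      have h2' : ρ ≤ a := h2
      have : 0 < a + t := by linarith [h1.1]
      apply ContinuousAt.continuousWithinAt
      fun_prop (disch := positivity)
    have lineX : ∀ g : ℝ → ℝ → ℝ, (∀ t r, 0 ≤ t → 0 < r → ∃ a b, HPD g a b t r) →
        ∀ t, 0 ≤ t → ∀ A, ρ ≤ A → ContinuousOn (fun a => g t (a + t)) (uIcc ρ A) := by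
      intro g hg t ht A hA a ha
      rw [uIcc_of_le hA] at ha
      obtain ⟨_, _, hh⟩ := hg t (a + t) ht (by linarith [ha.1])
      have c0 : ContinuousAt (fun a : ℝ => (t, a + t)) a := by fun_prop
      exact (ContinuousAt.comp (f := fun a : ℝ => (t, a + t)) hh.cont c0).continuousWithinAt
    obtain ⟨A, hA, hρA, hJ⟩ := edge_small hS hR hρ hT hE A1 δ hδ
      (fun t a => (Y t (a + t) ^ 2 + Z t (a + t) ^ 2) * (a + t) ^ 3
        + X t (a + t) ^ 2 * (1 / (a + t)) + 1 / (a + t) ^ 3) (EX + N2 + 1 / (2 * ρ ^ 2))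
      (((((cY.1.pow 2).add (cZ.1.pow 2)).mul (by fun_prop)).add ((cX.1.pow 2).mul c1)).add c3)
      (by
        intro t h1 _ a ha
        have : 0 < a + t := by linarith
        positivity)
      (by
        intro t h1 h2 B hB
        have lX := lineX X (fun t r h1 h2 => ⟨_, _, hF.hX t r h1 h2⟩) t h1 B hB
        have lY := lineX Y (fun t r h1 h2 => ⟨_, _, hF.hY t r h1 h2⟩) t h1 B hB
        have lZ := lineX Z (fun t r h1 h2 => ⟨_, _, hF.hZ t r h1 h2⟩) t h1 B hB
        have d1 : ContinuousOn (fun a : ℝ => 1 / (a + t)) (uIcc ρ B) := by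
          intro a ha
          rw [uIcc_of_le hB] at ha
          have : 0 < a + t := by linarith [ha.1]
          apply ContinuousAt.continuousWithinAt
          fun_prop (disch := positivity)
        have d3 : ContinuousOn (fun a : ℝ => 1 / (a + t) ^ 3) (uIcc ρ B) := by
          intro a ha
          rw [uIcc_of_le hB] at ha
          have : 0 < a + t := by linarith [ha.1]
          apply ContinuousAt.continuousWithinAt
          fun_prop (disch := positivity)
        have i1 : IntervalIntegrable (fun a => (Y t (a + t) ^ 2 + Z t (a + t) ^ 2) * (a + t) ^ 3)
          volume ρ B := (((lY.pow 2).add (lZ.pow 2)).mul (by fun_prop)).intervalIntegrable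
        have i2 : IntervalIntegrable (fun a => X t (a + t) ^ 2 * (1 / (a + t)))
          volume ρ B := ((lX.pow 2).mul d1).intervalIntegrable
        rw [intervalIntegral.integral_add (i1.add i2) d3.intervalIntegrable,
          intervalIntegral.integral_add i1 i2]
        have g1 := hF.hEX t h1 B hB
        have g2 := hF.hN t h1 B hB
        have g3 : ∫ a in ρ..B, 1 / (a + t) ^ 3 ≤ 1 / (2 * ρ ^ 2) := by
          rw [intervalIntegral.integral_comp_add_right (fun r : ℝ => 1 / r ^ 3) t]
          refine (int_inv3 (by linarith) (by linarith)).trans ?_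
          gcongr
          linarith
        linarith)
    refine ⟨A, hA, hρA, ?_⟩
    have hdiv := div_cone2
      (fun t r => (v t r * Y t r + q t r * Z t r - u t r ^ p * X t r) * r ^ 3)
      (fun t r => (-1) * (q t r * Y t r + v t r * Z t r) * r ^ 3)
      (fun t r => (-1) * ((p * u t r ^ (p - 1) * v t r) * X t r) * r ^ 3) 1 ρ A T hT hρA
      (by
        intro t h1 _ a h3 _
        have hr : 0 < a + 1 * t := by linarith
        have hh := hin t h1 a h3
        refine ⟨_, _, _, _,
          ((((hS.hv _ _ hh).mul (hF.hY _ _ h1 hr)).add ((hS.hq _ _ hh).mul (hF.hZ _ _ h1 hr))).sub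
          (((hS.hu _ _ hh).comp (F := fun x => x ^ p) (hasDerivAt_pow p _)).mul
            (hF.hX _ _ h1 hr))).mul (HPD.r3 _ _),
          ((HPD.const (-1) _ _).mul (((hS.hq _ _ hh).mul (hF.hY _ _ h1 hr)).add
          ((hS.hv _ _ hh).mul (hF.hZ _ _ h1 hr)))).mul (HPD.r3 _ _), ?_⟩
        have he := hS.heq _ _ hh
        have he2 := hF.heq _ _ h1 hr
        rw [he2, ← he]
        generalize a + 1 * t = r at *
        field_simp
        ring)
      (by
        intro t h1 h2 a h3 h4
        have hr : 0 < a + 1 * t := by linarith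
        have c1 := (hS.hu _ _ (hin t h1 a h3)).cont
        have c2 := (hS.hv _ _ (hin t h1 a h3)).cont
        have c3 := (hF.hX _ _ h1 hr).cont
        fun_prop)
    simp only [one_mul] at hdiv
    have hsrc : |∫ t in (0:ℝ)..T, ∫ a in ρ..A,
        (-1) * ((p * u t (a + t) ^ (p - 1) * v t (a + t)) * X t (a + t)) * (a + t) ^ 3|
        ≤ 1 / 2 * p * D * (K ^ 2 + N2) * (1 / ρ) := by
      apply int_w hρ0 hT (by positivity)
      intro t h1 h2
      obtain ⟨c1, c2, c3⟩ := line_on hS hρ h1 hρA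
      refine src2_bound (U := fun a => u t (a + t)) (V := fun a => v t (a + t)) (Q := fun a => q t (a + t))
        (X := fun a => X t (a + t)) hρ0 hρA h1 hD c1 c2 c3
        (lineX X (fun t r h1 h2 => ⟨_, _, hF.hX t r h1 h2⟩) t h1 A hρA) ?_ (hE t h1 A hρA)
        (hF.hN t h1 A hρA)
      intro a ha
      exact hDb t (a + t) h1 (by linarith)
    have hbot : ∫ a in ρ..A, (v 0 a * Y 0 a + q 0 a * Z 0 a - u 0 a ^ p * X 0 a) * a ^ 3
        = - ∫ a in ρ..A1, v 0 a * a ^ 2 * η a := by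
      have e1 : ∫ a in ρ..A, (v 0 a * Y 0 a + q 0 a * Z 0 a - u 0 a ^ p * X 0 a) * a ^ 3
        = ∫ a in ρ..A, -(v 0 a * a ^ 2 * η a) := by
        apply intervalIntegral.integral_congr_ae
        filter_upwards with a ha
        rw [uIoc_of_le hρA] at ha
        have h1 : R < a := by linarith [ha.1]
        rw [q_zero hS hd0 h1, hd0 a h1, hF.hin a ha.1, zero_pow (by omega)]
        have : a ≠ 0 := by linarith
        field_simp
        ring
      have hi0 : ∀ b, ρ ≤ b → IntervalIntegrable (fun a => v 0 a * a ^ 2 * η a) volume ρ b := by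
        intro b hb
        have hi : IntervalIntegrable (fun a => -(v 0 a * Y 0 a) * a ^ 3) volume ρ b := by
          apply ContinuousOn.intervalIntegrable
          have l1 := (line_on hS hρ (le_refl 0) hb).2.1
          have l2 := lineX Y (fun t r h1 h2 => ⟨_, _, hF.hY t r h1 h2⟩) 0 le_rfl b hb
          simp only [add_zero] at l1 l2
          exact (l1.mul l2).neg.mul (by fun_prop)
        refine hi.congr_ae ?_
        rw [uIoc_of_le hb]
        filter_upwards [ae_restrict_mem measurableSet_Ioc] with a ha
        rw [hF.hin a ha.1]
        have : a ≠ 0 := by linarith [ha.1]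
        field_simp
      rw [e1, intervalIntegral.integral_neg,
        ← intervalIntegral.integral_add_adjacent_intervals (hi0 A1 hA1)
          ((hi0 A1 hA1).symm.trans (hi0 A hρA))]
      have : ∫ a in A1..A, v 0 a * a ^ 2 * η a = 0 := by
        rw [intervalIntegral.integral_congr (g := fun _ => (0:ℝ))]
        · simp
        · intro a ha
          rw [uIcc_of_le hA] at ha
          simp [hη a ha.1]
      rw [this, add_zero]
    have hleft : ∫ t in (0:ℝ)..T, ((-1) * (q t (ρ + t) * Y t (ρ + t) + v t (ρ + t) * Z t (ρ + t))
        * (ρ + t) ^ 3 - (v t (ρ + t) * Y t (ρ + t) + q t (ρ + t) * Z t (ρ + t)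
        - u t (ρ + t) ^ p * X t (ρ + t)) * (ρ + t) ^ 3) = 0 := by
      rw [intervalIntegral.integral_congr (g := fun _ => (0:ℝ))]
      · simp
      · intro t ht
        rw [uIcc_of_le hT] at ht
        simp [hF.hX0 t ht.1, hF.hY0 t ht.1, hF.hZ0 t ht.1]
    have hright : |∫ t in (0:ℝ)..T, ((-1) * (q t (A + t) * Y t (A + t) + v t (A + t) * Z t (A + t))
        * (A + t) ^ 3 - (v t (A + t) * Y t (A + t) + q t (A + t) * Z t (A + t)
        - u t (A + t) ^ p * X t (A + t)) * (A + t) ^ 3)| ≤ (1 + D * K) * δ := by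
      obtain ⟨_, c2, c3⟩ := cont_edge hS (A := A) (by linarith) hT
      exact edge2 (V := fun t => v t (A + t)) (Q := fun t => q t (A + t)) (Y := fun t => Y t (A + t))
        (Z := fun t => Z t (A + t)) (X := fun t => X t (A + t)) (F := fun t => u t (A + t) ^ p)
        hT (by linarith) hDK c2 c3 (cY.2 A hρA) (cZ.2 A hρA) (cX.2 A hρA)
        (fun t ht => hFb t ht A hρA) hJ
    rw [hleft, hbot] at hdiv
    rw [abs_le] at hsrc hright ⊢
    have t1 := neg_abs_le (∫ a in ρ..A, (v T (a + T) * Y T (a + T) + q T (a + T) * Z T (a + T)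
        - u T (a + T) ^ p * X T (a + T)) * (a + T) ^ 3)
    have t2 := le_abs_self (∫ a in ρ..A, (v T (a + T) * Y T (a + T) + q T (a + T) * Z T (a + T)
        - u T (a + T) ^ p * X T (a + T)) * (a + T) ^ 3)
    constructor <;> linarith [hsrc.1, hsrc.2, hright.1, hright.2]
  -- pass to the limit
  apply le_of_forall_pos_le_add
  intro δ hδ
  set W := EX + D * K * N2 + 1 with hW
  have hWp : 0 < W := by positivity
  set l := δ / (2 * W) with hl
  have hlp : 0 < l := by positivity
  obtain ⟨T0, hT0, hT⟩ := hvan (l * (δ / 4)) (by positivity)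
  set T := max T0 (D * K / (l * δ) * 2 + 1) with hTdef
  have hT1 : 1 ≤ T := le_trans (by have : 0 ≤ D * K / (l * δ) * 2 := by positivity
                                   linarith) (le_max_right _ _)
  obtain ⟨A, hA, hρA, hk⟩ := key T (by linarith) (δ / (4 * (1 + D * K))) (by positivity)
  have lineX : ∀ g : ℝ → ℝ → ℝ, (∀ t r, 0 ≤ t → 0 < r → ∃ a b, HPD g a b t r) →
      ContinuousOn (fun a => g T (a + T)) (uIcc ρ A) := by
    intro g hg a ha
    rw [uIcc_of_le hρA] at ha
    obtain ⟨_, _, hh⟩ := hg T (a + T) (by linarith) (by linarith [ha.1])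
    have c0 : ContinuousAt (fun a : ℝ => (T, a + T)) a := by fun_prop
    exact (ContinuousAt.comp (f := fun a : ℝ => (T, a + T)) hh.cont c0).continuousWithinAt
  obtain ⟨c1, c2, c3⟩ := line_on hS hρ (t := T) (by linarith) hρA
  have htop := top_bound (V := fun a => v T (a + T)) (Q := fun a => q T (a + T))
    (Y := fun a => Y T (a + T)) (Z := fun a => Z T (a + T)) (X := fun a => X T (a + T))
    (F := fun a => u T (a + T) ^ p) hρ0 hρA (by linarith) hlp hDK c2 c3
    (lineX Y (fun t r h1 h2 => ⟨_, _, hF.hY t r h1 h2⟩))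
    (lineX Z (fun t r h1 h2 => ⟨_, _, hF.hZ t r h1 h2⟩)) (c1.pow p)
    (lineX X (fun t r h1 h2 => ⟨_, _, hF.hX t r h1 h2⟩))
    (fun a ha => hFb T (by linarith) a ha) (hT T (le_max_left _ _) A hρA)
    (hF.hEX T (by linarith) A hρA) (hF.hN T (by linarith) A hρA)
  have e1 : (1 + D * K) * (δ / (4 * (1 + D * K))) = δ / 4 := by
    have : 0 < 1 + D * K := by positivity
    field_simp
  have e2 : 1 / 2 * (1 / l) * (l * (δ / 4)) = δ / 8 := by field_simp; norm_num
  have e3 : 1 / 2 * l * EX + 1 / 2 * (D * K) * (l * N2) ≤ δ / 4 := by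
    have : 1 / 2 * l * EX + 1 / 2 * (D * K) * (l * N2) = 1 / 2 * l * (W - 1) := by rw [hW]; ring
    rw [this]
    have : l * W = δ / 2 := by rw [hl]; field_simp
    nlinarith
  have e4 : 1 / 2 * (D * K) * (1 / l * (1 / (2 * (ρ + T) ^ 2))) ≤ δ / 8 := by
    have h1 : D * K / (l * δ) * 2 ≤ (ρ + T) ^ 2 := by
      have : D * K / (l * δ) * 2 + 1 ≤ T := le_max_right _ _
      nlinarith
    have h2 : D * K * 2 ≤ (ρ + T) ^ 2 * (l * δ) := by
      have : D * K / (l * δ) * 2 * (l * δ) = D * K * 2 := by field_simp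
      rw [← this]; gcongr
    have h3 : 1 / 2 * (D * K) * (1 / l * (1 / (2 * (ρ + T) ^ 2))) = (D * K * 2) / (8 * (l * (ρ + T) ^ 2)) := by
      field_simp; ring
    rw [h3, div_le_iff₀ (by positivity)]
    linarith
  rw [e1] at hk
  have e5 : 1 / 2 * (D * K) * (l * N2 + 1 / l * (1 / (2 * (ρ + T) ^ 2))) =
    1 / 2 * (D * K) * (l * N2) + 1 / 2 * (D * K) * (1 / l * (1 / (2 * (ρ + T) ^ 2))) := by ring
  rw [e2, e5] at htop
  linarith


noncomputable def Phi (h w : ℝ → ℝ) (t r : ℝ) : ℝ :=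
  ∫ θ in (0:ℝ)..(Real.pi / 2), h (r * Real.sin θ - t) * w θ

lemma phi_cont {h w : ℝ → ℝ} (hh : Continuous h) (hw : Continuous w) :
    Continuous (fun z : ℝ × ℝ => Phi h w z.1 z.2) := by
  unfold Phi
  apply intervalIntegral.continuous_parametric_intervalIntegral_of_continuous'
  unfold Function.uncurry
  fun_prop

lemma phi_hpd {h h1 w : ℝ → ℝ} (hd : ∀ x, HasDerivAt h (h1 x) x) (hc : Continuous h1)
    (hw : Continuous w) (t r : ℝ) :
    HPD (Phi h w) (-Phi h1 w t r) (Phi h1 (fun θ => w θ * Real.sin θ) t r) t r := by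
  have hhc : Continuous h := continuous_iff_continuousAt.2 (fun x => (hd x).continuousAt)
  obtain ⟨B, hB⟩ := (isCompact_Icc (a := -(|t| + |r| + 2)) (b := |t| + |r| + 2)).exists_bound_of_continuousOn
    hc.continuousOn
  obtain ⟨W, hW⟩ := (isCompact_Icc (a := (0:ℝ)) (b := Real.pi / 2)).exists_bound_of_continuousOn
    hw.continuousOn
  have hpi : (0:ℝ) ≤ Real.pi / 2 := by positivity
  set L : ℝ × ℝ → ℝ → (ℝ × ℝ →L[ℝ] ℝ) := fun z θ =>
    (-(h1 (z.2 * Real.sin θ - z.1) * w θ)) • ContinuousLinearMap.fst ℝ ℝ ℝ +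
    (h1 (z.2 * Real.sin θ - z.1) * (w θ * Real.sin θ)) • ContinuousLinearMap.snd ℝ ℝ ℝ with hL
  have hLc : Continuous (L (t, r)) := by
    rw [hL]
    fun_prop
  have key := intervalIntegral.hasFDerivAt_integral_of_dominated_of_fderiv_le (𝕜 := ℝ) (μ := volume)
    (a := 0) (b := Real.pi / 2)
    (F := fun (z : ℝ × ℝ) θ => h (z.2 * Real.sin θ - z.1) * w θ) (F' := L) (x₀ := (t, r))
    (s := Metric.ball (t, r) 1) (bound := fun _ => B * W + B * W) (Metric.ball_mem_nhds _ one_pos)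
    (Eventually.of_forall (fun z => Continuous.aestronglyMeasurable (by fun_prop)))
    (Continuous.intervalIntegrable (by fun_prop) _ _)
    hLc.aestronglyMeasurable
    (by
      filter_upwards with θ hθ z hz
      rw [uIoc_of_le hpi] at hθ
      rw [Metric.mem_ball, Prod.dist_eq, max_lt_iff, Real.dist_eq, Real.dist_eq] at hz
      have hs1 := Real.abs_sin_le_one θ
      have hx : |z.2 * Real.sin θ - z.1| ≤ |t| + |r| + 2 := by
        have a1 : |z.2 * Real.sin θ| ≤ |z.2| := by
          rw [abs_mul]; exact mul_le_of_le_one_right (abs_nonneg _) hs1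
        have a2 := abs_sub (z.2 * Real.sin θ) z.1
        have a3 : |z.2| ≤ |z.2 - r| + |r| := by simpa using abs_add_le (z.2 - r) r
        have a4 : |z.1| ≤ |z.1 - t| + |t| := by simpa using abs_add_le (z.1 - t) t
        simp only at hz
        linarith [hz.1, hz.2]
      have b1 := hB _ (abs_le.1 hx)
      have b2 := hW θ ⟨hθ.1.le, hθ.2⟩
      rw [Real.norm_eq_abs] at b1 b2
      have c1 : |h1 (z.2 * Real.sin θ - z.1) * w θ| ≤ B * W := by
        rw [abs_mul]; exact mul_le_mul b1 b2 (abs_nonneg _) ((abs_nonneg _).trans b1)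
      have c2 : |h1 (z.2 * Real.sin θ - z.1) * (w θ * Real.sin θ)| ≤ B * W := by
        rw [← mul_assoc, abs_mul]
        exact (mul_le_of_le_one_right (abs_nonneg _) hs1).trans c1
      rw [hL]
      refine (norm_add_le _ _).trans (add_le_add ?_ ?_)
      · rw [norm_smul, norm_neg, Real.norm_eq_abs]
        exact (mul_le_of_le_one_right (abs_nonneg _) (ContinuousLinearMap.norm_fst_le ℝ ℝ ℝ)).trans c1
      · rw [norm_smul, Real.norm_eq_abs]
        exact (mul_le_of_le_one_right (abs_nonneg _) (ContinuousLinearMap.norm_snd_le ℝ ℝ ℝ)).trans c2)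
    (by simp)
    (by
      filter_upwards with θ hθ z hz
      have f1 : HasFDerivAt (fun z : ℝ × ℝ => z.2 * Real.sin θ - z.1)
        (Real.sin θ • ContinuousLinearMap.snd ℝ ℝ ℝ - ContinuousLinearMap.fst ℝ ℝ ℝ) z :=
        (hasFDerivAt_snd.mul_const' (Real.sin θ)).sub hasFDerivAt_fst |>.congr_fderiv (by
          ext <;> simp)
      have f2 := ((hd _).comp_hasFDerivAt z f1).mul_const (w θ)
      refine f2.congr_fderiv ?_
      rw [hL]
      ext <;> simp <;> ring)
  unfold HPD
  refine key.congr_fderiv ?_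
  have i1 : IntervalIntegrable (fun θ => (-(h1 (r * Real.sin θ - t) * w θ))) volume 0 (Real.pi / 2) :=
    Continuous.intervalIntegrable (by fun_prop) _ _
  have i2 : IntervalIntegrable (fun θ => (h1 (r * Real.sin θ - t) * (w θ * Real.sin θ))) volume 0 (Real.pi / 2) :=
    Continuous.intervalIntegrable (by fun_prop) _ _
  rw [hL]
  simp only
  rw [intervalIntegral.integral_add, intervalIntegral.integral_smul_const,
    intervalIntegral.integral_smul_const, intervalIntegral.integral_neg]
  · rfl
  · exact Continuous.intervalIntegrable (by fun_prop) _ _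
  · exact Continuous.intervalIntegrable (by fun_prop) _ _

lemma phi_zero {h w : ℝ → ℝ} {t r ρ : ℝ} (hρ : 0 ≤ ρ) (ht : 0 ≤ t) (hr : r ≤ ρ + t)
    (hz : ∀ x, x ≤ ρ → h x = 0) : Phi h w t r = 0 := by
  unfold Phi
  rw [intervalIntegral.integral_congr (g := fun _ => (0:ℝ))]
  · simp
  · intro θ hθ
    rw [uIcc_of_le (by positivity)] at hθ
    have h1 : 0 ≤ Real.sin θ := Real.sin_nonneg_of_nonneg_of_le_pi hθ.1 (by linarith [hθ.2, Real.pi_pos])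
    have h2 := Real.sin_le_one θ
    simp only
    rw [hz, zero_mul]
    rcases le_total 0 r with h | h <;> nlinarith

lemma der_zero {f f1 : ℝ → ℝ} {ρ : ℝ} (hd : ∀ x, HasDerivAt f (f1 x) x)
    (hz : ∀ x, x ≤ ρ → f x = 0) : ∀ x, x ≤ ρ → f1 x = 0 := by
  intro x hx
  have h1 := (hd x).hasDerivWithinAt (s := Iic ρ)
  have h2 : HasDerivWithinAt f 0 (Iic ρ) x :=
    (hasDerivWithinAt_const x (Iic ρ) (0:ℝ)).congr (fun y hy => hz y hy) (hz x hx)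
  exact (uniqueDiffOn_Iic ρ x hx).eq_deriv _ h1 h2

-- integration by parts
lemma phi_ibp {h h1 c c1 : ℝ → ℝ} (hd : ∀ x, HasDerivAt h (h1 x) x) (hc : Continuous h1)
    (hcd : ∀ x, HasDerivAt c (c1 x) x) (hc1 : Continuous c1) (hcz : c (Real.pi / 2) = 0) {t r : ℝ}
    (hz : h (-t) = 0) :
    r * Phi h1 (fun θ => c θ * Real.cos θ) t r = - Phi h c1 t r := by
  have hhc : Continuous h := continuous_iff_continuousAt.2 (fun x => (hd x).continuousAt)
  have hcc : Continuous c := continuous_iff_continuousAt.2 (fun x => (hcd x).continuousAt)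
  have hder : ∀ θ ∈ uIcc 0 (Real.pi / 2), HasDerivAt (fun θ => h (r * Real.sin θ - t) * c θ)
      (r * (h1 (r * Real.sin θ - t) * (c θ * Real.cos θ)) + h (r * Real.sin θ - t) * c1 θ) θ := by
    intro θ _
    have f1 : HasDerivAt (fun θ => r * Real.sin θ - t) (r * Real.cos θ) θ :=
      ((Real.hasDerivAt_sin θ).const_mul r).sub_const t
    refine (((hd _).comp θ f1).mul (hcd θ)).congr_deriv ?_
    simp only [Function.comp]
    ring
  have h2 := intervalIntegral.integral_eq_sub_of_hasDerivAt hder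
    (Continuous.intervalIntegrable (by fun_prop) _ _)
  rw [intervalIntegral.integral_add (Continuous.intervalIntegrable (by fun_prop) _ _)
    (Continuous.intervalIntegrable (by fun_prop) _ _), intervalIntegral.integral_const_mul] at h2
  simp only [hcz, Real.sin_zero, mul_zero, zero_sub, hz, zero_mul, sub_zero] at h2
  unfold Phi
  linarith


noncomputable def Wn (n : ℕ) : ℝ := ∫ θ in (0:ℝ)..(Real.pi / 2), Real.sin θ ^ n

lemma wallis (n : ℕ) : Wn n * Wn (n + 1) = Real.pi / (2 * (n + 1)) := by
  induction n with
  | zero => simp [Wn]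
  | succ n ih =>
    have h : Wn (n + 1 + 1) = (n + 1) / (n + 2) * Wn n := by
      unfold Wn
      rw [show n + 1 + 1 = n + 2 from rfl, integral_sin_pow]
      simp
    rw [h]
    have : Wn (n + 1) * ((n + 1) / (n + 2) * Wn n) = (n + 1) / (n + 2) * (Wn n * Wn (n + 1)) := by ring
    rw [this, ih]
    push_cast
    field_simp
    ring

noncomputable def LL (G : ℝ → ℝ) : ℝ :=
  (∫ θ in (0:ℝ)..(Real.pi / 2), (∫ φ in (0:ℝ)..(Real.pi / 2), G (Real.sin θ * Real.sin φ)) * Real.sin θ)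
   - Real.pi / 2 * ∫ x in (0:ℝ)..1, G x

lemma LL_inner {G : ℝ → ℝ} (hG : Continuous G) :
    Continuous (fun θ => ∫ φ in (0:ℝ)..(Real.pi / 2), G (Real.sin θ * Real.sin φ)) := by
  apply intervalIntegral.continuous_parametric_intervalIntegral_of_continuous'
  unfold Function.uncurry
  fun_prop

lemma LL_sub {G H : ℝ → ℝ} (hG : Continuous G) (hH : Continuous H) :
    LL (fun x => G x - H x) = LL G - LL H := by
  unfold LL
  have cG := LL_inner hG
  have cH := LL_inner hH
  have e1 : ∀ θ, ∫ φ in (0:ℝ)..(Real.pi / 2), (G (Real.sin θ * Real.sin φ) - H (Real.sin θ * Real.sin φ)) =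
    (∫ φ in (0:ℝ)..(Real.pi / 2), G (Real.sin θ * Real.sin φ)) -
    ∫ φ in (0:ℝ)..(Real.pi / 2), H (Real.sin θ * Real.sin φ) := by
    intro θ
    rw [intervalIntegral.integral_sub] <;> exact Continuous.intervalIntegrable (by fun_prop) _ _
  simp_rw [e1, sub_mul]
  rw [intervalIntegral.integral_sub (Continuous.intervalIntegrable (by fun_prop) _ _)
    (Continuous.intervalIntegrable (by fun_prop) _ _),
    intervalIntegral.integral_sub (Continuous.intervalIntegrable (by fun_prop) _ _)
    (Continuous.intervalIntegrable (by fun_prop) _ _)]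
  ring

lemma LL_add {G H : ℝ → ℝ} (hG : Continuous G) (hH : Continuous H) :
    LL (fun x => G x + H x) = LL G + LL H := by
  have h := LL_sub (G := fun x => G x + H x) (H := H) (by fun_prop) hH
  simp only [add_sub_cancel_right] at h
  linarith

lemma LL_poly (P : Polynomial ℝ) : LL (fun x => P.eval x) = 0 := by
  induction P using Polynomial.induction_on' with
  | add p q hp hq =>
    simp only [Polynomial.eval_add]
    rw [LL_add p.continuous q.continuous, hp, hq, add_zero]
  | monomial n a =>
    simp only [Polynomial.eval_monomial]
    unfold LL
    have e1 : ∀ θ, (∫ φ in (0:ℝ)..(Real.pi / 2), a * (Real.sin θ * Real.sin φ) ^ n) * Real.sin θ =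
      a * Wn n * Real.sin θ ^ (n + 1) := by
      intro θ
      simp_rw [mul_pow]
      rw [intervalIntegral.integral_const_mul, intervalIntegral.integral_const_mul]
      unfold Wn
      ring
    simp_rw [e1]
    rw [intervalIntegral.integral_const_mul, intervalIntegral.integral_const_mul, integral_pow]
    have := wallis n
    change a * Wn n * Wn (n + 1) - _ = 0
    rw [mul_assoc, this]
    simp
    field_simp
    ring

lemma LL_bound {G : ℝ → ℝ} {ε : ℝ} (hb : ∀ x ∈ Icc (0:ℝ) 1, |G x| ≤ ε) :
    |LL G| ≤ (Real.pi / 2 * (Real.pi / 2) + Real.pi / 2) * ε := by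
  have hpi := Real.pi_pos
  have hε : 0 ≤ ε := (abs_nonneg _).trans (hb 0 ⟨le_rfl, zero_le_one⟩)
  have hs : ∀ θ ∈ uIoc (0:ℝ) (Real.pi / 2), 0 ≤ Real.sin θ ∧ Real.sin θ ≤ 1 := by
    intro θ hθ
    rw [uIoc_of_le (by positivity)] at hθ
    exact ⟨Real.sin_nonneg_of_nonneg_of_le_pi hθ.1.le (by linarith [hθ.2]), Real.sin_le_one _⟩
  have h1 : ‖∫ x in (0:ℝ)..1, G x‖ ≤ ε * |1 - 0| := by
    apply intervalIntegral.norm_integral_le_of_norm_le_const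
    intro x hx
    rw [uIoc_of_le zero_le_one] at hx
    exact hb x ⟨hx.1.le, hx.2⟩
  have h2 : ‖∫ θ in (0:ℝ)..(Real.pi / 2), (∫ φ in (0:ℝ)..(Real.pi / 2), G (Real.sin θ * Real.sin φ))
      * Real.sin θ‖ ≤ (ε * |Real.pi / 2 - 0|) * |Real.pi / 2 - 0| := by
    apply intervalIntegral.norm_integral_le_of_norm_le_const
    intro θ hθ
    have h3 : ‖∫ φ in (0:ℝ)..(Real.pi / 2), G (Real.sin θ * Real.sin φ)‖ ≤ ε * |Real.pi / 2 - 0| := by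
      apply intervalIntegral.norm_integral_le_of_norm_le_const
      intro φ hφ
      apply hb
      have a := hs θ hθ
      have b := hs φ hφ
      exact ⟨mul_nonneg a.1 b.1, mul_le_one₀ a.2 b.1 b.2⟩
    rw [norm_mul]
    have : ‖Real.sin θ‖ ≤ 1 := Real.abs_sin_le_one θ
    exact (mul_le_of_le_one_right (norm_nonneg _) this).trans h3
  rw [sub_zero, abs_of_pos (by positivity : 0 < Real.pi / 2)] at h2
  simp only [sub_zero, abs_one, mul_one] at h1
  rw [Real.norm_eq_abs] at h1 h2
  unfold LL
  refine (abs_sub _ _).trans ?_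
  rw [abs_mul, abs_of_pos (by positivity : 0 < Real.pi / 2)]
  have h4 : Real.pi / 2 * |∫ x in (0:ℝ)..1, G x| ≤ Real.pi / 2 * ε := by gcongr
  linarith

lemma LL_zero {G : ℝ → ℝ} (hG : Continuous G) : LL G = 0 := by
  have hpi := Real.pi_pos
  set C := Real.pi / 2 * (Real.pi / 2) + Real.pi / 2 with hC
  have hCp : 0 < C := by positivity
  have : |LL G| ≤ 0 := by
    apply le_of_forall_pos_le_add
    intro ε hε
    obtain ⟨P, hP⟩ := exists_polynomial_near_of_continuousOn 0 1 G hG.continuousOn (ε / C) (by positivity)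
    have h1 := LL_sub P.continuous hG
    have h2 := LL_bound (G := fun x => P.eval x - G x) (fun x hx => (hP x hx).le)
    rw [h1, LL_poly, zero_sub, abs_neg] at h2
    have : C * (ε / C) = ε := by field_simp
    rw [← hC, this] at h2
    linarith
  simpa using this

-- the Abel type identity
lemma abel_id {g k : ℝ → ℝ} (hk : ∀ x, HasDerivAt k (g x) x) (hg : Continuous g) (hk0 : k 0 = 0)
    {r : ℝ} (hr : r ≠ 0) :
    Phi (fun x => Phi g (fun _ => 1) 0 x) Real.sin 0 r = Real.pi / 2 * (k r / r) := by
  have h := LL_zero (G := fun x => g (r * x)) (by fun_prop)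
  unfold LL at h
  have e : ∫ x in (0:ℝ)..1, g (r * x) = k r / r := by
    rw [intervalIntegral.integral_comp_mul_left (fun x => g x) hr,
      intervalIntegral.integral_eq_sub_of_hasDerivAt (f := k) (fun x _ => hk x) (hg.intervalIntegrable _ _)]
    simp only [mul_one, mul_zero, hk0, smul_eq_mul]
    field_simp
    ring
  rw [e] at h
  unfold Phi
  simp only [sub_zero, mul_one]
  simp only [← mul_assoc] at h
  linarith


lemma tf_energy {Y Z Yt Yr Zr : ℝ → ℝ → ℝ} {ρ EX : ℝ} (hρ : 0 < ρ)
    (hY : ∀ t r, HPD Y (Yt t r) (Yr t r) t r) (hZ : ∀ t r, HPD Z (Yr t r) (Zr t r) t r)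
    (heq : ∀ t r, 0 ≤ t → 0 < r → Yt t r = Zr t r + 3 / r * Z t r)
    (hz : ∀ t r, 0 ≤ t → r ≤ ρ + t → Y t r = 0 ∧ Z t r = 0)
    (hi : ∀ β, ρ ≤ β → ∫ r in ρ..β, (Y 0 r * Y 0 r + Z 0 r * Z 0 r) * r ^ 3 ≤ EX) :
    ∀ t, 0 ≤ t → ∀ A, ρ ≤ A →
    ∫ a in ρ..A, (Y t (a + t) ^ 2 + Z t (a + t) ^ 2) * (a + t) ^ 3 ≤ EX := by
  intro T hT A hA
  have hdiv := div_cone2 (fun t r => (Y t r * Y t r + Z t r * Z t r) * r ^ 3)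
    (fun t r => (-2) * (Y t r * Z t r) * r ^ 3) (fun _ _ => 0) (-1) ρ (A + 2 * T) T hT (by linarith)
    (by
      intro t h1 _ a _ _
      refine ⟨_, _, _, _,
        (((hY _ _).mul (hY _ _)).add ((hZ _ _).mul (hZ _ _))).mul (HPD.r3 _ _),
        ((HPD.const (-2) _ _).mul ((hY _ _).mul (hZ _ _))).mul (HPD.r3 _ _), ?_⟩
      generalize a + -1 * t = r at *
      rcases le_or_gt r (ρ + t) with h | h
      · rw [(hz t r h1 h).1, (hz t r h1 h).2]; ring
      · have hr : 0 < r := by linarith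
        rw [heq t r h1 hr]
        field_simp
        ring)
    (by intros; fun_prop)
  have hcY : ∀ t, Continuous (fun r => Y t r) := fun t =>
    continuous_iff_continuousAt.2 (fun r => (hY t r).dr.continuousAt)
  have hcZ : ∀ t, Continuous (fun r => Z t r) := fun t =>
    continuous_iff_continuousAt.2 (fun r => (hZ t r).dr.continuousAt)
  have hright : 0 ≤ ∫ t in (0:ℝ)..T, ((-2) * (Y t (A + 2 * T + -1 * t) * Z t (A + 2 * T + -1 * t))
      * (A + 2 * T + -1 * t) ^ 3 - (-1) * ((Y t (A + 2 * T + -1 * t) * Y t (A + 2 * T + -1 * t)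
      + Z t (A + 2 * T + -1 * t) * Z t (A + 2 * T + -1 * t)) * (A + 2 * T + -1 * t) ^ 3)) := by
    apply intervalIntegral.integral_nonneg hT
    intro t ht
    have : 0 < A + 2 * T + -1 * t := by linarith [ht.2]
    generalize A + 2 * T + -1 * t = r at *
    have e : (-2) * (Y t r * Z t r) * r ^ 3 - (-1) * ((Y t r * Y t r + Z t r * Z t r) * r ^ 3)
      = (Y t r - Z t r) ^ 2 * r ^ 3 := by ring
    rw [e]; positivity
  have hleft : ∫ t in (0:ℝ)..T, ((-2) * (Y t (ρ + -1 * t) * Z t (ρ + -1 * t))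
      * (ρ + -1 * t) ^ 3 - (-1) * ((Y t (ρ + -1 * t) * Y t (ρ + -1 * t)
      + Z t (ρ + -1 * t) * Z t (ρ + -1 * t)) * (ρ + -1 * t) ^ 3)) = 0 := by
    rw [intervalIntegral.integral_congr (g := fun _ => (0:ℝ))]
    · simp
    · intro t ht
      rw [uIcc_of_le hT] at ht
      have := hz t (ρ + -1 * t) ht.1 (by linarith [ht.1])
      simp only [this.1, this.2]
      ring
  have htop : ∫ a in ρ..(A + 2 * T), (Y T (a + -1 * T) * Y T (a + -1 * T) +
      Z T (a + -1 * T) * Z T (a + -1 * T)) * (a + -1 * T) ^ 3 =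
      ∫ a in ρ..A, (Y T (a + T) ^ 2 + Z T (a + T) ^ 2) * (a + T) ^ 3 := by
    have cY := hcY T
    have cZ := hcZ T
    have hii : ∀ a b, IntervalIntegrable (fun r => (Y T r * Y T r + Z T r * Z T r) * r ^ 3) volume a b :=
      fun a b => Continuous.intervalIntegrable (by fun_prop) _ _
    rw [intervalIntegral.integral_comp_add_right (fun r => (Y T r * Y T r + Z T r * Z T r) * r ^ 3),
      ← intervalIntegral.integral_add_adjacent_intervals (hii _ (ρ + T)) (hii (ρ + T) _)]
    have z1 : ∫ r in (ρ + -1 * T)..(ρ + T), (Y T r * Y T r + Z T r * Z T r) * r ^ 3 = 0 := by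
      rw [intervalIntegral.integral_congr (g := fun _ => (0:ℝ))]
      · simp
      · intro r hr
        rw [uIcc_of_le (by linarith)] at hr
        have := hz T r hT hr.2
        simp [this.1, this.2]
    rw [z1, zero_add, show A + 2 * T + -1 * T = A + T by ring,
      ← intervalIntegral.integral_comp_add_right (fun r => (Y T r * Y T r + Z T r * Z T r) * r ^ 3)]
    congr 1
    ext a
    ring
  simp only [intervalIntegral.integral_zero] at hdiv
  rw [hleft, htop] at hdiv
  linarith [hi (A + 2 * T) (by linarith)]

/-- admissible compactly supported mean zero profiles -/
structure Eta (ρ A1 : ℝ) (η η1 η2 η3 : ℝ → ℝ) : Prop where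
  d0 : ∀ x, HasDerivAt η (η1 x) x
  d1 : ∀ x, HasDerivAt η1 (η2 x) x
  d2 : ∀ x, HasDerivAt η2 (η3 x) x
  c3 : Continuous η3
  lo : ∀ x, x ≤ ρ → η x = 0
  hi : ∀ x, A1 ≤ x → η x = 0
  mean : ∫ x in ρ..A1, η x = 0

lemma Eta.c0 {ρ A1 : ℝ} {η η1 η2 η3 : ℝ → ℝ} (h : Eta ρ A1 η η1 η2 η3) :
    Continuous η ∧ Continuous η1 ∧ Continuous η2 :=
  ⟨continuous_iff_continuousAt.2 (fun x => (h.d0 x).continuousAt),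
   continuous_iff_continuousAt.2 (fun x => (h.d1 x).continuousAt),
   continuous_iff_continuousAt.2 (fun x => (h.d2 x).continuousAt)⟩

structure Ech (ρ : ℝ) (e0 e1 e2 e3 : ℝ → ℝ) : Prop where
  d0 : ∀ x, HasDerivAt e0 (e1 x) x
  d1 : ∀ x, HasDerivAt e1 (e2 x) x
  d2 : ∀ x, HasDerivAt e2 (e3 x) x
  c3 : Continuous e3
  z0 : ∀ x, x ≤ ρ → e0 x = 0

lemma phi_der {h h1 w : ℝ → ℝ} (hd : ∀ x, HasDerivAt h (h1 x) x) (hc : Continuous h1)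
    (hw : Continuous w) (x : ℝ) :
    HasDerivAt (fun x => Phi h w 0 x) (Phi h1 (fun θ => w θ * Real.sin θ) 0 x) x :=
  (phi_hpd hd hc hw 0 x).dr

lemma eta_ech {ρ A1 : ℝ} {η η1 η2 η3 : ℝ → ℝ} (hρ : 0 < ρ) (h : Eta ρ A1 η η1 η2 η3) :
    ∃ e2 e3, Ech ρ (fun x => x * Phi η (fun _ => 1) 0 x)
      (fun x => Phi (fun x => η x + x * η1 x) (fun _ => 1) 0 x) e2 e3 := by
  obtain ⟨c0, c1, c2⟩ := h.c0
  have c3 := h.c3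
  have hg : ∀ x, HasDerivAt (fun x => η x + x * η1 x) (2 * η1 x + x * η2 x) x := by
    intro x
    refine ((h.d0 x).add ((hasDerivAt_id x).mul (h.d1 x))).congr_deriv ?_
    simp; ring
  have hg1 : ∀ x, HasDerivAt (fun x => 2 * η1 x + x * η2 x) (3 * η2 x + x * η3 x) x := by
    intro x
    refine (((h.d1 x).const_mul 2).add ((hasDerivAt_id x).mul (h.d2 x))).congr_deriv ?_
    simp; ring
  refine ⟨_, _, ⟨?_, phi_der hg (by fun_prop) (by fun_prop), phi_der hg1 (by fun_prop) (by fun_prop), ?_, ?_⟩⟩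
  · intro x
    refine ((hasDerivAt_id x).mul (phi_der h.d0 c1 (by fun_prop : Continuous (fun _ : ℝ => (1:ℝ))) x)).congr_deriv ?_
    unfold Phi
    simp only [id, one_mul]
    rw [← intervalIntegral.integral_const_mul, ← intervalIntegral.integral_add]
    · congr 1; ext θ; ring
    · exact Continuous.intervalIntegrable (by fun_prop) _ _
    · exact Continuous.intervalIntegrable (by fun_prop) _ _
  · exact (phi_cont (h := fun x => 3 * η2 x + x * η3 x) (by fun_prop) (by fun_prop)).comp
      (by fun_prop : Continuous (fun x : ℝ => ((0:ℝ), x)))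
  · intro x hx
    rw [phi_zero hρ.le le_rfl (by linarith) h.lo, mul_zero]


lemma sin_mem {θ : ℝ} (hθ : θ ∈ Icc (0:ℝ) (Real.pi / 2)) :
    0 ≤ Real.sin θ ∧ Real.sin θ ≤ 1 ∧ 0 ≤ Real.cos θ ∧ Real.cos θ ≤ 1 :=
  ⟨Real.sin_nonneg_of_nonneg_of_le_pi hθ.1 (by linarith [hθ.2, Real.pi_pos]), Real.sin_le_one _,
   Real.cos_nonneg_of_mem_Icc ⟨by linarith [hθ.1, Real.pi_pos], hθ.2⟩, Real.cos_le_one _⟩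

lemma cs_bdd {f : ℝ → ℝ} (hf : Continuous f) {A : ℝ} (hz : ∀ x, A < x → f x = 0) :
    ∃ C, 0 ≤ C ∧ ∀ x, 0 ≤ x → |f x| ≤ C := by
  obtain ⟨C, hC⟩ := (isCompact_Icc (a := (0:ℝ)) (b := A)).exists_bound_of_continuousOn hf.continuousOn
  refine ⟨max C 0, le_max_right _ _, fun x hx => ?_⟩
  rcases le_or_gt x A with h | h
  · exact (hC x ⟨hx, h⟩).trans (le_max_left _ _)
  · rw [hz x h]; simp

lemma der_zero_hi {f f1 : ℝ → ℝ} {A : ℝ} (hd : ∀ x, HasDerivAt f (f1 x) x)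
    (hz : ∀ x, A ≤ x → f x = 0) : ∀ x, A ≤ x → f1 x = 0 := by
  intro x hx
  have h1 := (hd x).hasDerivWithinAt (s := Ici A)
  have h2 : HasDerivWithinAt f 0 (Ici A) x :=
    (hasDerivWithinAt_const x (Ici A) (0:ℝ)).congr (fun y hy => hz y hy) (hz x hx)
  exact (uniqueDiffOn_Ici A x hx).eq_deriv _ h1 h2

lemma phi_bd {h w : ℝ → ℝ} {t r C : ℝ}
    (hb : ∀ θ ∈ Icc (0:ℝ) (Real.pi / 2), |h (r * Real.sin θ - t) * w θ| ≤ C) :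
    |Phi h w t r| ≤ C * (Real.pi / 2) := by
  have hp : (0:ℝ) ≤ Real.pi / 2 := by positivity
  have := intervalIntegral.norm_integral_le_of_norm_le_const (a := 0) (b := Real.pi / 2) (C := C)
    (f := fun θ => h (r * Real.sin θ - t) * w θ) (by
      intro θ hθ
      rw [uIoc_of_le hp] at hθ
      exact hb θ ⟨hθ.1.le, hθ.2⟩)
  rwa [sub_zero, abs_of_nonneg hp] at this

lemma k_bound {ρ A1 : ℝ} {η η1 η2 η3 : ℝ → ℝ} (hρ : 0 < ρ) (hA : ρ ≤ A1) (h : Eta ρ A1 η η1 η2 η3) :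
    ∃ C, 0 ≤ C ∧ ∀ x, 0 ≤ x → |x * (x * Phi (fun x => x * η1 x) (fun _ => 1) 0 x)| ≤ C := by
  obtain ⟨c0, c1, c2⟩ := h.c0
  have h1z := der_zero_hi h.d0 h.hi
  obtain ⟨B, hB0, hB⟩ := cs_bdd (f := fun x => x ^ 2 * (x * η1 x)) (by fun_prop) (A := A1)
    (fun x hx => by rw [h1z x hx.le]; ring)
  have hcont : Continuous (fun x => x * (x * Phi (fun x => x * η1 x) (fun _ => 1) 0 x)) := by
    have := (phi_cont (h := fun x => x * η1 x) (w := fun _ => 1) (by fun_prop) (by fun_prop)).comp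
      (by fun_prop : Continuous (fun x : ℝ => ((0:ℝ), x)))
    exact continuous_id.mul (continuous_id.mul this)
  obtain ⟨C, hC⟩ := (isCompact_Icc (a := (0:ℝ)) (b := A1)).exists_bound_of_continuousOn hcont.continuousOn
  have hpi := Real.pi_pos
  refine ⟨max C (B * (Real.pi / 2)), le_trans (by positivity) (le_max_right _ _), fun x hx => ?_⟩
  rcases le_or_gt x A1 with hx1 | hx1
  · exact (hC x ⟨hx, hx1⟩).trans (le_max_left _ _)
  refine le_trans ?_ (le_max_right _ _)
  -- cancellation from the mean value
  have hζ : ∀ y, HasDerivAt (fun y => y * η y - ∫ s in ρ..y, η s) (y * η1 y) y := by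
    intro y
    have := ((hasDerivAt_id y).mul (h.d0 y)).sub (intervalIntegral.integral_hasDerivAt_right
      (c0.intervalIntegrable ρ y) (c0.stronglyMeasurableAtFilter _ _) c0.continuousAt)
    refine this.congr_deriv ?_
    simp
  have hz0 : (∫ s in ρ..(0:ℝ), η s) = 0 := by
    rw [intervalIntegral.integral_congr (g := fun _ => (0:ℝ))]
    · simp
    · intro s hs
      rw [uIcc_of_ge hρ.le] at hs
      exact h.lo s hs.2
  have hz1 : (∫ s in ρ..x, η s) = 0 := by
    rw [← intervalIntegral.integral_add_adjacent_intervals (c0.intervalIntegrable ρ A1)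
      (c0.intervalIntegrable A1 x), h.mean, zero_add, intervalIntegral.integral_congr (g := fun _ => (0:ℝ))]
    · simp
    · intro s hs
      rw [uIcc_of_le hx1.le] at hs
      exact h.hi s hs.1
  have hcanc : x * Phi (fun x => x * η1 x) Real.cos 0 x = 0 := by
    have hder : ∀ θ ∈ uIcc 0 (Real.pi / 2), HasDerivAt
        (fun θ => (fun y => y * η y - ∫ s in ρ..y, η s) (x * Real.sin θ))
        (x * ((x * Real.sin θ * η1 (x * Real.sin θ)) * Real.cos θ)) θ := by
      intro θ _
      refine ((hζ _).comp θ ((Real.hasDerivAt_sin θ).const_mul x)).congr_deriv ?_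
      ring
    have := intervalIntegral.integral_eq_sub_of_hasDerivAt hder
      (Continuous.intervalIntegrable (by fun_prop) _ _)
    rw [intervalIntegral.integral_const_mul] at this
    simp only [Real.sin_zero, mul_zero, Real.sin_pi_div_two, mul_one, hz0, hz1, h.hi x hx1.le] at this
    unfold Phi
    simp only [sub_zero]
    rw [this]; simp
  have e : x * (x * Phi (fun x => x * η1 x) (fun _ => 1) 0 x) =
      Phi (fun y => y * η1 y) (fun θ => x ^ 2 * (1 - Real.cos θ)) 0 x := by
    have : Phi (fun y => y * η1 y) (fun θ => x ^ 2 * (1 - Real.cos θ)) 0 x =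
      x * (x * Phi (fun x => x * η1 x) (fun _ => 1) 0 x - x * Phi (fun x => x * η1 x) Real.cos 0 x) := by
      unfold Phi
      rw [← mul_sub, ← intervalIntegral.integral_sub (Continuous.intervalIntegrable (by fun_prop) _ _)
       (Continuous.intervalIntegrable (by fun_prop) _ _), ← intervalIntegral.integral_const_mul,
       ← intervalIntegral.integral_const_mul]
      congr 1; ext θ; ring
    rw [this, hcanc, sub_zero]
  rw [e]
  apply phi_bd
  intro θ hθ
  obtain ⟨s1, s2, s3, s4⟩ := sin_mem hθ
  rw [sub_zero]
  refine le_trans ?_ (hB (x * Real.sin θ) (by positivity))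
  rw [abs_mul, abs_mul ((x * Real.sin θ) ^ 2), mul_comm]
  gcongr
  have h5 := Real.sin_sq_add_cos_sq θ
  rw [mul_pow]
  gcongr
  nlinarith

lemma int_w3 {f : ℝ → ℝ} {ρ β C : ℝ} (hρ : 0 < ρ) (hβ : ρ ≤ β) (hf : ContinuousOn f (uIcc ρ β)) (hC : 0 ≤ C)
    (hb : ∀ r, ρ ≤ r → f r ≤ C * (1 / r ^ 3)) : ∫ r in ρ..β, f r ≤ C * (1 / (2 * ρ ^ 2)) := by
  have c3 : ContinuousOn (fun a : ℝ => C * (1 / a ^ 3)) (uIcc ρ β) := by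
    intro a ha
    rw [uIcc_of_le hβ] at ha
    have : 0 < a := by linarith [ha.1]
    apply ContinuousAt.continuousWithinAt
    fun_prop (disch := positivity)
  have j1 : IntervalIntegrable f volume ρ β := hf.intervalIntegrable
  have j2 : IntervalIntegrable (fun a : ℝ => C * (1 / a ^ 3)) volume ρ β := c3.intervalIntegrable
  have h1 := intervalIntegral.integral_mono_on hβ j1 j2
    (fun r hr => hb r hr.1)
  rw [intervalIntegral.integral_const_mul] at h1
  refine h1.trans ?_
  gcongr
  exact int_inv3 hρ hβ

lemma testF_main {ρ A1 : ℝ} {η η1 η2 η3 : ℝ → ℝ} (hρ : 0 < ρ) (hA : ρ ≤ A1) (h : Eta ρ A1 η η1 η2 η3)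
    {e2 e3 : ℝ → ℝ} (he : Ech ρ (fun x => x * Phi η (fun _ => 1) 0 x)
      (fun x => Phi (fun x => η x + x * η1 x) (fun _ => 1) 0 x) e2 e3)
    {N2 : ℝ} (hN : ∀ t, 0 ≤ t → ∀ A, ρ ≤ A → ∫ a in ρ..A, (2 / Real.pi *
      Phi (fun x => Phi (fun x => η x + x * η1 x) (fun _ => 1) 0 x)
      (fun θ => Real.cos θ ^ 2) t (a + t)) ^ 2 * (1 / (a + t)) ≤ N2) :
    ∃ EX X Y Z Yt Yr Zr, TestF ρ η N2 EX X Y Z Yt Yr Zr := by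
  obtain ⟨c0, c1, c2⟩ := h.c0
  have hpi := Real.pi_pos
  set e1 : ℝ → ℝ := (fun x => Phi (fun x => η x + x * η1 x) (fun _ => 1) 0 x) with he1
  set w : ℝ → ℝ := fun θ => Real.cos θ ^ 2 with hw
  have cw : Continuous w := by rw [hw]; fun_prop
  have cws : Continuous (fun θ => w θ * Real.sin θ) := by fun_prop
  have ce2 : Continuous e2 := continuous_iff_continuousAt.2 (fun x => (he.d2 x).continuousAt)
  have ce3 := he.c3
  have z1 := der_zero he.d0 he.z0
  have z2 := der_zero he.d1 z1
  have z3 := der_zero he.d2 z2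
  have hX : ∀ t r, HPD (fun t r => 2 / Real.pi * Phi e1 w t r) (-(2 / Real.pi) * Phi e2 w t r)
      (2 / Real.pi * Phi e2 (fun θ => w θ * Real.sin θ) t r) t r := fun t r =>
    ((HPD.const (2 / Real.pi) t r).mul (phi_hpd he.d1 ce2 cw t r)).congr_val (by ring) (by ring)
  have hY : ∀ t r, HPD (fun t r => -(2 / Real.pi) * Phi e2 w t r) (2 / Real.pi * Phi e3 w t r)
      (-(2 / Real.pi) * Phi e3 (fun θ => w θ * Real.sin θ) t r) t r := fun t r =>
    ((HPD.const (-(2 / Real.pi)) t r).mul (phi_hpd he.d2 ce3 cw t r)).congr_val (by ring) (by ring)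
  have hZ : ∀ t r, HPD (fun t r => 2 / Real.pi * Phi e2 (fun θ => w θ * Real.sin θ) t r)
      (-(2 / Real.pi) * Phi e3 (fun θ => w θ * Real.sin θ) t r)
      (2 / Real.pi * Phi e3 (fun θ => w θ * Real.sin θ * Real.sin θ) t r) t r := fun t r =>
    ((HPD.const (2 / Real.pi) t r).mul (phi_hpd he.d2 ce3 cws t r)).congr_val (by ring) (by ring)
  have heq : ∀ t r, 0 ≤ t → 0 < r → 2 / Real.pi * Phi e3 w t r =
      2 / Real.pi * Phi e3 (fun θ => w θ * Real.sin θ * Real.sin θ) t r +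
      3 / r * (2 / Real.pi * Phi e2 (fun θ => w θ * Real.sin θ) t r) := by
    intro t r ht hr
    have i1 := phi_ibp (h := e2) (h1 := e3) (c := fun θ => Real.cos θ ^ 3)
      (c1 := fun θ => -3 * (w θ * Real.sin θ)) he.d2 ce3
      (by
        intro x
        refine ((Real.hasDerivAt_cos x).pow 3).congr_deriv ?_
        rw [hw]; simp; ring)
      (by fun_prop) (by simp) (t := t) (r := r) (z2 _ (by linarith))
    have i2 : Phi e2 (fun θ => -3 * (w θ * Real.sin θ)) t r = -3 * Phi e2 (fun θ => w θ * Real.sin θ) t r := by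
      unfold Phi
      rw [← intervalIntegral.integral_const_mul]
      congr 1; ext θ; ring
    have i3 : Phi e3 (fun θ => Real.cos θ ^ 3 * Real.cos θ) t r =
        Phi e3 w t r - Phi e3 (fun θ => w θ * Real.sin θ * Real.sin θ) t r := by
      unfold Phi
      rw [← intervalIntegral.integral_sub (Continuous.intervalIntegrable (by fun_prop) _ _)
       (Continuous.intervalIntegrable (by fun_prop) _ _)]
      congr 1; ext θ; rw [hw]
      have := Real.sin_sq_add_cos_sq θ
      simp only
      have e : Real.sin θ ^ 2 = 1 - Real.cos θ ^ 2 := by linarith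
      linear_combination (e3 (r * Real.sin θ - t) * Real.cos θ ^ 2) * this
    rw [i2, i3] at i1
    generalize Phi e3 (fun θ => w θ * Real.sin θ * Real.sin θ) t r = a at i1 ⊢
    generalize Phi e2 (fun θ => w θ * Real.sin θ) t r = b at i1 ⊢
    field_simp
    linarith
  have hin : ∀ r, ρ < r → -(2 / Real.pi) * Phi e2 w 0 r = - η r / r := by
    intro r hr
    have hr0 : 0 < r := by linarith
    have i1 := phi_ibp (h := e1) (h1 := e2) (c := Real.cos)
      (c1 := fun θ => - Real.sin θ) he.d1 ce2 Real.hasDerivAt_cos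
      (by fun_prop) (by simp) (t := 0) (r := r) (z1 _ (by linarith))
    have i2 : Phi e1 (fun θ => - Real.sin θ) 0 r = - Phi e1 Real.sin 0 r := by
      unfold Phi
      rw [← intervalIntegral.integral_neg]
      congr 1; ext θ; ring
    have i3 : Phi e2 (fun θ => Real.cos θ * Real.cos θ) 0 r = Phi e2 w 0 r := by
      unfold Phi
      congr 1; ext θ; rw [hw]; ring
    have i4 := abel_id (g := fun x => η x + x * η1 x) (k := fun x => x * η x)
      (by
        intro x
        refine ((hasDerivAt_id x).mul (h.d0 x)).congr_deriv ?_
        simp) (by fun_prop) (by simp) hr0.ne'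
    rw [← he1] at i4
    rw [i2, i3, neg_neg, i4] at i1
    field_simp at i1 ⊢
    linarith
  -- size of the initial data
  have h1z := der_zero_hi h.d0 h.hi
  obtain ⟨C1, hC10, hC1⟩ := cs_bdd (f := fun x => x ^ 2 * η x) (by fun_prop) (A := A1)
    (fun x hx => by rw [h.hi x hx.le]; ring)
  obtain ⟨C2, hC20, hC2⟩ := k_bound hρ hA h
  set k : ℝ → ℝ := fun x => x * Phi (fun x => x * η1 x) (fun _ => 1) 0 x with hk
  have hke : ∀ x, k x = x * e1 x - x * Phi η (fun _ => 1) 0 x := by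
    intro x
    rw [hk, he1]
    simp only
    rw [← mul_sub]
    congr 1
    unfold Phi
    rw [← intervalIntegral.integral_sub (Continuous.intervalIntegrable (by fun_prop) _ _)
       (Continuous.intervalIntegrable (by fun_prop) _ _)]
    congr 1; ext θ; ring
  have hkd : ∀ x, HasDerivAt k (x * e2 x) x := by
    intro x
    have h1 := ((hasDerivAt_id x).mul (he.d1 x)).sub (he.d0 x)
    have h2 := h1.congr_deriv (show _ = x * e2 x by simp)
    refine h2.congr_of_eventuallyEq (Eventually.of_forall fun y => ?_)
    rw [hke]; simp
  have hZ0 : ∀ r, 0 < r → |2 / Real.pi * Phi e2 (fun θ => w θ * Real.sin θ) 0 r| ≤ C2 / r ^ 3 := by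
    intro r hr
    have i1 := phi_ibp (h := k) (h1 := fun x => x * e2 x) (c := Real.cos)
      (c1 := fun θ => - Real.sin θ) hkd (by fun_prop) Real.hasDerivAt_cos
      (by fun_prop) (by simp) (t := 0) (r := r) (by rw [hk]; simp)
    have i2 : Phi k (fun θ => - Real.sin θ) 0 r = - Phi k Real.sin 0 r := by
      unfold Phi
      rw [← intervalIntegral.integral_neg]
      congr 1; ext θ; ring
    have i3 : Phi (fun x => x * e2 x) (fun θ => Real.cos θ * Real.cos θ) 0 r =
        r * Phi e2 (fun θ => w θ * Real.sin θ) 0 r := by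
      unfold Phi
      rw [← intervalIntegral.integral_const_mul]
      congr 1; ext θ; rw [hw]; ring
    rw [i2, i3, neg_neg] at i1
    have i4 : |Phi k (fun θ => r * Real.sin θ) 0 r| ≤ C2 * (Real.pi / 2) := by
      apply phi_bd
      intro θ hθ
      obtain ⟨s1, s2, s3, s4⟩ := sin_mem hθ
      rw [sub_zero, mul_comm]
      exact hC2 _ (by positivity)
    have i5 : Phi k (fun θ => r * Real.sin θ) 0 r = r * Phi k Real.sin 0 r := by
      unfold Phi
      rw [← intervalIntegral.integral_const_mul]
      congr 1; ext θ; ring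
    rw [i5, ← i1] at i4
    rw [le_div_iff₀ (by positivity), ← abs_of_pos (by positivity : 0 < r ^ 3), ← abs_mul]
    have i6 : 2 / Real.pi * Phi e2 (fun θ => w θ * Real.sin θ) 0 r * r ^ 3 =
      2 / Real.pi * (r * (r * (r * Phi e2 (fun θ => w θ * Real.sin θ) 0 r))) := by ring
    rw [i6, abs_mul, abs_of_pos (by positivity : 0 < 2 / Real.pi)]
    calc _ ≤ 2 / Real.pi * (C2 * (Real.pi / 2)) := by gcongr
      _ = C2 := by field_simp
  have hY0 : ∀ r, ρ ≤ r → |-(2 / Real.pi) * Phi e2 w 0 r| ≤ C1 / r ^ 3 := by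
    intro r hr
    have hr0 : 0 < r := by linarith
    rcases hr.eq_or_lt with rfl | hr1
    · rw [phi_zero hρ.le le_rfl (by linarith) z2]
      simp; positivity
    rw [hin r hr1]
    have := hC1 r hr0.le
    rw [abs_mul, abs_of_pos (by positivity : 0 < r ^ 2)] at this
    rw [abs_div, abs_neg, abs_of_pos hr0, div_le_div_iff₀ hr0 (by positivity)]
    calc |η r| * r ^ 3 = r ^ 2 * |η r| * r := by ring
      _ ≤ C1 * r := by gcongr
  have hzz : ∀ t r, 0 ≤ t → r ≤ ρ + t → -(2 / Real.pi) * Phi e2 w t r = 0 ∧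
      2 / Real.pi * Phi e2 (fun θ => w θ * Real.sin θ) t r = 0 := by
    intro t r ht hr
    rw [phi_zero hρ.le ht hr z2, phi_zero hρ.le ht hr z2]
    simp
  refine ⟨(C1 ^ 2 + C2 ^ 2) * (1 / (2 * ρ ^ 2)), fun t r => 2 / Real.pi * Phi e1 w t r,
    fun t r => -(2 / Real.pi) * Phi e2 w t r,
    fun t r => 2 / Real.pi * Phi e2 (fun θ => w θ * Real.sin θ) t r,
    fun t r => 2 / Real.pi * Phi e3 w t r,
    fun t r => -(2 / Real.pi) * Phi e3 (fun θ => w θ * Real.sin θ) t r,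
    fun t r => 2 / Real.pi * Phi e3 (fun θ => w θ * Real.sin θ * Real.sin θ) t r,
    ⟨fun t r _ _ => hX t r, fun t r _ _ => hY t r, fun t r _ _ => hZ t r, heq, ?_, ?_, ?_, hin, ?_, hN⟩⟩
  · intro t ht
    rw [phi_zero hρ.le ht le_rfl z1, mul_zero]
  · intro t ht
    exact (hzz t _ ht le_rfl).1
  · intro t ht
    exact (hzz t _ ht le_rfl).2
  · refine tf_energy hρ hY hZ heq hzz ?_
    intro β hβ
    apply int_w3 hρ hβ _ (by positivity)
    · intro r hr
      have hr0 : 0 < r := by linarith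
      have a1 := hY0 r hr
      have a2 := hZ0 r hr0
      have b1 := pow_le_pow_left₀ (abs_nonneg _) a1 2
      have b2 := pow_le_pow_left₀ (abs_nonneg _) a2 2
      rw [sq_abs] at b1 b2
      rw [← pow_two, ← pow_two]
      calc _ ≤ ((C1 / r ^ 3) ^ 2 + (C2 / r ^ 3) ^ 2) * r ^ 3 := by gcongr
        _ = _ := by field_simp
    · have d1 : Continuous (fun r => -(2 / Real.pi) * Phi e2 w 0 r) :=
        continuous_iff_continuousAt.2 (fun r => (hY 0 r).dr.continuousAt)
      have d2 : Continuous (fun r => 2 / Real.pi * Phi e2 (fun θ => w θ * Real.sin θ) 0 r) :=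
        continuous_iff_continuousAt.2 (fun r => (hZ 0 r).dr.continuousAt)
      apply Continuous.continuousOn
      exact ((d1.mul d1).add (d2.mul d2)).mul (by fun_prop)


lemma cs_int {f : ℝ → ℝ} (hf : Continuous f) {b : ℝ} (hb : 0 < b) :
    (∫ x in (0:ℝ)..b, f x) ^ 2 ≤ b * ∫ x in (0:ℝ)..b, f x ^ 2 := by
  set I := ∫ x in (0:ℝ)..b, f x with hI
  have h0 : 0 ≤ ∫ x in (0:ℝ)..b, (f x - I / b) ^ 2 :=
    intervalIntegral.integral_nonneg hb.le (fun x _ => sq_nonneg _)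
  have h1 : ∫ x in (0:ℝ)..b, (f x - I / b) ^ 2 = (∫ x in (0:ℝ)..b, f x ^ 2) - 2 * (I / b) * I
      + b * (I / b) ^ 2 := by
    have : ∀ x, (f x - I / b) ^ 2 = f x ^ 2 - 2 * (I / b) * f x + (I / b) ^ 2 := fun x => by ring
    simp_rw [this]
    rw [intervalIntegral.integral_add (Continuous.intervalIntegrable (by fun_prop) _ _)
      (Continuous.intervalIntegrable (by fun_prop) _ _), intervalIntegral.integral_sub
      (Continuous.intervalIntegrable (by fun_prop) _ _)
      (Continuous.intervalIntegrable (by fun_prop) _ _), intervalIntegral.integral_const_mul,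
      intervalIntegral.integral_const, ← hI]
    simp
  rw [h1] at h0
  have h2 : b * (2 * (I / b) * I - b * (I / b) ^ 2) = I ^ 2 := by field_simp; ring
  nlinarith

lemma swap_cont {F : ℝ → ℝ → ℝ} (hF : Continuous (Function.uncurry F)) (a b c d : ℝ) :
    ∫ x in a..b, ∫ y in c..d, F x y = ∫ y in c..d, ∫ x in a..b, F x y := by
  apply intervalIntegral_intervalIntegral_swap
  apply IntegrableOn.mono_set (t := uIcc a b ×ˢ uIcc c d)
  · exact hF.continuousOn.integrableOn_compact (isCompact_uIcc.prod isCompact_uIcc)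
  · exact prod_mono uIoc_subset_uIcc uIoc_subset_uIcc

lemma n_bound {n : ℝ → ℝ} {ρ A1 y0 y1 : ℝ} (hn : Continuous n) (h0 : ∀ y, 0 ≤ n y)
    (lo : ∀ y, y ≤ ρ → n y = 0) (hi : ∀ y, A1 ≤ y → n y = 0) (hA : ρ ≤ A1) (hy : y0 ≤ y1) :
    ∫ y in y0..y1, n y ≤ ∫ y in ρ..A1, n y := by
  have h1 : ∫ y in y0..y1, n y ≤ ∫ y in (min y0 ρ)..(max y1 A1), n y :=
    intervalIntegral.integral_mono_interval (min_le_left _ _) hy (le_max_left _ _)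
      (Eventually.of_forall h0) (hn.intervalIntegrable _ _)
  have h2 : ∫ y in (min y0 ρ)..ρ, n y = 0 := by
    rw [intervalIntegral.integral_congr (g := fun _ => (0:ℝ))]
    · simp
    · intro s hs
      rw [uIcc_of_le (min_le_right _ _)] at hs
      exact lo s hs.2
  have h3 : ∫ y in A1..(max y1 A1), n y = 0 := by
    rw [intervalIntegral.integral_congr (g := fun _ => (0:ℝ))]
    · simp
    · intro s hs
      rw [uIcc_of_le (le_max_right _ _)] at hs
      exact hi s hs.1
  rw [← intervalIntegral.integral_add_adjacent_intervals (hn.intervalIntegrable (min y0 ρ) ρ)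
      (hn.intervalIntegrable ρ (max y1 A1)), h2, zero_add, ← intervalIntegral.integral_add_adjacent_intervals (hn.intervalIntegrable ρ A1)
      (hn.intervalIntegrable A1 _), h3, add_zero] at h1
  exact h1

lemma triple_bound {n : ℝ → ℝ} {ρ A1 t A : ℝ} (hn : Continuous n) (h0 : ∀ y, 0 ≤ n y)
    (lo : ∀ y, y ≤ ρ → n y = 0) (hi : ∀ y, A1 ≤ y → n y = 0) (hA1 : ρ ≤ A1) (hA : ρ ≤ A) :
    ∫ a in ρ..A, ∫ θ in (0:ℝ)..(Real.pi / 2), ∫ φ in (0:ℝ)..(Real.pi / 2),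
      Real.sin θ * Real.sin φ * n (((a + t) * Real.sin θ - t) * Real.sin φ) ≤
      Real.pi / 2 * (Real.pi / 2 * ∫ y in ρ..A1, n y) := by
  have hp : (0:ℝ) ≤ Real.pi / 2 := by positivity
  have cF : Continuous (Function.uncurry fun a θ => ∫ φ in (0:ℝ)..(Real.pi / 2),
      Real.sin θ * Real.sin φ * n (((a + t) * Real.sin θ - t) * Real.sin φ)) := by
    unfold Function.uncurry
    apply intervalIntegral.continuous_parametric_intervalIntegral_of_continuous'
    unfold Function.uncurry
    fun_prop
  rw [swap_cont cF]
  have cG : Continuous (fun θ => ∫ a in ρ..A, ∫ φ in (0:ℝ)..(Real.pi / 2),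
      Real.sin θ * Real.sin φ * n (((a + t) * Real.sin θ - t) * Real.sin φ)) := by
    apply intervalIntegral.continuous_parametric_intervalIntegral_of_continuous'
    unfold Function.uncurry
    apply intervalIntegral.continuous_parametric_intervalIntegral_of_continuous'
    unfold Function.uncurry
    fun_prop
  have cst : ∀ c : ℝ, ∫ _ in (0:ℝ)..(Real.pi / 2), c = Real.pi / 2 * c := by
    intro c; rw [intervalIntegral.integral_const]; simp
  rw [← cst]
  refine intervalIntegral.integral_mono_on hp (cG.intervalIntegrable _ _) (by simp) ?_
  intro θ hθ
  rw [swap_cont (F := fun a φ => Real.sin θ * Real.sin φ * n (((a + t) * Real.sin θ - t) * Real.sin φ))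
    (by unfold Function.uncurry; fun_prop), ← cst]
  refine intervalIntegral.integral_mono_on hp (Continuous.intervalIntegrable ?_ _ _) (by simp) ?_
  · apply intervalIntegral.continuous_parametric_intervalIntegral_of_continuous'
    unfold Function.uncurry
    fun_prop
  intro φ hφ
  have s1 := (sin_mem hθ).1
  have s2 := (sin_mem hφ).1
  rw [intervalIntegral.integral_const_mul]
  have e := intervalIntegral.mul_integral_comp_mul_add (a := ρ) (b := A) (f := n)
    (Real.sin θ * Real.sin φ) ((t * Real.sin θ - t) * Real.sin φ)
  have e2 : ∀ a : ℝ, ((a + t) * Real.sin θ - t) * Real.sin φ =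
    Real.sin θ * Real.sin φ * a + (t * Real.sin θ - t) * Real.sin φ := fun a => by ring
  simp_rw [e2]
  rw [e]
  apply n_bound hn h0 lo hi hA1
  have : 0 ≤ Real.sin θ * Real.sin φ := by positivity
  gcongr

lemma ptw {η : ℝ → ℝ} {ρ t r θ φ : ℝ} (hρ : 0 < ρ) (lo : ∀ x, x ≤ ρ → η x = 0) (ht : 0 ≤ t) (hr : 0 < r)
    (hθ : θ ∈ Icc (0:ℝ) (Real.pi / 2)) (hφ : φ ∈ Icc (0:ℝ) (Real.pi / 2)) :
    (r * Real.sin θ - t) ^ 2 * Real.sin θ ^ 2 * η ((r * Real.sin θ - t) * Real.sin φ) ^ 2 ≤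
    r ^ 3 * (Real.sin θ * Real.sin φ * (η ((r * Real.sin θ - t) * Real.sin φ) ^ 2 /
      max ((r * Real.sin θ - t) * Real.sin φ) ρ)) := by
  obtain ⟨a1, a2, -, -⟩ := sin_mem hθ
  obtain ⟨b1, b2, -, -⟩ := sin_mem hφ
  set x := r * Real.sin θ - t with hx
  rcases le_or_gt (x * Real.sin φ) ρ with h | h
  · rw [lo _ h]; simp
  rw [max_eq_left h.le]
  have hb : 0 < Real.sin φ := by
    rcases b1.eq_or_lt with h' | h'
    · rw [← h'] at h; linarith
    · exact h'
  have hx0 : 0 < x := by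
    by_contra hc
    nlinarith
  have hxr : x ≤ r := by nlinarith
  have e : r ^ 3 * (Real.sin θ * Real.sin φ * (η (x * Real.sin φ) ^ 2 / (x * Real.sin φ))) =
    (r ^ 3 / x) * Real.sin θ * η (x * Real.sin φ) ^ 2 := by field_simp
  rw [e]
  have h3 : x ^ 2 ≤ r ^ 3 / x := by
    rw [le_div_iff₀ hx0]
    calc x ^ 2 * x = x ^ 3 := by ring
      _ ≤ r ^ 3 := by gcongr
  have h4 : Real.sin θ ^ 2 ≤ Real.sin θ := by nlinarith
  gcongr

lemma X_ptw {ρ A1 : ℝ} {η η1 η2 η3 : ℝ → ℝ} (hρ : 0 < ρ) (h : Eta ρ A1 η η1 η2 η3)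
    {e2 e3 : ℝ → ℝ} (he : Ech ρ (fun x => x * Phi η (fun _ => 1) 0 x)
      (fun x => Phi (fun x => η x + x * η1 x) (fun _ => 1) 0 x) e2 e3) {t r : ℝ} (ht : 0 ≤ t) (hr : 0 < r) :
    (2 / Real.pi * Phi (fun x => Phi (fun x => η x + x * η1 x) (fun _ => 1) 0 x)
      (fun θ => Real.cos θ ^ 2) t r) ^ 2 * (1 / r) ≤
    ∫ θ in (0:ℝ)..(Real.pi / 2), ∫ φ in (0:ℝ)..(Real.pi / 2),
      Real.sin θ * Real.sin φ * (fun y => η y ^ 2 / max y ρ) ((r * Real.sin θ - t) * Real.sin φ) := by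
  obtain ⟨c0, c1, c2⟩ := h.c0
  have hpi := Real.pi_pos
  have hp : (0:ℝ) < Real.pi / 2 := by positivity
  have hmx : ∀ y, max y ρ ≠ 0 := fun y => (lt_of_lt_of_le hρ (le_max_right _ _)).ne'
  have cn : Continuous (fun y => η y ^ 2 / max y ρ) :=
    (c0.pow 2).div (continuous_id.max continuous_const) hmx
  set e0 : ℝ → ℝ := (fun x => x * Phi η (fun _ => 1) 0 x) with he0
  set e1 : ℝ → ℝ := (fun x => Phi (fun x => η x + x * η1 x) (fun _ => 1) 0 x) with he1
  have ce0 : Continuous e0 := continuous_iff_continuousAt.2 (fun x => (he.d0 x).continuousAt)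
  have ce1 : Continuous e1 := continuous_iff_continuousAt.2 (fun x => (he.d1 x).continuousAt)
  have i1 := phi_ibp (h := e0) (h1 := e1) (c := Real.cos)
      (c1 := fun θ => - Real.sin θ) he.d0 ce1 Real.hasDerivAt_cos
      (by fun_prop) (by simp) (t := t) (r := r) (he.z0 _ (by linarith))
  have i2 : Phi e0 (fun θ => - Real.sin θ) t r = - Phi e0 Real.sin t r := by
    unfold Phi
    rw [← intervalIntegral.integral_neg]
    congr 1; ext θ; ring
  have i3 : Phi e1 (fun θ => Real.cos θ * Real.cos θ) t r = Phi e1 (fun θ => Real.cos θ ^ 2) t r := by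
    unfold Phi
    congr 1; ext θ; ring
  rw [i2, i3, neg_neg] at i1
  have j1 : Phi e0 Real.sin t r ^ 2 ≤ Real.pi / 2 * ∫ θ in (0:ℝ)..(Real.pi / 2),
      (e0 (r * Real.sin θ - t) * Real.sin θ) ^ 2 := cs_int (by fun_prop) hp
  have j2 : ∀ x, Phi η (fun _ => 1) 0 x ^ 2 ≤ Real.pi / 2 * ∫ φ in (0:ℝ)..(Real.pi / 2),
      η (x * Real.sin φ) ^ 2 := by
    intro x
    have := cs_int (f := fun φ => η (x * Real.sin φ)) (by fun_prop) hp
    unfold Phi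
    simpa using this
  have cc : ∀ θ, Continuous (fun φ => Real.sin θ * Real.sin φ * (η ((r * Real.sin θ - t) * Real.sin φ) ^ 2 /
      max ((r * Real.sin θ - t) * Real.sin φ) ρ)) := by
    intro θ
    have := cn.comp (show Continuous (fun φ => (r * Real.sin θ - t) * Real.sin φ) by fun_prop)
    exact (show Continuous (fun φ => Real.sin θ * Real.sin φ) by fun_prop).mul this
  have j3 : ∀ θ ∈ Icc (0:ℝ) (Real.pi / 2), (e0 (r * Real.sin θ - t) * Real.sin θ) ^ 2 ≤
      Real.pi / 2 * (r ^ 3 * ∫ φ in (0:ℝ)..(Real.pi / 2), Real.sin θ * Real.sin φ *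
      (η ((r * Real.sin θ - t) * Real.sin φ) ^ 2 / max ((r * Real.sin θ - t) * Real.sin φ) ρ)) := by
    intro θ hθ
    have k1 := j2 (r * Real.sin θ - t)
    calc (e0 (r * Real.sin θ - t) * Real.sin θ) ^ 2 =
        ((r * Real.sin θ - t) ^ 2 * Real.sin θ ^ 2) * Phi η (fun _ => 1) 0 (r * Real.sin θ - t) ^ 2 := by
          rw [he0]; ring
      _ ≤ ((r * Real.sin θ - t) ^ 2 * Real.sin θ ^ 2) * (Real.pi / 2 * ∫ φ in (0:ℝ)..(Real.pi / 2),
          η ((r * Real.sin θ - t) * Real.sin φ) ^ 2) := by gcongr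
      _ = Real.pi / 2 * ∫ φ in (0:ℝ)..(Real.pi / 2), (r * Real.sin θ - t) ^ 2 * Real.sin θ ^ 2 *
          η ((r * Real.sin θ - t) * Real.sin φ) ^ 2 := by
          rw [intervalIntegral.integral_const_mul]; ring
      _ ≤ _ := by
          refine mul_le_mul_of_nonneg_left ?_ hp.le
          rw [← intervalIntegral.integral_const_mul]
          refine intervalIntegral.integral_mono_on hp.le (Continuous.intervalIntegrable (by fun_prop) _ _)
            (((cc θ).const_mul _).intervalIntegrable _ _) ?_
          intro φ hφ
          exact ptw hρ h.lo ht hr hθ hφ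
  have cI : Continuous (fun θ => ∫ φ in (0:ℝ)..(Real.pi / 2), Real.sin θ * Real.sin φ *
      (fun y => η y ^ 2 / max y ρ) ((r * Real.sin θ - t) * Real.sin φ)) := by
    apply intervalIntegral.continuous_parametric_intervalIntegral_of_continuous'
    unfold Function.uncurry
    exact (show Continuous (fun z : ℝ × ℝ => Real.sin z.1 * Real.sin z.2) by fun_prop).mul
      (cn.comp (show Continuous (fun z : ℝ × ℝ => (r * Real.sin z.1 - t) * Real.sin z.2) by fun_prop))
  have m1 : IntervalIntegrable (fun θ => (e0 (r * Real.sin θ - t) * Real.sin θ) ^ 2) volume 0 (Real.pi / 2) :=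
    Continuous.intervalIntegrable (by fun_prop) _ _
  have m2 := ((cI.const_mul (r ^ 3)).const_mul (Real.pi / 2)).intervalIntegrable (μ := volume) 0 (Real.pi / 2)
  have j4 := intervalIntegral.integral_mono_on hp.le m1 m2 j3
  rw [intervalIntegral.integral_const_mul, intervalIntegral.integral_const_mul] at j4
  set J := ∫ θ in (0:ℝ)..(Real.pi / 2), ∫ φ in (0:ℝ)..(Real.pi / 2),
      Real.sin θ * Real.sin φ * (fun y => η y ^ 2 / max y ρ) ((r * Real.sin θ - t) * Real.sin φ) with hJ
  have j5 : (r * Phi e1 (fun θ => Real.cos θ ^ 2) t r) ^ 2 ≤ Real.pi / 2 * (Real.pi / 2 * (r ^ 3 * J)) := by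
    rw [i1]
    exact j1.trans (by gcongr)
  generalize Phi e1 (fun θ => Real.cos θ ^ 2) t r = z at j5 ⊢
  have e : (2 / Real.pi * z) ^ 2 * (1 / r) = 4 / Real.pi ^ 2 / r ^ 3 * (r * z) ^ 2 := by
    field_simp; ring
  rw [e]
  calc _ ≤ 4 / Real.pi ^ 2 / r ^ 3 * (Real.pi / 2 * (Real.pi / 2 * (r ^ 3 * J))) := by gcongr
    _ = J := by field_simp; norm_num

lemma testF_exists {ρ A1 : ℝ} {η η1 η2 η3 : ℝ → ℝ} (hρ : 0 < ρ) (hA : ρ ≤ A1) (h : Eta ρ A1 η η1 η2 η3) :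
    ∃ EX X Y Z Yt Yr Zr, TestF ρ η (Real.pi / 2 * (Real.pi / 2 * ∫ y in ρ..A1, η y ^ 2 / max y ρ))
      EX X Y Z Yt Yr Zr := by
  obtain ⟨c0, c1, c2⟩ := h.c0
  obtain ⟨e2, e3, he⟩ := eta_ech hρ h
  refine testF_main hρ hA h he ?_
  intro t ht A hA'
  have hmx : ∀ y, 0 < max y ρ := fun y => (lt_of_lt_of_le hρ (le_max_right _ _))
  have cn : Continuous (fun y => η y ^ 2 / max y ρ) :=
    (c0.pow 2).div (continuous_id.max continuous_const) (fun y => (hmx y).ne')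
  have key := triple_bound (n := fun y => η y ^ 2 / max y ρ) (t := t) cn
    (fun y => div_nonneg (sq_nonneg _) (hmx y).le) (fun y hy => by rw [h.lo y hy]; simp)
    (fun y hy => by rw [h.hi y hy]; simp) hA hA'
  refine le_trans (intervalIntegral.integral_mono_on hA' ?_ ?_ (fun a ha => X_ptw hρ h he ht
    (by linarith [ha.1] : 0 < a + t))) key
  · apply ContinuousOn.intervalIntegrable
    intro a ha
    rw [uIcc_of_le hA'] at ha
    have hpos : a + t ≠ 0 := by linarith [ha.1]
    have ce1 : Continuous (fun x => Phi (fun x => η x + x * η1 x) (fun _ => 1) 0 x) :=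
      continuous_iff_continuousAt.2 (fun x => (he.d1 x).continuousAt)
    have := (phi_cont ce1 (show Continuous (fun θ => Real.cos θ ^ 2) by fun_prop)).comp
      (show Continuous (fun a : ℝ => (t, a + t)) by fun_prop)
    apply ContinuousAt.continuousWithinAt
    exact ((this.const_mul _).pow 2).continuousAt.mul (by fun_prop (disch := assumption))
  · apply Continuous.intervalIntegrable
    apply intervalIntegral.continuous_parametric_intervalIntegral_of_continuous'
    unfold Function.uncurry
    apply intervalIntegral.continuous_parametric_intervalIntegral_of_continuous'
    unfold Function.uncurry
    exact (show Continuous (fun z : (ℝ × ℝ) × ℝ => Real.sin z.1.2 * Real.sin z.2) by fun_prop).mul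
      (cn.comp (show Continuous (fun z : (ℝ × ℝ) × ℝ => ((z.1.1 + t) * Real.sin z.1.2 - t) * Real.sin z.2) by fun_prop))


lemma eta_of_smooth {ρ A1 : ℝ} {η : ℝ → ℝ} (hη : ContDiff ℝ ((3:ℕ):WithTop ℕ∞) η)
    (lo : ∀ x, x ≤ ρ → η x = 0) (hi : ∀ x, A1 ≤ x → η x = 0) (mean : ∫ x in ρ..A1, η x = 0) :
    Eta ρ A1 η (deriv η) (deriv (deriv η)) (deriv (deriv (deriv η))) := by
  have h1 : ContDiff ℝ ((2:ℕ):WithTop ℕ∞) (deriv η) := ContDiff.iterate_deriv' 2 1 hη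
  have h2 : ContDiff ℝ ((1:ℕ):WithTop ℕ∞) (deriv (deriv η)) := ContDiff.iterate_deriv' 1 1 h1
  have h3 : ContDiff ℝ ((0:ℕ):WithTop ℕ∞) (deriv (deriv (deriv η))) := ContDiff.iterate_deriv' 0 1 h2
  exact ⟨fun x => (hη.differentiable (by simp) x).hasDerivAt,
    fun x => (h1.differentiable (by simp) x).hasDerivAt,
    fun x => (h2.differentiable (by simp) x).hasDerivAt, h3.continuous, lo, hi, mean⟩

lemma cutoff_ex {ρ ρ1 A : ℝ} (h1 : ρ < ρ1) (h2 : ρ1 < A) :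
    ∃ ω : ℝ → ℝ, ∃ l B : ℝ, ρ < l ∧ ρ1 ≤ B ∧ A ≤ B ∧ ContDiff ℝ ((3:ℕ):WithTop ℕ∞) ω ∧ (∀ x, 0 ≤ ω x ∧ ω x ≤ 1) ∧
      (∀ x, x ≤ l → ω x = 0) ∧ (∀ x, B ≤ x → ω x = 0) ∧ ∀ x ∈ Icc ρ1 A, ω x = 1 := by
  let f : ContDiffBump ((ρ1 + A) / 2) := ⟨(A - ρ1) / 2, (A - ρ1) / 2 + (ρ1 - ρ) / 2, by linarith, by linarith⟩
  have hO : f.rOut = (A - ρ1) / 2 + (ρ1 - ρ) / 2 := rfl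
  have hI : f.rIn = (A - ρ1) / 2 := rfl
  refine ⟨f, ρ1 - (ρ1 - ρ) / 2, A + (ρ1 - ρ) / 2, by linarith, by linarith, by linarith,
    f.contDiff (n := ((3:ℕ):ℕ∞)), fun x => ⟨f.nonneg, f.le_one⟩, ?_, ?_, ?_⟩
  · intro x hx
    apply f.zero_of_le_dist
    rw [Real.dist_eq, hO]
    refine le_trans ?_ (neg_le_abs _)
    linarith
  · intro x hx
    apply f.zero_of_le_dist
    rw [Real.dist_eq, hO]
    refine le_trans ?_ (le_abs_self _)
    linarith
  · intro x hx
    apply f.one_of_mem_closedBall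
    rw [Metric.mem_closedBall, Real.dist_eq, hI, abs_le]
    constructor <;> linarith [hx.1, hx.2]

lemma bump_ex {n : ℝ} (hn : 0 < n) :
    ∃ β : ℝ → ℝ, ContDiff ℝ ((3:ℕ):WithTop ℕ∞) β ∧ (∀ x, 0 ≤ β x ∧ β x ≤ 2 / n) ∧
      (∀ x, x ≤ n → β x = 0) ∧ (∀ x, 2 * n ≤ x → β x = 0) ∧ ∫ x in n..(2 * n), β x = 1 := by
  let f : ContDiffBump (3 * n / 2) := ⟨n / 4, n / 2, by linarith, by linarith⟩
  have hO : f.rOut = n / 2 := rfl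
  have hI : f.rIn = n / 4 := rfl
  have hs : ∀ x, f.normed volume x ≠ 0 → x ∈ Ioo n (2 * n) := by
    intro x hx
    have : x ∈ Function.support (f.normed volume) := hx
    rw [f.support_normed_eq, Metric.mem_ball, Real.dist_eq, hO, abs_lt] at this
    constructor <;> linarith [this.1, this.2]
  refine ⟨f.normed volume, f.contDiff_normed (n := ((3:ℕ):ℕ∞)), fun x => ⟨f.nonneg_normed x, ?_⟩, ?_, ?_, ?_⟩
  · refine (f.normed_le_div_measure_closedBall_rIn volume x).trans ?_
    rw [hI, Real.volume_real_closedBall (by positivity)]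
    apply le_of_eq
    field_simp; norm_num
  · intro x hx
    by_contra hc
    linarith [(hs x hc).1]
  · intro x hx
    by_contra hc
    linarith [(hs x hc).2]
  · rw [intervalIntegral.integral_eq_integral_of_support_subset]
    · exact f.integral_normed
    · intro x hx
      exact ⟨(hs x hx).1, (hs x hx).2.le⟩

lemma tail_small {f : ℝ → ℝ} (hf : Continuous f) {ρ M : ℝ} (h0 : ∀ x, ρ ≤ x → 0 ≤ f x)
    (hM : ∀ A, ρ ≤ A → ∫ x in ρ..A, f x ≤ M) {ε : ℝ} (hε : 0 < ε) :
    ∃ n0, ρ ≤ n0 ∧ ∀ n, n0 ≤ n → ∀ A, n ≤ A → ∫ x in n..A, f x ≤ ε := by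
  set S := {y | ∃ A, ρ ≤ A ∧ y = ∫ x in ρ..A, f x} with hS
  have hb : BddAbove S := ⟨M, by rintro y ⟨A, hA, rfl⟩; exact hM A hA⟩
  have hne : S.Nonempty := ⟨_, ρ, le_rfl, rfl⟩
  obtain ⟨y, ⟨n0, hn0, rfl⟩, hy⟩ := exists_lt_of_lt_csSup hne (show sSup S - ε < sSup S by linarith)
  refine ⟨n0, hn0, fun n hn A hA => ?_⟩
  have h1 : ∫ x in ρ..A, f x ≤ sSup S := le_csSup hb ⟨A, by linarith, rfl⟩
  have h2 := intervalIntegral.integral_add_adjacent_intervals (hf.intervalIntegrable (μ := volume) ρ n)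
    (hf.intervalIntegrable n A)
  have h3 := intervalIntegral.integral_add_adjacent_intervals (hf.intervalIntegrable (μ := volume) ρ n0)
    (hf.intervalIntegrable n0 n)
  have h4 : 0 ≤ ∫ x in n0..n, f x :=
    intervalIntegral.integral_nonneg hn (fun x hx => h0 x (hn0.trans hx.1))
  linarith

lemma int_ext_zero {f : ℝ → ℝ} (hf : Continuous f) {a b c : ℝ} (hbc : b ≤ c) (hz : ∀ x, b ≤ x → f x = 0) :
    ∫ x in a..c, f x = ∫ x in a..b, f x := by
  rw [← intervalIntegral.integral_add_adjacent_intervals (hf.intervalIntegrable a b)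
    (hf.intervalIntegrable b c), add_eq_left, intervalIntegral.integral_congr (g := fun _ => (0:ℝ))]
  · simp
  · intro s hs
    rw [uIcc_of_le hbc] at hs
    exact hz s hs.1

lemma int_ext_zero_lo {f : ℝ → ℝ} (hf : Continuous f) {a b c : ℝ} (hab : a ≤ b) (hz : ∀ x, x ≤ b → f x = 0) :
    ∫ x in a..c, f x = ∫ x in b..c, f x := by
  rw [← intervalIntegral.integral_add_adjacent_intervals (hf.intervalIntegrable a b)
    (hf.intervalIntegrable b c), add_eq_right, intervalIntegral.integral_congr (g := fun _ => (0:ℝ))]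
  · simp
  · intro s hs
    rw [uIcc_of_le hab] at hs
    exact hz s hs.2

lemma beta_pair {W β : ℝ → ℝ} {n δ : ℝ} (hn : 0 < n) (hW : Continuous W) (cβ : Continuous β) (hδ : 0 < δ)
    (hb : ∀ x, 0 ≤ β x ∧ β x ≤ 2 / n) (hint : ∫ x in n..(2 * n), β x = 1)
    (ht : ∫ x in n..(2 * n), W x ^ 2 * x ^ 3 ≤ δ ^ 2) :
    |∫ x in n..(2 * n), W x * x ^ 2 * β x| ≤ 3 * δ := by
  have h2n : n ≤ 2 * n := by linarith
  have h1 : ‖∫ x in n..(2 * n), W x * x ^ 2 * β x‖ ≤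
      ∫ x in n..(2 * n), (1 / (2 * δ) * (W x ^ 2 * x ^ 3) + 2 * δ * β x) := by
    apply intervalIntegral.norm_integral_le_of_norm_le h2n
    · filter_upwards with x hx
      have hx0 : 0 < x := by linarith [hx.1]
      obtain ⟨b0, b1⟩ := hb x
      rw [Real.norm_eq_abs]
      have e1 : x * β x ≤ 4 := by
        calc x * β x ≤ (2 * n) * (2 / n) := by
              have := hx.2
              gcongr
          _ = 4 := by field_simp; norm_num
      have e2 : |W x * x ^ 2 * β x| = |W x| * x ^ 2 * β x := by
        rw [abs_mul, abs_mul, abs_of_nonneg b0, abs_of_nonneg (sq_nonneg x)]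
      rw [e2, ← sq_abs (W x)]
      have e3 : |W x| * x ^ 2 * β x ≤ 1 / (2 * δ) * (|W x| ^ 2 * x ^ 3) + δ / 2 * (x * β x ^ 2) := by
        have : 0 ≤ x / (2 * δ) * (|W x| * x - δ * β x) ^ 2 := by positivity
        have e : x / (2 * δ) * (|W x| * x - δ * β x) ^ 2 = 1 / (2 * δ) * (|W x| ^ 2 * x ^ 3) + δ / 2 * (x * β x ^ 2) - |W x| * x ^ 2 * β x := by
          field_simp; ring
        linarith
      have e4 : δ / 2 * (x * β x ^ 2) ≤ 2 * δ * β x := by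
        have : δ / 2 * (x * β x ^ 2) = δ / 2 * (x * β x) * β x := by ring
        rw [this]
        have : δ / 2 * (x * β x) ≤ δ / 2 * 4 := by gcongr
        nlinarith
      linarith
    · exact Continuous.intervalIntegrable (by fun_prop) _ _
  rw [intervalIntegral.integral_add (Continuous.intervalIntegrable (by fun_prop) _ _)
    (Continuous.intervalIntegrable (by fun_prop) _ _), intervalIntegral.integral_const_mul,
    intervalIntegral.integral_const_mul, hint] at h1
  refine h1.trans ?_
  have : 1 / (2 * δ) * (∫ x in n..(2 * n), W x ^ 2 * x ^ 3) ≤ 1 / (2 * δ) * δ ^ 2 := by gcongr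
  have e : 1 / (2 * δ) * δ ^ 2 = δ / 2 := by field_simp
  linarith

set_option maxHeartbeats 1600000 in
lemma key_est {W : ℝ → ℝ} {ρ M κ K : ℝ} (hρ : 0 < ρ) (hW : Continuous W)
    (hWs : ContDiffOn ℝ ((3:ℕ):WithTop ℕ∞) W (Ioi ρ)) (hκ : 0 < κ)
    (hM : ∀ A, ρ ≤ A → ∫ x in ρ..A, W x ^ 2 * x ^ 3 ≤ M)
    (hB : ∀ A1, ρ ≤ A1 → ∀ η : ℝ → ℝ, ContDiff ℝ ((3:ℕ):WithTop ℕ∞) η → (∀ x, x ≤ ρ → η x = 0) →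
      (∀ x, A1 ≤ x → η x = 0) → (∫ x in ρ..A1, η x = 0) →
      |∫ a in ρ..A1, W a * a ^ 2 * η a| ≤ κ * (K ^ 2 + 4 * ∫ y in ρ..A1, η y ^ 2 / max y ρ))
    {ρ1 A : ℝ} (h1 : ρ < ρ1) (h2 : ρ1 < A) :
    ∫ x in ρ1..A, x * (x ^ 2 * W x) ^ 2 ≤ 16 * κ ^ 2 * K ^ 2 := by
  obtain ⟨ω, l, B, hl, hB1, hAB, sω, bω, loω, hiω, oneω⟩ := cutoff_ex h1 h2
  have cω : Continuous ω := sω.continuous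
  set g : ℝ → ℝ := fun x => x * (x ^ 2 * W x) * ω x with hg
  have cg : Continuous g := by rw [hg]; fun_prop
  have sg : ContDiff ℝ ((3:ℕ):WithTop ℕ∞) g := by
    rw [contDiff_iff_contDiffAt]
    intro x
    rcases lt_or_ge x l with hx | hx
    · have : g =ᶠ[nhds x] fun _ => 0 := by
        filter_upwards [Iio_mem_nhds hx] with y hy
        rw [hg]; simp only; rw [loω y (le_of_lt hy), mul_zero]
      exact contDiffAt_const.congr_of_eventuallyEq this
    · have hW' : ContDiffAt ℝ ((3:ℕ):WithTop ℕ∞) W x := hWs.contDiffAt (Ioi_mem_nhds (by linarith))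
      exact (contDiffAt_id.mul ((contDiffAt_id.pow 2).mul hW')).mul sω.contDiffAt
  have log : ∀ x, x ≤ ρ → g x = 0 := fun x hx => by
    rw [hg]; simp only; rw [loω x (by linarith), mul_zero]
  have hig : ∀ x, B ≤ x → g x = 0 := fun x hx => by
    rw [hg]; simp only; rw [hiω x hx, mul_zero]
  set μ : ℝ := 1 / (8 * κ) with hμ
  have hμ0 : 0 < μ := by positivity
  set G := ∫ x in ρ..B, g x with hG
  set I := ∫ x in ρ..B, x * (x ^ 2 * W x) ^ 2 * ω x with hI
  set c := μ * G with hc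
  have hρB : ρ ≤ B := by linarith
  have hmain : μ * I / 2 ≤ κ * K ^ 2 := by
    apply le_of_forall_pos_le_add
    intro ε hε
    -- choice of the far bump
    set δ := ε / 2 / (3 * (|c| + 1)) with hδ
    have hδ0 : 0 < δ := by positivity
    obtain ⟨n0, hn0, htail⟩ := tail_small (f := fun x => W x ^ 2 * x ^ 3) (by fun_prop)
      (fun x hx => by have : 0 < x := by linarith
                      positivity) hM (show 0 < δ ^ 2 by positivity)
    set n := max (max n0 B) (16 * κ * c ^ 2 / ρ / ε) with hn
    have hnn0 : n0 ≤ n := (le_max_left _ _).trans (le_max_left _ _)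
    have hnB : B ≤ n := (le_max_right _ _).trans (le_max_left _ _)
    have hnε : 16 * κ * c ^ 2 / ρ / ε ≤ n := le_max_right _ _
    have hn1 : 0 < n := by linarith
    obtain ⟨β, sβ, bβ, loβ, hiβ, intβ⟩ := bump_ex hn1
    have cβ : Continuous β := sβ.continuous
    have hρn : ρ ≤ n := by linarith
    have hbp := beta_pair hn1 hW cβ hδ0 bβ intβ (htail n hnn0 (2 * n) (by linarith))
    set A1 := 2 * n with hA1
    have hnA : n ≤ A1 := by linarith
    have iβ : ∫ x in ρ..A1, β x = 1 := by rw [int_ext_zero_lo cβ hρn loβ, intβ]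
    have ig : ∫ x in ρ..A1, g x = G := int_ext_zero cg (by linarith) hig
    have hmx : ∀ y, 0 < max y ρ := fun y => (lt_of_lt_of_le hρ (le_max_right _ _))
    have hη := hB A1 (by linarith) (fun x => μ * g x - c * β x)
      ((contDiff_const.mul sg).sub (contDiff_const.mul sβ))
      (fun x hx => by rw [log x hx, loβ x (by linarith)]; ring)
      (fun x hx => by rw [hig x (by linarith), hiβ x hx]; ring)
      (by
        rw [intervalIntegral.integral_sub (Continuous.intervalIntegrable (by fun_prop) _ _)
          (Continuous.intervalIntegrable (by fun_prop) _ _), intervalIntegral.integral_const_mul,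
          intervalIntegral.integral_const_mul, ig, iβ, hc]
        ring)
    have q1 : ∫ a in ρ..A1, W a * a ^ 2 * (μ * g a - c * β a) = μ * I - c * ∫ x in n..A1, W x * x ^ 2 * β x := by
      have e : ∀ a, W a * a ^ 2 * (μ * g a - c * β a) = μ * (a * (a ^ 2 * W a) ^ 2 * ω a) - c * (W a * a ^ 2 * β a) := by
        intro a; rw [hg]; ring
      simp_rw [e]
      rw [intervalIntegral.integral_sub (Continuous.intervalIntegrable (by fun_prop) _ _)
          (Continuous.intervalIntegrable (by fun_prop) _ _), intervalIntegral.integral_const_mul,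
          intervalIntegral.integral_const_mul, int_ext_zero (by fun_prop) (by linarith : B ≤ A1)
          (fun x hx => by rw [hiω x hx, mul_zero]),
          int_ext_zero_lo (b := n) (f := fun a => W a * a ^ 2 * β a) (by fun_prop) hρn
          (fun x hx => by rw [loβ x hx, mul_zero])]
    have q2 : ∫ y in ρ..A1, (μ * g y - c * β y) ^ 2 / max y ρ ≤ μ ^ 2 * I + c ^ 2 * (2 / n / ρ) := by
      have e : ∫ y in ρ..A1, (μ ^ 2 * (y * (y ^ 2 * W y) ^ 2 * ω y) + c ^ 2 * (2 / n / ρ) * β y) =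
          μ ^ 2 * I + c ^ 2 * (2 / n / ρ) := by
        rw [intervalIntegral.integral_add (Continuous.intervalIntegrable (by fun_prop) _ _)
          (Continuous.intervalIntegrable (by fun_prop) _ _), intervalIntegral.integral_const_mul,
          intervalIntegral.integral_const_mul, int_ext_zero (by fun_prop) (by linarith : B ≤ A1)
          (fun x hx => by rw [hiω x hx, mul_zero]), iβ, mul_one]
      rw [← e]
      refine intervalIntegral.integral_mono_on (by linarith) ?_ (Continuous.intervalIntegrable (by fun_prop) _ _) ?_
      · apply Continuous.intervalIntegrable
        exact Continuous.div (by fun_prop) (continuous_id.max continuous_const) (fun y => (hmx y).ne')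
      intro y hy
      have hy0 : 0 < y := by linarith [hy.1]
      rw [max_eq_left hy.1]
      obtain ⟨b0, b1⟩ := bβ y
      obtain ⟨w0, w1⟩ := bω y
      have e1 : (μ * g y - c * β y) ^ 2 = μ ^ 2 * g y ^ 2 + c ^ 2 * β y ^ 2 := by
        rcases le_total y n with hyn | hyn
        · rw [loβ y hyn]; ring
        · rw [hig y (by linarith)]; ring
      rw [e1, add_div]
      apply add_le_add
      · have : μ ^ 2 * g y ^ 2 / y = μ ^ 2 * (y * (y ^ 2 * W y) ^ 2 * ω y ^ 2) := by
          rw [hg]; field_simp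
        rw [this]
        have : ω y ^ 2 ≤ ω y := by rw [pow_two]; exact mul_le_of_le_one_left w0 w1
        gcongr
      · have : c ^ 2 * (2 / n / ρ) * β y = c ^ 2 * ((2 / n) * β y) / ρ := by ring
        rw [this]
        have hyρ := hy.1
        have : β y ^ 2 ≤ 2 / n * β y := by rw [pow_two]; gcongr
        gcongr
    rw [q1] at hη
    have q3 := (le_abs_self _).trans hη
    have q4 : c * ∫ x in n..A1, W x * x ^ 2 * β x ≤ ε / 2 := by
      calc _ ≤ |c * ∫ x in n..A1, W x * x ^ 2 * β x| := le_abs_self _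
        _ = |c| * |∫ x in n..A1, W x * x ^ 2 * β x| := abs_mul _ _
        _ ≤ (|c| + 1) * (3 * δ) := by gcongr; linarith
        _ = ε / 2 := by rw [hδ]; field_simp
    have q5 : κ * (4 * (c ^ 2 * (2 / n / ρ))) ≤ ε / 2 := by
      rw [div_le_iff₀ hε] at hnε
      have : κ * (4 * (c ^ 2 * (2 / n / ρ))) = (16 * κ * c ^ 2 / ρ) / n / 2 := by field_simp; ring
      rw [this]
      have : 16 * κ * c ^ 2 / ρ / n ≤ ε := by rw [div_le_iff₀ hn1]; linarith
      linarith
    have q6 : κ * (4 * (μ ^ 2 * I)) = μ * I / 2 := by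
      rw [hμ]; field_simp; ring
    have q7 : κ * (K ^ 2 + 4 * ∫ y in ρ..A1, (μ * g y - c * β y) ^ 2 / max y ρ) ≤
      κ * (K ^ 2 + 4 * (μ ^ 2 * I + c ^ 2 * (2 / n / ρ))) := by gcongr
    have q8 : κ * (K ^ 2 + 4 * (μ ^ 2 * I + c ^ 2 * (2 / n / ρ))) =
      κ * K ^ 2 + κ * (4 * (μ ^ 2 * I)) + κ * (4 * (c ^ 2 * (2 / n / ρ))) := by ring
    linarith
  have hI2 : ∫ x in ρ1..A, x * (x ^ 2 * W x) ^ 2 ≤ I := by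
    have : ∫ x in ρ1..A, x * (x ^ 2 * W x) ^ 2 = ∫ x in ρ1..A, x * (x ^ 2 * W x) ^ 2 * ω x := by
      apply intervalIntegral.integral_congr
      intro x hx
      rw [uIcc_of_le h2.le] at hx
      simp only
      rw [oneω x hx, mul_one]
    rw [this]
    apply intervalIntegral.integral_mono_interval h1.le h2.le hAB
    · filter_upwards [ae_restrict_mem measurableSet_Ioc] with x hx
      have : 0 < x := by linarith [hx.1]
      have := (bω x).1
      simp only [Pi.zero_apply]
      positivity
    · exact Continuous.intervalIntegrable (by fun_prop) _ _
  have : I ≤ 16 * κ ^ 2 * K ^ 2 := by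
    have e : μ * I / 2 = I / (16 * κ) := by rw [hμ]; field_simp; ring
    rw [e, div_le_iff₀ (by positivity)] at hmain
    nlinarith
  linarith


lemma lim_left {f : ℝ → ℝ} (hf : Continuous f) {ρ A m : ℝ} (hA : ρ < A)
    (h : ∀ ρ1, ρ < ρ1 → ρ1 < A → ∫ x in ρ1..A, f x ≤ m) : ∫ x in ρ..A, f x ≤ m := by
  have c : Continuous (fun ρ1 => ∫ x in ρ1..A, f x) := by
    have : (fun ρ1 => ∫ x in ρ1..A, f x) = fun ρ1 => - ∫ x in A..ρ1, f x := by
      ext y; rw [intervalIntegral.integral_symm]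
    rw [this]
    exact (intervalIntegral.continuous_primitive (fun a b => hf.intervalIntegrable a b) A).neg
  have t : Tendsto (fun ρ1 => ∫ x in ρ1..A, f x) (nhdsWithin ρ (Ioi ρ)) (nhds (∫ x in ρ..A, f x)) :=
    (c.tendsto ρ).mono_left nhdsWithin_le_nhds
  refine le_of_tendsto t ?_
  filter_upwards [Ioo_mem_nhdsGT hA] with x hx
  exact h x hx.1 hx.2

lemma half_step {p : ℕ} {R : ℝ} {u v q vt vr qr : ℝ → ℝ → ℝ} (hS : Sol p R u v q vt vr qr)
    (hR : 0 < R) (hp : 1 ≤ p) {ρ K D : ℝ} (hρ : R < ρ) (hK : 0 < K) (hD : 0 < D)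
    (hV : ContDiffOn ℝ ((3:ℕ):WithTop ℕ∞) (v 0) (Ioi R))
    (hE : EB v q ρ (K ^ 2))
    (hvan : ∀ ε > 0, ∃ T0, 0 ≤ T0 ∧ ∀ T ≥ T0, ∀ A ≥ ρ,
      ∫ a in ρ..A, (v T (a + T) ^ 2 + q T (a + T) ^ 2) * (a + T) ^ 3 ≤ ε)
    (hd0 : ∀ r, R < r → u 0 r = 0)
    (hDb : ∀ t r, 0 ≤ t → ρ + t ≤ r → |u t r| ^ (p - 1) ≤ D / r ^ 4)
    (hsmall : 4 * (p:ℝ) ^ 2 * D ^ 2 / ρ ^ 4 + 2 * D / ρ ^ 2 ≤ 1 / 4) :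
    EB v q ρ ((K / 2) ^ 2) := by
  have hρ0 : 0 < ρ := by linarith
  have hp0 : (0:ℝ) < p := by exact_mod_cast hp
  set W : ℝ → ℝ := fun x => v 0 (max x ρ) with hW
  have cW : Continuous W := by
    have := hV.continuousOn.comp (continuous_id.max (continuous_const (y := ρ))).continuousOn
      (s := univ) (fun x _ => lt_of_lt_of_le hρ (le_max_right _ _))
    exact continuousOn_univ.1 this
  have eW : ∀ x, ρ ≤ x → W x = v 0 x := fun x hx => by rw [hW]; simp only; rw [max_eq_left hx]
  have sW : ContDiffOn ℝ ((3:ℕ):WithTop ℕ∞) W (Ioi ρ) :=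
    (hV.mono (Ioi_subset_Ioi hρ.le)).congr (fun x hx => eW x (le_of_lt hx))
  have hM : ∀ A, ρ ≤ A → ∫ x in ρ..A, W x ^ 2 * x ^ 3 ≤ K ^ 2 := by
    intro A hA
    have h1 := hE 0 le_rfl A hA
    simp only [add_zero] at h1
    refine le_trans (intervalIntegral.integral_mono_on hA (Continuous.intervalIntegrable (by fun_prop) _ _) ?_ ?_) h1
    · apply ContinuousOn.intervalIntegrable
      intro a ha
      rw [uIcc_of_le hA] at ha
      have hRa : R + |(0:ℝ)| < a := by rw [abs_zero]; linarith [ha.1]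
      apply ContinuousAt.continuousWithinAt
      have k1 := (hS.hv 0 a hRa).dr.continuousAt
      have k2 := (hS.hq 0 a hRa).dr.continuousAt
      exact ((k1.pow 2).add (k2.pow 2)).mul (by fun_prop)
    · intro x hx
      have : 0 < x := by linarith [hx.1]
      rw [eW x hx.1]
      gcongr
      linarith [sq_nonneg (q 0 x)]
  set κ : ℝ := 1 / 2 * p * D * (1 / ρ) with hκ
  have hκ0 : 0 < κ := by positivity
  have hB : ∀ A1, ρ ≤ A1 → ∀ η : ℝ → ℝ, ContDiff ℝ ((3:ℕ):WithTop ℕ∞) η → (∀ x, x ≤ ρ → η x = 0) →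
      (∀ x, A1 ≤ x → η x = 0) → (∫ x in ρ..A1, η x = 0) →
      |∫ a in ρ..A1, W a * a ^ 2 * η a| ≤ κ * (K ^ 2 + 4 * ∫ y in ρ..A1, η y ^ 2 / max y ρ) := by
    intro A1 hA1 η sη lo hi mean
    obtain ⟨EX, X, Y, Z, Yt, Yr, Zr, hF⟩ := testF_exists hρ0 hA1 (eta_of_smooth sη lo hi mean)
    have hb := bilin hS hR hp hρ hK hD.le hE hvan hd0 hDb hF hA1 hi
    have e : ∫ a in ρ..A1, W a * a ^ 2 * η a = ∫ a in ρ..A1, v 0 a * a ^ 2 * η a := by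
      apply intervalIntegral.integral_congr
      intro x hx
      rw [uIcc_of_le hA1] at hx
      simp only
      rw [eW x hx.1]
    rw [e]
    refine hb.trans ?_
    have hJ : 0 ≤ ∫ y in ρ..A1, η y ^ 2 / max y ρ :=
      intervalIntegral.integral_nonneg hA1 (fun y _ => div_nonneg (sq_nonneg _)
        (hρ0.le.trans (le_max_right _ _)))
    generalize (∫ y in ρ..A1, η y ^ 2 / max y ρ) = J at hJ ⊢
    have hpi4 : Real.pi / 2 ≤ 2 := by linarith [Real.pi_le_four]
    have hpi0 := Real.pi_pos
    have h4 : Real.pi / 2 * (Real.pi / 2 * J) ≤ 4 * J := by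
      calc Real.pi / 2 * (Real.pi / 2 * J) ≤ 2 * (2 * J) := by gcongr
        _ = 4 * J := by ring
    calc 1 / 2 * p * D * (K ^ 2 + Real.pi / 2 * (Real.pi / 2 * J)) * (1 / ρ)
        = κ * (K ^ 2 + Real.pi / 2 * (Real.pi / 2 * J)) := by rw [hκ]; ring
      _ ≤ κ * (K ^ 2 + 4 * J) := by gcongr
  have hm : ∀ A, ρ ≤ A → ∫ r in ρ..A, v 0 r ^ 2 * r ^ 3 ≤ 4 * (p:ℝ) ^ 2 * D ^ 2 / ρ ^ 4 * K ^ 2 := by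
    intro A hA
    rcases hA.eq_or_lt with rfl | hA
    · rw [intervalIntegral.integral_same]; positivity
    have e : ∫ r in ρ..A, v 0 r ^ 2 * r ^ 3 = ∫ r in ρ..A, W r ^ 2 * r ^ 3 := by
      apply intervalIntegral.integral_congr
      intro x hx
      rw [uIcc_of_le hA.le] at hx
      simp only
      rw [eW x hx.1]
    rw [e]
    apply lim_left (by fun_prop) hA
    intro ρ1 h1 h2
    have key := key_est hρ0 cW sW hκ0 hM hB h1 h2
    have l1 : ∫ x in ρ1..A, W x ^ 2 * x ^ 3 ≤ ∫ x in ρ1..A, 1 / ρ ^ 2 * (x * (x ^ 2 * W x) ^ 2) := by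
      refine intervalIntegral.integral_mono_on h2.le (Continuous.intervalIntegrable (by fun_prop) _ _)
        (Continuous.intervalIntegrable (by fun_prop) _ _) ?_
      intro x hx
      have hx0 : 0 < x := by linarith [hx.1]
      have hx1 : ρ ≤ x := by linarith [hx.1]
      have e1 : 1 / ρ ^ 2 * (x * (x ^ 2 * W x) ^ 2) = x ^ 2 / ρ ^ 2 * (W x ^ 2 * x ^ 3) := by ring
      rw [e1]
      have e2 : 1 ≤ x ^ 2 / ρ ^ 2 := by
        rw [le_div_iff₀ (by positivity), one_mul]; gcongr
      exact le_mul_of_one_le_left (by positivity) e2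
    rw [intervalIntegral.integral_const_mul] at l1
    refine l1.trans ?_
    calc 1 / ρ ^ 2 * (∫ x in ρ1..A, x * (x ^ 2 * W x) ^ 2) ≤ 1 / ρ ^ 2 * (16 * κ ^ 2 * K ^ 2) := by gcongr
      _ = _ := by rw [hκ]; field_simp; ring
  have := energy_step hS hR hp hρ hK hD.le hE hd0 hDb hm
  intro t ht A hA
  refine (this t ht A hA).trans ?_
  calc _ = (4 * (p:ℝ) ^ 2 * D ^ 2 / ρ ^ 4 + 2 * D / ρ ^ 2) * K ^ 2 := by ring
    _ ≤ 1 / 4 * K ^ 2 := by gcongr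
    _ = _ := by ring

lemma data_zero {p : ℕ} (hp5 : 5 ≤ p) {R : ℝ} {u v q vt vr qr : ℝ → ℝ → ℝ} (hS : Sol p R u v q vt vr qr)
    (hR : 0 < R) (hV : ContDiffOn ℝ ((3:ℕ):WithTop ℕ∞) (v 0) (Ioi R)) {M : ℝ} (hM : 0 < M)
    (hap : ∀ ρ, R < ρ → EB v q ρ M ∧ ∀ ε > 0, ∃ T0, 0 ≤ T0 ∧ ∀ T ≥ T0, ∀ A ≥ ρ,
      ∫ a in ρ..A, (v T (a + T) ^ 2 + q T (a + T) ^ 2) * (a + T) ^ 3 ≤ ε)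
    (hd0 : ∀ r, R < r → u 0 r = 0) :
    ∃ ρ, R < ρ ∧ ∀ r, ρ < r → v 0 r = 0 := by
  set K := Real.sqrt M with hK
  have hK0 : 0 < K := Real.sqrt_pos.2 hM
  have hKM : K ^ 2 = M := Real.sq_sqrt hM.le
  set D := K ^ (p - 1) with hD
  have hD0 : 0 < D := by positivity
  have hp0 : (0:ℝ) < p := by exact_mod_cast (by omega : 0 < p)
  set ρ := R + 1 + 16 * D + 8 * p * D with hρd
  have hpD : 0 < 8 * p * D := by positivity
  have hρ : R < ρ := by linarith
  have hρ1 : 1 ≤ ρ := by linarith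
  have hρ0 : 0 < ρ := by linarith
  obtain ⟨hE, hvan⟩ := hap ρ hρ
  rw [← hKM] at hE
  have hDb : ∀ t r, 0 ≤ t → ρ + t ≤ r → |u t r| ^ (p - 1) ≤ D / r ^ 4 := by
    intro t r ht hr
    have hr1 : 1 ≤ r := by linarith
    have hr0 : 0 < r := by linarith
    calc |u t r| ^ (p - 1) ≤ (K / r) ^ (p - 1) := by
          gcongr
          exact u_bound hS hR hρ hK0 hE hd0 ht hr
      _ = D / r ^ (p - 1) := by rw [div_pow]
      _ ≤ D / r ^ 4 := by
          gcongr
          omega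
  have hsmall : 4 * (p:ℝ) ^ 2 * D ^ 2 / ρ ^ 4 + 2 * D / ρ ^ 2 ≤ 1 / 4 := by
    have a1 : 2 * D / ρ ^ 2 ≤ 1 / 8 := by
      rw [div_le_iff₀ (by positivity)]
      have : ρ ≤ ρ ^ 2 := by rw [pow_two]; exact le_mul_of_one_le_left hρ0.le hρ1
      linarith
    have a2 : 4 * (p:ℝ) ^ 2 * D ^ 2 / ρ ^ 4 ≤ 1 / 8 := by
      rw [div_le_iff₀ (by positivity)]
      have b1 : ρ ^ 2 ≤ ρ ^ 4 := pow_le_pow_right₀ hρ1 (by norm_num)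
      have b2 : (8 * p * D) ^ 2 ≤ ρ ^ 2 := by
        gcongr
        linarith
      have b3 : (8 * p * D) ^ 2 = 64 * ((p:ℝ) ^ 2 * D ^ 2) := by ring
      have b4 : 0 ≤ (p:ℝ) ^ 2 * D ^ 2 := by positivity
      linarith
    linarith
  have hit : ∀ k : ℕ, EB v q ρ ((K / 2 ^ k) ^ 2) := by
    intro k
    induction k with
    | zero => simpa using hE
    | succ k ih =>
      have := half_step hS hR (by omega) hρ (by positivity : 0 < K / 2 ^ k) hD0 hV ih hvan hd0 hDb hsmall
      rwa [show K / 2 ^ k / 2 = K / 2 ^ (k + 1) by rw [pow_succ]; field_simp] at this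
  refine ⟨ρ, hρ, fun r hr => ?_⟩
  by_contra hne
  have hc : ContinuousOn (fun a => (v 0 (a + 0) ^ 2 + q 0 (a + 0) ^ 2) * (a + 0) ^ 3) (Icc ρ r) := by
    intro a ha
    have hRa : R + |(0:ℝ)| < a := by rw [abs_zero]; linarith [ha.1]
    apply ContinuousAt.continuousWithinAt
    have k1 := (hS.hv 0 a hRa).dr.continuousAt
    have k2 := (hS.hq 0 a hRa).dr.continuousAt
    simp only [add_zero]
    exact ((k1.pow 2).add (k2.pow 2)).mul (by fun_prop)
  have hpos := intervalIntegral.integral_pos hr hc (by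
    intro x hx
    have : 0 < x + 0 := by linarith [hx.1]
    positivity) ⟨r, ⟨hr.le, le_rfl⟩, by
      simp only [add_zero]
      have : 0 < r := by linarith
      positivity⟩
  have hle : ∀ k : ℕ, ∫ a in ρ..r, (v 0 (a + 0) ^ 2 + q 0 (a + 0) ^ 2) * (a + 0) ^ 3 ≤ (K / 2 ^ k) ^ 2 :=
    fun k => hit k 0 le_rfl r hr.le
  have ht : Tendsto (fun k : ℕ => (K / 2 ^ k) ^ 2) atTop (nhds 0) := by
    have h1 : Tendsto (fun k : ℕ => K * (1 / 2 : ℝ) ^ k) atTop (nhds (K * 0)) :=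
      (tendsto_pow_atTop_nhds_zero_of_lt_one (by norm_num) (by norm_num)).const_mul K
    have h2 := h1.pow 2
    simp only [mul_zero, ne_eq, OfNat.ofNat_ne_zero, not_false_eq_true, zero_pow] at h2
    refine h2.congr (fun k => ?_)
    rw [one_div, inv_pow]; rfl
  have := ge_of_tendsto' ht hle
  linarith

theorem stmt13 (p : ℕ) (hodd : Odd p) (hp5 : 5 ≤ p) (R : ℝ) (hR : 0 < R)
    (u : ℝ → ℝ → ℝ) (u₁ : ℝ → ℝ)
    (hsol : IsExtSol p ⊤ R u)
    (hdata0 : ∀ r : ℝ, R < r → u 0 r = 0)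
    (hdata1 : ∀ r : ℝ, R < r → dtu u 0 r = u₁ r)
    (hu₁ : (∫⁻ r in Ioi R, ENNReal.ofReal ((u₁ r) ^ 2 * r ^ 3)) < ⊤)
    (hfin1 : eLL 2 8 R u < ⊤) (hfin2 : eLL 3 6 R u < ⊤)
    (hfin3 : eLL 3 6 R (dtu u) < ⊤)
    (hfin4 : supH R u < ⊤)
    (hvan : ExtEnergyVanishes R u) :
    ∃ R' : ℝ, R ≤ R' ∧
      (∫⁻ r in Ioi R',
          ENNReal.ofReal ((deriv (fun s => s * u₁ s) r) ^ 2 * r ^ 3)) < ⊤ ∧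
      ∃ c > (0:ℝ), ∃ C > (0:ℝ), ∀ ρ : ℝ, R' ≤ ρ →
        ENNReal.ofReal (c * ρ * |u₁ ρ|)
            ≤ (∫⁻ r in Ioi ρ, ENNReal.ofReal ((deriv u₁ r) ^ 2 * r ^ 3)) ^ (1 / 2 : ℝ) ∧
        (∫⁻ r in Ioi ρ, ENNReal.ofReal ((deriv u₁ r) ^ 2 * r ^ 3)) ^ (1 / 2 : ℝ)
            ≤ ENNReal.ofReal (C * ρ * |u₁ ρ|) := by
  obtain ⟨vt, vr, qr, hS⟩ := sol_of_ext p hodd R u hsol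
  obtain ⟨M, hM, hap⟩ := apriori p R hR u vt vr qr hS hfin4 hvan
  have hV : ContDiffOn ℝ ((3:ℕ):WithTop ℕ∞) (dtu u 0) (Ioi R) :=
    (data_smooth p R u hsol).of_le (WithTop.coe_le_coe.2 (le_top : ((3:ℕ):ℕ∞) ≤ ⊤))
  obtain ⟨ρ0, hρ0, hz⟩ := data_zero hp5 hS hR hV hM hap hdata0
  have hz1 : ∀ r, ρ0 < r → u₁ r = 0 := fun r hr => by
    rw [← hdata1 r (by linarith)]; exact hz r hr
  have hd1 : ∀ r, ρ0 < r → deriv u₁ r = 0 := by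
    intro r hr
    have : u₁ =ᶠ[nhds r] fun _ => 0 := by
      filter_upwards [Ioi_mem_nhds hr] with y hy
      exact hz1 y hy
    rw [this.deriv_eq]; simp
  have hd2 : ∀ r, ρ0 < r → deriv (fun s => s * u₁ s) r = 0 := by
    intro r hr
    have : (fun s => s * u₁ s) =ᶠ[nhds r] fun _ => 0 := by
      filter_upwards [Ioi_mem_nhds hr] with y hy
      rw [hz1 y hy, mul_zero]
    rw [this.deriv_eq]; simp
  have hzero : ∀ f : ℝ → ℝ, (∀ r, ρ0 < r → f r = 0) → ∀ ρ, ρ0 ≤ ρ →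
      (∫⁻ r in Ioi ρ, ENNReal.ofReal ((f r) ^ 2 * r ^ 3)) = 0 := by
    intro f hf ρ hρ
    rw [setLIntegral_congr_fun (g := fun _ => 0) measurableSet_Ioi]
    · simp
    · intro r hr
      have hr' : ρ0 < r := lt_of_le_of_lt hρ hr
      simp only
      rw [hf r hr']; simp
  refine ⟨ρ0 + 1, by linarith, ?_, 1, one_pos, 1, one_pos, fun ρ hρ => ?_⟩
  · rw [hzero _ hd2 _ (by linarith)]; simp
  · rw [hzero _ hd1 _ (by linarith), hz1 ρ (by linarith)]
    simp
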